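/- There exist constants τ > 0 and M > 0 such that for every real x > 1, the sum over all sixth-power free integers n with |n| ≤ x of max{βx(Aₙ), βy(Aₙ)}^τ is strictly less than M times the number of sixth-power free integers n with |n| ≤ x (the sum being computed in [0,∞], with the convention ∞^τ = ∞). -/

import Mathlib

open scoped ENNReal

/-- `u 0, …, u (N-1)` is a non-trivial arithmetic progression. -/
def IsNontrivAP {F : Type*} [Field F] {N : ℕ} (u : Fin N → F) : Prop :=
  ∃ a b : F, b ≠ 0 ∧ ∀ i : Fin N, u i = a + (((i : ℕ) + 1 : ℕ) : F) * b

/-- A nonzero integer is sixth-power free if no `p⁶` divides it. -/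
def SixthPowerFree (n : ℤ) : Prop :=
  n ≠ 0 ∧ ∀ p : ℕ, p.Prime → ¬ ((p : ℤ) ^ 6 ∣ n)

/-- The Mordell curve `Aₙ : y² = x³ + n` over `ℚ`. -/
def MordellCurve (n : ℤ) : WeierstrassCurve ℚ :=
  ⟨0, 0, 0, 0, (n : ℚ)⟩

/-- `βx(W) ∈ ℕ ∪ {∞}`: the supremum of lengths of sequences of affine rational points of `W`
whose `x`-coordinates form a non-trivial arithmetic progression. -/
noncomputable def betaX (W : WeierstrassCurve ℚ) : ℕ∞ :=
  ⨆ N ∈ {N : ℕ | ∃ x y : Fin N → ℚ,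
    (∀ i, W.toAffine.Nonsingular (x i) (y i)) ∧ IsNontrivAP x}, (N : ℕ∞)

/-- `βy(W) ∈ ℕ ∪ {∞}`: the supremum of lengths of sequences of affine rational points of `W`
whose `y`-coordinates form a non-trivial arithmetic progression. -/
noncomputable def betaY (W : WeierstrassCurve ℚ) : ℕ∞ :=
  ⨆ N ∈ {N : ℕ | ∃ x y : Fin N → ℚ,
    (∀ i, W.toAffine.Nonsingular (x i) (y i)) ∧ IsNontrivAP y}, (N : ℕ∞)

/-!
The points of `Aₙ` whose coordinates form an arithmetic progression of length `N` contain a cluster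
of length proportional to `N` whose members have comparable denominators and archimedean sizes.
Comparing the height of `P + Q` with the parallelogram law shows that the members of a cluster are
far apart for the canonical height, so that a packing argument bounds their number by a power of
the index of `3Aₙ(ℚ)` in `Aₙ(ℚ)`; the constants do not depend on `n` because the height of
`x³ / n` is invariant under twists.

Multiplication by `3` factors through the rational 3-isogenies between `Aₙ` and `A₋₂₇ₙ`. A point
`(x, y)` of `Aₙ` determines the binary cubic form `X³ - 3xXY² + 2yY³`, which is equivalent to an
integral form of discriminant `4n`, and two points with the same reduced form lie in the same coset
of the image of the 3-isogeny. Following Davenport, there are `O(N)` reduced forms of discriminant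
at most `4N`, so that the index is bounded on average.
-/

namespace Mohanty

/-! ### The group law on `y² = x³ + c` -/

section GroupLaw

open WeierstrassCurve WeierstrassCurve.Affine

variable {F : Type*} [Field F]

/-- The Mordell curve `y² = x³ + c` over an arbitrary field, so that `MordellCurve n` is
`mordell (n : ℚ)`. -/
abbrev mordell (c : F) : WeierstrassCurve.Affine F :=
  (⟨0, 0, 0, 0, c⟩ : WeierstrassCurve F)

variable {c : F}

lemma eq_or_eq_neg_of_X_eq {x y₁ y₂ : F} (h₁ : y₁ ^ 2 = x ^ 3 + c) (h₂ : y₂ ^ 2 = x ^ 3 + c) :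
    y₁ = y₂ ∨ y₁ = -y₂ :=
  sq_eq_sq_iff_eq_or_eq_neg.1 (h₁.trans h₂.symm)

lemma chord_third_point {x₁ y₁ x₂ y₂ l : F} (h₁ : y₁ ^ 2 = x₁ ^ 3 + c)
    (h₂ : y₂ ^ 2 = x₂ ^ 3 + c) (hne : x₁ ≠ x₂) (hl : l * (x₁ - x₂) = y₁ - y₂) :
    (-(l * ((l ^ 2 - x₁ - x₂) - x₁) + y₁)) ^ 2 = (l ^ 2 - x₁ - x₂) ^ 3 + c := by
  obtain rfl : y₁ = y₂ + l * (x₁ - x₂) := by rw [hl]; ring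
  have hslope : l * (2 * y₂ + l * (x₁ - x₂)) = x₁ ^ 2 + x₁ * x₂ + x₂ ^ 2 := by
    apply mul_left_cancel₀ (sub_ne_zero.2 hne)
    linear_combination h₁ - h₂
  linear_combination h₂ + (l ^ 2 - x₁ - 2 * x₂) * hslope

variable [CharZero F]

lemma nonsingular_mordell_iff (hc : c ≠ 0) (x y : F) :
    (mordell c).Nonsingular x y ↔ y ^ 2 = x ^ 3 + c := by
  simp only [nonsingular_iff', equation_iff, zero_mul, add_zero, mul_zero, zero_sub,
    and_iff_left_iff_imp]
  rintro h
  by_contra! hsing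
  obtain rfl : x = 0 := by simpa using hsing.1
  obtain rfl : y = 0 := by simpa using hsing.2
  exact hc (by simpa using h.symm)

/-- The affine point `(x, y)` of `mordell c`; for `c ≠ 0` the equation alone makes it
nonsingular. -/
def point (hc : c ≠ 0) (x y : F) (h : y ^ 2 = x ^ 3 + c) : (mordell c).Point :=
  .some x y ((nonsingular_mordell_iff hc x y).2 h)

lemma eq_zero_or_eq_point (hc : c ≠ 0) (P : (mordell c).Point) :
    P = 0 ∨ ∃ x y h, P = point hc x y h := by
  rcases P with _ | ⟨x, y, h⟩
  · exact Or.inl rfl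
  · exact Or.inr ⟨x, y, (nonsingular_mordell_iff hc x y).1 h, rfl⟩

lemma point_ne_zero (hc : c ≠ 0) {x y : F} (h) : point hc x y h ≠ 0 :=
  Point.some_ne_zero _

lemma point_inj (hc : c ≠ 0) {x y x' y' : F} {h h'} :
    point hc x y h = point hc x' y' h' ↔ x = x' ∧ y = y' := by
  simp [point]

lemma point_congr (hc : c ≠ 0) {x y x' y' : F} {h h'} (hx : x = x') (hy : y = y') :
    point hc x y h = point hc x' y' h' :=
  (point_inj hc).2 ⟨hx, hy⟩

lemma neg_point (hc : c ≠ 0) {x y : F} (h) :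
    -point hc x y h = point hc x (-y) (by rwa [neg_sq]) := by
  simp [point, negY]

variable [DecidableEq F]

lemma point_add_point_of_Y_eq_neg (hc : c ≠ 0) {x y y' : F} {h h'} (hy : y' = -y) :
    point hc x y h + point hc x y' h' = 0 := by
  subst hy
  exact Point.add_of_Y_eq rfl (by simp [negY])

lemma point_add_point_of_slope_eq (hc : c ≠ 0) {x₁ y₁ x₂ y₂ x₃ y₃ l : F} {h₁ h₂ h₃}
    (hne : ¬(x₁ = x₂ ∧ y₁ = (mordell c).negY x₂ y₂)) (hl : (mordell c).slope x₁ x₂ y₁ y₂ = l)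
    (hx : x₃ = l ^ 2 - x₁ - x₂) (hy : y₃ = -(l * (x₃ - x₁) + y₁)) :
    point hc x₁ y₁ h₁ + point hc x₂ y₂ h₂ = point hc x₃ y₃ h₃ := by
  simp only [point, Point.add_some hne, Point.some.injEq, hl, addX, addY, negAddY, negY]
  subst hx hy
  constructor <;> ring

lemma point_add_point_of_chord (hc : c ≠ 0) {x₁ y₁ x₂ y₂ x₃ y₃ l : F} {h₁ h₂ h₃}
    (hne : x₁ ≠ x₂) (hl : l * (x₁ - x₂) = y₁ - y₂) (hx : x₃ = l ^ 2 - x₁ - x₂)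
    (hy : y₃ = -(l * (x₃ - x₁) + y₁)) :
    point hc x₁ y₁ h₁ + point hc x₂ y₂ h₂ = point hc x₃ y₃ h₃ := by
  refine point_add_point_of_slope_eq hc (fun h ↦ hne h.1) ?_ hx hy
  rw [slope_of_X_ne hne, ← hl, mul_div_cancel_right₀ _ (sub_ne_zero.2 hne)]

lemma point_add_self_of_tangent (hc : c ≠ 0) {x y x₃ y₃ l : F} {h h' h₃}
    (hne : y ≠ 0) (hl : l * (2 * y) = 3 * x ^ 2) (hx : x₃ = l ^ 2 - 2 * x)
    (hy : y₃ = -(l * (x₃ - x) + y)) :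
    point hc x y h + point hc x y h' = point hc x₃ y₃ h₃ := by
  have hYne : y ≠ (mordell c).negY x y := by simpa [negY, eq_neg_iff_add_eq_zero] using hne
  refine point_add_point_of_slope_eq hc (fun h ↦ hYne h.2) ?_ (by linear_combination hx) hy
  rw [slope_of_Y_ne rfl hYne, div_eq_iff (sub_ne_zero.2 hYne)]
  simp only [negY]
  linear_combination -hl

section Scaling

variable {K : Type*} [Field K] [CharZero K] [DecidableEq K] (f : F →+* K) {p q : K} {c' : K}

lemma slope_scale (hpq : q ^ 2 = p ^ 3) (hp : p ≠ 0) (x₁ x₂ y₁ y₂ : F) :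
    (mordell c').slope (p * f x₁) (p * f x₂) (q * f y₁) (q * f y₂) =
      q / p * f ((mordell c).slope x₁ x₂ y₁ y₂) := by
  have hq : q ≠ 0 := by rintro rfl; exact hp (by simpa using hpq.symm)
  by_cases hx : x₁ = x₂
  · subst hx
    by_cases hy : y₁ = -y₂
    · simp [Affine.slope, hy]
    · have hy' : q * f y₁ ≠ -(q * f y₂) := by
        rw [← mul_neg, ← map_neg]
        exact fun h ↦ hy (f.injective (mul_left_cancel₀ hq h))
      have hqp : q / p = p ^ 2 / q := by
        rw [div_eq_div_iff hp hq]; linear_combination hpq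
      simp only [Affine.slope, negY, zero_mul, sub_zero, add_zero, mul_zero, if_true, if_neg hy,
        if_neg hy', sub_neg_eq_add, map_div₀, map_mul, map_pow, map_add, map_ofNat]
      rw [hqp]
      ring
  · have hx' : p * f x₁ ≠ p * f x₂ := fun h ↦ hx (f.injective (mul_left_cancel₀ hp h))
    rw [slope_of_X_ne hx, slope_of_X_ne hx', map_div₀, map_sub, map_sub, ← mul_sub, ← mul_sub,
      mul_div_mul_comm]

/-- The homomorphism `(x, y) ↦ (p x, q y)` from `mordell c` to `mordell (q² c)`, where `q² = p³`,
along a field embedding. It covers base change (`p = q = 1`), the automorphism of order three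
and twists. -/
noncomputable def scaleHom (hpq : q ^ 2 = p ^ 3) (hp : p ≠ 0) (hc : c ≠ 0)
    (hcc' : c' = q ^ 2 * f c) (hc' : c' ≠ 0) :
    (mordell c).Point →+ (mordell c').Point where
  toFun
    | .zero => 0
    | .some x y h => point hc' (p * f x) (q * f y) (by
        have h' := congrArg f ((nonsingular_mordell_iff hc x y).1 h)
        simp only [map_pow, map_add] at h'
        rw [hcc']; linear_combination q ^ 2 * h' + f x ^ 3 * hpq)
  map_zero' := rfl
  map_add' P Q := by
    have hq : q ≠ 0 := by rintro rfl; exact hc' (by simpa using hcc')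
    rcases eq_zero_or_eq_point hc P with rfl | ⟨x₁, y₁, h₁, rfl⟩
    · simp only [zero_add]
    rcases eq_zero_or_eq_point hc Q with rfl | ⟨x₂, y₂, h₂, rfl⟩
    · simp only [add_zero]
    by_cases hopp : x₁ = x₂ ∧ y₁ = (mordell c).negY x₂ y₂
    · rw [point, point, Point.add_of_Y_eq hopp.1 hopp.2]
      obtain ⟨rfl, rfl⟩ := hopp
      exact (point_add_point_of_Y_eq_neg hc' (by simp [negY])).symm
    · rw [point, point, Point.add_some hopp]
      refine (point_add_point_of_slope_eq hc' ?_ (slope_scale (c := c) f hpq hp _ _ _ _)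
        ?_ ?_).symm
      · rintro ⟨hx, hy⟩
        refine hopp ⟨f.injective (mul_left_cancel₀ hp hx),
          f.injective (mul_left_cancel₀ hq (hy.trans ?_))⟩
        simp [negY]
      · simp only [addX, zero_mul, add_zero, sub_zero, map_sub, map_pow]
        rw [mul_pow, div_pow, hpq]
        field_simp
      · simp only [addY, negAddY, addX, negY, zero_mul, add_zero, sub_zero, map_sub, map_pow,
          map_neg, map_mul, map_add]
        field_simp

lemma scaleHom_point (hpq : q ^ 2 = p ^ 3) (hp : p ≠ 0) (hc : c ≠ 0)
    (hcc' : c' = q ^ 2 * f c) (hc' : c' ≠ 0) {x y : F} {x' y' : K} (h h')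
    (hx : x' = p * f x) (hy : y' = q * f y) :
    scaleHom f hpq hp hc hcc' hc' (point hc x y h) = point hc' x' y' h' :=
  point_congr hc' (h := by subst hx hy; exact h') hx.symm hy.symm

end Scaling

end GroupLaw

/-! ### Multiplication by `√-3` and the rational 3-isogeny -/

section ComplexMultiplication

variable {K : Type*} [Field K] {ω c : K}

lemma cube_eq_one_of_sq_add_self_add_one (hω : ω ^ 2 + ω + 1 = 0) : ω ^ 3 = 1 := by
  linear_combination (ω - 1) * hω

lemma equation_rotate (hω : ω ^ 2 + ω + 1 = 0) {x y : K} (h : y ^ 2 = x ^ 3 + c) :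
    y ^ 2 = (ω * x) ^ 3 + c := by
  rw [mul_pow, cube_eq_one_of_sq_add_self_add_one hω, one_mul, h]

lemma ne_zero_of_sq_add_self_add_one (hω : ω ^ 2 + ω + 1 = 0) : ω ≠ 0 := by
  rintro rfl; simp at hω

variable [CharZero K]

lemma ne_one_of_sq_add_self_add_one (hω : ω ^ 2 + ω + 1 = 0) : ω ≠ 1 := by
  rintro rfl; norm_num at hω

variable [DecidableEq K]

/-- The automorphism `(x, y) ↦ (ω x, y)` of `mordell c`, for a primitive cube root of unity `ω`. -/
noncomputable def rotate (hω : ω ^ 2 + ω + 1 = 0) (hc : c ≠ 0) :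
    (mordell c).Point →+ (mordell c).Point :=
  scaleHom (RingHom.id K) (p := ω) (q := 1)
    (by rw [cube_eq_one_of_sq_add_self_add_one hω, one_pow])
    (ne_zero_of_sq_add_self_add_one hω) hc (by simp) hc

/-- The endomorphism `ω - ω²` of `mordell c`, whose square is `-3`. -/
noncomputable def sqrtNegThree (hω : ω ^ 2 + ω + 1 = 0) (hc : c ≠ 0) :
    (mordell c).Point →+ (mordell c).Point :=
  rotate hω hc - (rotate hω hc).comp (rotate hω hc)

variable (hω : ω ^ 2 + ω + 1 = 0) (hc : c ≠ 0)

lemma rotate_point {x y : K} (h) :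
    rotate hω hc (point hc x y h) = point hc (ω * x) y (equation_rotate hω h) :=
  scaleHom_point _ _ _ hc _ hc _ _ rfl (one_mul y).symm

-- The three points lie on a horizontal line.
lemma add_rotate_add_rotate_rotate (P : (mordell c).Point) :
    P + rotate hω hc P + rotate hω hc (rotate hω hc P) = 0 := by
  rcases eq_zero_or_eq_point hc P with rfl | ⟨x, y, h, rfl⟩
  · simp
  have h₁ := equation_rotate hω h
  have h₂ := equation_rotate hω h₁
  have hsum : point hc x y h + point hc (ω * x) y h₁ =
      point hc (ω * (ω * x)) (-y) (by rwa [neg_sq]) := by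
    by_cases hx : x = 0
    · subst hx
      have hy : y ≠ 0 := by rintro rfl; exact hc (by simpa using h.symm)
      rw [point_congr hc (h' := h) (mul_zero ω) rfl]
      apply point_add_self_of_tangent hc hy (l := 0) <;> simp
    · refine point_add_point_of_chord hc (l := 0) ?_ (by simp) ?_ (by simp)
      · exact fun hxx ↦ ne_one_of_sq_add_self_add_one hω
          (mul_right_cancel₀ hx (by rw [← hxx, one_mul]))
      · linear_combination x * hω
  rw [rotate_point hω hc h, rotate_point hω hc h₁, hsum]
  exact point_add_point_of_Y_eq_neg hc (neg_neg y).symm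

lemma sqrtNegThree_sqrtNegThree (P : (mordell c).Point) :
    sqrtNegThree hω hc (sqrtNegThree hω hc P) = -((3 : ℕ) • P) := by
  have hsq (Q : (mordell c).Point) : rotate hω hc (rotate hω hc Q) = -(Q + rotate hω hc Q) :=
    (neg_eq_of_add_eq_zero_right (add_rotate_add_rotate_rotate hω hc Q)).symm
  simp only [sqrtNegThree, AddMonoidHom.sub_apply, AddMonoidHom.comp_apply, map_sub, map_neg,
    map_add, hsq]
  abel

lemma sqrtNegThree_point_of_X_eq_zero {x y : K} {h} (hx : x = 0) :
    sqrtNegThree hω hc (point hc x y h) = 0 := by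
  have hfix : rotate hω hc (point hc x y h) = point hc x y h := by
    rw [rotate_point]; exact point_congr hc (by rw [hx, mul_zero]) rfl
  simp only [sqrtNegThree, AddMonoidHom.sub_apply, AddMonoidHom.comp_apply, hfix, sub_self]

lemma sqrtNegThree_point {x y x₃ y₃ l : K} {h h₃} (hx : x ≠ 0)
    (hl : l * ((2 * ω + 1) * x) = 2 * y) (hx₃ : x₃ = l ^ 2 + x)
    (hy₃ : y₃ = -(l * (x₃ - ω * x) + y)) :
    sqrtNegThree hω hc (point hc x y h) = point hc x₃ y₃ h₃ := by
  rw [sqrtNegThree, AddMonoidHom.sub_apply, AddMonoidHom.comp_apply, rotate_point, rotate_point,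
    sub_eq_add_neg, neg_point]
  refine point_add_point_of_chord hc (l := l) (fun hxx ↦ ?_) ?_ ?_ hy₃
  · have hωx : ω * x ≠ 0 := mul_ne_zero (ne_zero_of_sq_add_self_add_one hω) hx
    exact ne_one_of_sq_add_self_add_one hω
      (mul_right_cancel₀ hωx (by rw [← hxx, one_mul]))
  · linear_combination hl - l * x * hω
  · rw [hx₃]; linear_combination x * hω

end ComplexMultiplication

section Twist

variable {K : Type*} [Field K] [CharZero K] {ω c c' : K}

lemma equation_twist (hω : ω ^ 2 + ω + 1 = 0) (hcc' : c' = -27 * c) {x y : K}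
    (h : y ^ 2 = x ^ 3 + c') : ((2 * ω + 1) * y / 9) ^ 2 = (-x / 3) ^ 3 + c := by
  subst hcc'
  linear_combination (-1 / 27) * h + (4 * y ^ 2 / 81) * hω

variable [DecidableEq K]

/-- The isomorphism `(x, y) ↦ (-x / 3, √-3 y / 9)` from `mordell (-27 c)` to `mordell c` over a
field containing `√-3 = 2ω + 1`. -/
noncomputable def twist (hω : ω ^ 2 + ω + 1 = 0) (hcc' : c' = -27 * c) (hc : c ≠ 0)
    (hc' : c' ≠ 0) : (mordell c').Point →+ (mordell c).Point :=
  scaleHom (RingHom.id K) (p := -1 / 3) (q := (2 * ω + 1) / 9)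
    (by linear_combination (4 / 81) * hω) (by norm_num) hc'
    (by rw [hcc', RingHom.id_apply]; linear_combination (4 * c / 3) * hω) hc

variable (hω : ω ^ 2 + ω + 1 = 0) (hcc' : c' = -27 * c) (hc : c ≠ 0) (hc' : c' ≠ 0)

lemma twist_point {x y : K} (h) :
    twist hω hcc' hc hc' (point hc' x y h) =
      point hc (-x / 3) ((2 * ω + 1) * y / 9) (equation_twist hω hcc' h) :=
  scaleHom_point _ _ _ hc' _ hc _ _ (by rw [RingHom.id_apply]; ring)
    (by rw [RingHom.id_apply]; ring)

lemma twist_rotate (P) :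
    twist hω hcc' hc hc' (rotate hω hc' P) = rotate hω hc (twist hω hcc' hc hc' P) := by
  rcases eq_zero_or_eq_point hc' P with rfl | ⟨x, y, h, rfl⟩
  · simp only [map_zero]
  · rw [rotate_point, twist_point, twist_point, rotate_point]
    exact point_congr hc (by ring) rfl

lemma twist_sqrtNegThree (P) :
    twist hω hcc' hc hc' (sqrtNegThree hω hc' P) = sqrtNegThree hω hc (twist hω hcc' hc hc' P) := by
  simp only [sqrtNegThree, AddMonoidHom.sub_apply, AddMonoidHom.comp_apply, map_sub, twist_rotate]

end Twist

section ThreeIsogeny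

/-- A primitive cube root of unity. -/
noncomputable def cubeRootOne : ℂ := (-1 + √3 * Complex.I) / 2

lemma cubeRootOne_sq_add_self_add_one : cubeRootOne ^ 2 + cubeRootOne + 1 = 0 := by
  have h3 : (√3 : ℂ) ^ 2 = 3 := by exact_mod_cast Real.sq_sqrt (by norm_num : (0 : ℝ) ≤ 3)
  rw [cubeRootOne]
  linear_combination (√3 : ℂ) ^ 2 / 4 * Complex.I_sq - h3 / 4

variable {c : ℚ}

lemma neg_twentySeven_mul_ne_zero (hc : c ≠ 0) : -27 * c ≠ 0 :=
  mul_ne_zero (by norm_num) hc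

/-- The inclusion of the rational points of `mordell c` into its complex points. -/
noncomputable def toComplex (hc : c ≠ 0) :
    (mordell c).Point →+ (mordell (c : ℂ)).Point :=
  scaleHom (algebraMap ℚ ℂ) (p := 1) (q := 1) (by norm_num) one_ne_zero hc (by simp)
    (Rat.cast_ne_zero.2 hc)

lemma toComplex_point (hc : c ≠ 0) {x y : ℚ} (h) :
    toComplex hc (point hc x y h) =
      point (Rat.cast_ne_zero.2 hc) (x : ℂ) (y : ℂ) (by exact_mod_cast h) :=
  scaleHom_point _ _ _ hc _ _ _ _ (one_mul _).symm (one_mul _).symm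

lemma toComplex_injective (hc : c ≠ 0) : Function.Injective (toComplex hc) := by
  rw [injective_iff_map_eq_zero]
  intro P hP
  rcases eq_zero_or_eq_point hc P with rfl | ⟨x, y, h, rfl⟩
  · rfl
  · rw [toComplex_point] at hP
    exact absurd hP (point_ne_zero _ _)

/-- The composite of `√-3` with the twist `mordell (-27 c) → mordell c`. It is defined over `ℚ`
although both factors are only defined over `ℚ(√-3)`; see `threeIsogeny`. -/
noncomputable def complexThreeIsogeny (hc : c ≠ 0) :
    (mordell ((-27 * c : ℚ) : ℂ)).Point →+ (mordell (c : ℂ)).Point :=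
  (sqrtNegThree cubeRootOne_sq_add_self_add_one (Rat.cast_ne_zero.2 hc)).comp
    (twist cubeRootOne_sq_add_self_add_one (by push_cast; rfl) (Rat.cast_ne_zero.2 hc)
      (Rat.cast_ne_zero.2 (neg_twentySeven_mul_ne_zero hc)))

lemma equation_threeIsogeny {x y : ℚ} (hx : x ≠ 0) (h : y ^ 2 = x ^ 3 + -27 * c) :
    (2 * y / (3 * x) * (4 * y ^ 2 / (9 * x ^ 2) - x / 3) - y / 9) ^ 2 =
      (4 * y ^ 2 / (9 * x ^ 2) - x / 3) ^ 3 + c := by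
  obtain rfl : c = (x ^ 3 - y ^ 2) / 27 := by linear_combination (1 / 27) * h
  field_simp
  ring

lemma complexThreeIsogeny_toComplex_point (hc : c ≠ 0) {x y : ℚ} (hx : x ≠ 0)
    (h : y ^ 2 = x ^ 3 + -27 * c) :
    complexThreeIsogeny hc (toComplex (neg_twentySeven_mul_ne_zero hc)
        (point (neg_twentySeven_mul_ne_zero hc) x y h)) =
      toComplex hc (point hc _ _ (equation_threeIsogeny hx h)) := by
  have hx' : (x : ℂ) ≠ 0 := by exact_mod_cast hx
  rw [complexThreeIsogeny, AddMonoidHom.comp_apply, toComplex_point, toComplex_point, twist_point]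
  refine sqrtNegThree_point _ _ (l := -2 * (y : ℂ) / (3 * x)) ?_ ?_ ?_ ?_
  · exact div_ne_zero (neg_ne_zero.2 hx') (by norm_num)
  · field_simp; ring
  · push_cast; field_simp; ring
  · push_cast; field_simp; ring

lemma exists_toComplex_eq_complexThreeIsogeny (hc : c ≠ 0) (T : (mordell (-27 * c)).Point) :
    ∃ P, toComplex hc P =
      complexThreeIsogeny hc (toComplex (neg_twentySeven_mul_ne_zero hc) T) := by
  rcases eq_zero_or_eq_point (neg_twentySeven_mul_ne_zero hc) T with rfl | ⟨x, y, h, rfl⟩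
  · exact ⟨0, by simp only [map_zero]⟩
  by_cases hx : x = 0
  · refine ⟨0, ?_⟩
    rw [map_zero, complexThreeIsogeny, AddMonoidHom.comp_apply, toComplex_point, twist_point,
      sqrtNegThree_point_of_X_eq_zero]
    simp [hx]
  · exact ⟨_, (complexThreeIsogeny_toComplex_point hc hx h).symm⟩

/-- The rational 3-isogeny `mordell (-27 c) → mordell c`, with kernel the points with `x = 0`. -/
noncomputable def threeIsogeny (hc : c ≠ 0) : (mordell (-27 * c)).Point →+ (mordell c).Point :=
  AddMonoidHom.mk' (fun T ↦ (exists_toComplex_eq_complexThreeIsogeny hc T).choose) fun S T ↦ by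
    apply toComplex_injective hc
    rw [(exists_toComplex_eq_complexThreeIsogeny hc (S + T)).choose_spec, map_add, map_add, map_add,
      (exists_toComplex_eq_complexThreeIsogeny hc S).choose_spec,
      (exists_toComplex_eq_complexThreeIsogeny hc T).choose_spec]

lemma toComplex_threeIsogeny (hc : c ≠ 0) (T) :
    toComplex hc (threeIsogeny hc T) =
      complexThreeIsogeny hc (toComplex (neg_twentySeven_mul_ne_zero hc) T) :=
  (exists_toComplex_eq_complexThreeIsogeny hc T).choose_spec

lemma threeIsogeny_point (hc : c ≠ 0) {x y : ℚ} (hx : x ≠ 0) (h : y ^ 2 = x ^ 3 + -27 * c) :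
    threeIsogeny hc (point (neg_twentySeven_mul_ne_zero hc) x y h) =
      point hc _ _ (equation_threeIsogeny hx h) := by
  apply toComplex_injective hc
  rw [toComplex_threeIsogeny, complexThreeIsogeny_toComplex_point hc hx]

/-- The isomorphism `(x, y) ↦ (9 x, 27 y)` from `mordell c` to `mordell (729 c)`. -/
noncomputable def scaleNine (hc : c ≠ 0) :
    (mordell c).Point →+ (mordell (-27 * (-27 * c))).Point :=
  scaleHom (RingHom.id ℚ) (p := 9) (q := 27) (by norm_num) (by norm_num) hc
    (by rw [RingHom.id_apply]; ring)
    (neg_twentySeven_mul_ne_zero (neg_twentySeven_mul_ne_zero hc))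

lemma threeIsogeny_threeIsogeny_scaleNine (hc : c ≠ 0) (P : (mordell c).Point) :
    threeIsogeny hc (threeIsogeny (neg_twentySeven_mul_ne_zero hc) (scaleNine hc P)) =
      (3 : ℕ) • P := by
  apply toComplex_injective hc
  rw [toComplex_threeIsogeny, toComplex_threeIsogeny, complexThreeIsogeny, complexThreeIsogeny,
    AddMonoidHom.comp_apply, AddMonoidHom.comp_apply, twist_sqrtNegThree,
    sqrtNegThree_sqrtNegThree, map_nsmul, ← neg_nsmul]
  congr 1
  rcases eq_zero_or_eq_point hc P with rfl | ⟨x, y, h, rfl⟩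
  · simp only [map_zero, neg_zero]
  have hscale : scaleNine hc (point hc x y h) =
      point (neg_twentySeven_mul_ne_zero (neg_twentySeven_mul_ne_zero hc)) (9 * x) (27 * y)
        (by linear_combination 729 * h) := rfl
  rw [hscale, toComplex_point, toComplex_point, twist_point, twist_point, neg_point]
  apply point_congr
  · push_cast; ring
  · push_cast; linear_combination (-4 * (y : ℂ) / 3) * cubeRootOne_sq_add_self_add_one

-- The hypotheses say that `y + √c = (s + t √c)³`.
lemma point_mem_range_threeIsogeny (hc : c ≠ 0) {x y s t : ℚ} (h : y ^ 2 = x ^ 3 + c)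
    (hy : y = s ^ 3 + 3 * s * t ^ 2 * c) (h1 : 1 = 3 * s ^ 2 * t + t ^ 3 * c) :
    point hc x y h ∈ (threeIsogeny hc).range := by
  have ht : t ≠ 0 := by rintro rfl; norm_num at h1
  have hT : (9 * s / t) ^ 2 = (3 / t) ^ 3 + -27 * c := by
    field_simp; linear_combination -27 * h1
  have hX : 4 * (9 * s / t) ^ 2 / (9 * (3 / t) ^ 2) - (3 / t) / 3 = s ^ 2 - c * t ^ 2 := by
    field_simp; linear_combination -9 * h1
  have hx : s ^ 2 - c * t ^ 2 = x := by
    have hnorm : x ^ 3 = y ^ 2 - c * (3 * s ^ 2 * t + t ^ 3 * c) ^ 2 := by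
      rw [← h1]; linear_combination -h
    refine (Odd.strictMono_pow (by decide : Odd 3)).injective ?_
    rw [hnorm, hy]; ring
  refine ⟨-point (neg_twentySeven_mul_ne_zero hc) (3 / t) (9 * s / t) hT, ?_⟩
  rw [map_neg, threeIsogeny_point hc (div_ne_zero three_ne_zero ht), neg_point]
  apply point_congr
  · rw [hX, hx]
  · rw [hX, hy]; field_simp
    linear_combination 9 * s * h1

end ThreeIsogeny

/-! ### Canonical heights on abelian groups -/

section CanonicalHeight

open Filter Topology

variable {G : Type*} [AddCommGroup G]

/-- A canonical height on an abelian group: a nonnegative function satisfying the parallelogram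
law and the Northcott property. -/
structure IsCanonicalHeight (g : G → ℝ) : Prop where
  nonneg (P : G) : 0 ≤ g P
  parallelogram (P Q : G) : g (P + Q) + g (P - Q) = 2 * g P + 2 * g Q
  finite_le (t : ℝ) : {P | g P ≤ t}.Finite

/-- The subgroup `3G` of an abelian group `G`. -/
abbrev threeMultiples (G : Type*) [AddCommGroup G] : AddSubgroup G :=
  (nsmulAddMonoidHom 3 : G →+ G).range

/-- The sequence `h(2ᵏP) / 4ᵏ`, whose limit is Tate's canonical height. -/
noncomputable def tateSeq (h : G → ℝ) (P : G) (k : ℕ) : ℝ :=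
  h (2 ^ k • P) / 4 ^ k

lemma tateSeq_succ (h : G → ℝ) (P : G) (k : ℕ) :
    tateSeq h P (k + 1) = tateSeq h (P + P) k / 4 := by
  rw [tateSeq, tateSeq, pow_succ 2, mul_nsmul', two_nsmul, pow_succ, div_div]

variable {h : G → ℝ} {C : ℝ}

lemma dist_tateSeq_succ_le (hdup : ∀ P, |h (P + P) - 4 * h P| ≤ C) (P : G) (k : ℕ) :
    dist (tateSeq h P k) (tateSeq h P (k + 1)) ≤ C / 4 * (1 / 4) ^ k := by
  have hdiff : tateSeq h P (k + 1) - tateSeq h P k =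
      (h (2 ^ k • P + 2 ^ k • P) - 4 * h (2 ^ k • P)) / 4 ^ (k + 1) := by
    rw [tateSeq_succ, tateSeq, tateSeq, nsmul_add, pow_succ]
    field_simp
  rw [dist_comm, Real.dist_eq, hdiff, abs_div, abs_of_pos (by positivity : (0 : ℝ) < 4 ^ (k + 1)),
    div_le_iff₀ (by positivity)]
  refine (hdup _).trans_eq ?_
  rw [pow_succ, one_div, inv_pow]
  field_simp

theorem exists_isCanonicalHeight {C' : ℝ} (hnonneg : ∀ P, 0 ≤ h P)
    (hdup : ∀ P, |h (P + P) - 4 * h P| ≤ C)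
    (hpar : ∀ P Q, h (P + Q) + h (P - Q) ≤ 2 * h P + 2 * h Q + C')
    (hfin : ∀ t, {P | h P ≤ t}.Finite) :
    ∃ g : G → ℝ, IsCanonicalHeight g ∧ ∀ P, |g P - h P| ≤ C := by
  have hlim (P : G) : ∃ l, Tendsto (tateSeq h P) atTop (𝓝 l) := cauchySeq_tendsto_of_complete
    (cauchySeq_of_le_geometric (1 / 4) (C / 4) (by norm_num) (dist_tateSeq_succ_le hdup P))
  choose g hg using hlim
  have hgh (P : G) : |g P - h P| ≤ C := by
    have hdist := dist_le_of_le_geometric_of_tendsto₀ (1 / 4) (C / 4) (by norm_num)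
      (dist_tateSeq_succ_le hdup P) (hg P)
    have hC : 0 ≤ C := (abs_nonneg _).trans (hdup 0)
    rw [dist_comm, Real.dist_eq] at hdist
    simp only [tateSeq, pow_zero, one_nsmul, div_one] at hdist
    exact hdist.trans (by norm_num; linarith)
  have hdouble (P : G) : g (P + P) = 4 * g P := by
    refine tendsto_nhds_unique (hg (P + P))
      ((((hg P).comp (tendsto_add_atTop_nat 1)).const_mul 4).congr fun k ↦ ?_)
    rw [Function.comp_apply, tateSeq_succ]
    ring
  have hpar_le (P Q : G) : g (P + Q) + g (P - Q) ≤ 2 * g P + 2 * g Q := by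
    have hzero : Tendsto (fun k : ℕ ↦ C' * (1 / 4) ^ k) atTop (𝓝 0) := by
      simpa using (tendsto_pow_atTop_nhds_zero_of_lt_one (r := (1 / 4 : ℝ)) (by norm_num)
        (by norm_num)).const_mul C'
    have hright := (((hg P).const_mul 2).add ((hg Q).const_mul 2)).add hzero
    rw [add_zero] at hright
    refine le_of_tendsto_of_tendsto' ((hg (P + Q)).add (hg (P - Q))) hright fun k ↦ ?_
    simp only [tateSeq, nsmul_add, nsmul_sub]
    rw [← add_div, one_div, inv_pow, div_le_iff₀ (by positivity)]
    refine (hpar _ _).trans_eq ?_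
    field_simp
  refine ⟨g, ⟨fun P ↦ ?_, fun P Q ↦ (hpar_le P Q).antisymm ?_, fun t ↦ ?_⟩, hgh⟩
  · exact ge_of_tendsto' (hg P) fun k ↦ div_nonneg (hnonneg _) (by positivity)
  · have hsum := hpar_le (P + Q) (P - Q)
    rw [show P + Q + (P - Q) = P + P by abel, show P + Q - (P - Q) = Q + Q by abel, hdouble,
      hdouble] at hsum
    linarith
  · exact (hfin (t + C)).subset fun P (hP : g P ≤ t) ↦ show h P ≤ t + C by
      linarith [abs_le.1 (hgh P)]

namespace IsCanonicalHeight

variable {g : G → ℝ} (hg : IsCanonicalHeight g)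
include hg

lemma map_zero : g 0 = 0 := by
  have h0 := hg.parallelogram 0 0
  rw [add_zero, sub_zero] at h0
  linarith

lemma map_add_self (P : G) : g (P + P) = 4 * g P := by
  have hP := hg.parallelogram P P
  rw [sub_self, hg.map_zero] at hP
  linarith

lemma map_three_nsmul (P : G) : g (3 • P) = 9 * g P := by
  have hP := hg.parallelogram (P + P) P
  rw [hg.map_add_self, show P + P + P = 3 • P by abel, add_sub_cancel_right] at hP
  linarith

lemma map_sub_le (P Q : G) : g (P - Q) ≤ 2 * g P + 2 * g Q := by
  linarith [hg.parallelogram P Q, hg.nonneg (P + Q)]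

lemma map_add_le (P Q : G) : g (P + Q) ≤ 2 * g P + 2 * g Q := by
  linarith [hg.parallelogram P Q, hg.nonneg (P - Q)]

-- The translates by `T` of the ball of radius `M / 3` are disjoint and lie in that of radius `9M`.
lemma card_mul_ncard_ball_le {M : ℝ} {T : Finset G} (hT : ∀ P ∈ T, g P ≤ 4 * M)
    (hsep : ∀ P ∈ T, ∀ Q ∈ T, P ≠ Q → 2 * M ≤ g (P - Q)) (hM : 0 < M) :
    T.card * {P | g P ≤ M / 3}.ncard ≤ {P | g P ≤ 9 * M}.ncard := by
  classical
  rw [Set.ncard_eq_toFinset_card _ (hg.finite_le (M / 3)),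
    Set.ncard_eq_toFinset_card _ (hg.finite_le (9 * M)), ← Finset.card_product]
  refine Finset.card_le_card_of_injOn (fun p ↦ p.1 + p.2) ?_ ?_
  · rintro ⟨P, R⟩ hPR
    obtain ⟨hP, hR⟩ : P ∈ T ∧ g R ≤ M / 3 := by simpa using hPR
    rw [Set.Finite.coe_toFinset]
    change g (P + R) ≤ 9 * M
    linarith [hg.map_add_le P R, hT P hP]
  · rintro ⟨P, R⟩ hPR ⟨Q, R'⟩ hQR' hsum
    obtain ⟨hP, hR⟩ : P ∈ T ∧ g R ≤ M / 3 := by simpa using hPR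
    obtain ⟨hQ, hR'⟩ : Q ∈ T ∧ g R' ≤ M / 3 := by simpa using hQR'
    change P + R = Q + R' at hsum
    by_cases hPQ : P = Q
    · subst hPQ
      rw [add_left_cancel hsum]
    · have hfar := hsep P hP Q hQ hPQ
      rw [show P - Q = R' - R by rw [sub_eq_sub_iff_add_eq_add, hsum, add_comm]] at hfar
      linarith [hg.map_sub_le R' R]

variable [(threeMultiples G).FiniteIndex]

-- Points of a coset of `3G` in the ball differ from a fixed one by `3R` with `9 g(R) ≤ 4t`.
lemma ncard_ball_le (t : ℝ) :
    {P | g P ≤ t}.ncard ≤ (threeMultiples G).index * {P | g P ≤ 4 * t / 9}.ncard := by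
  classical
  have := Fintype.ofFinite (G ⧸ threeMultiples G)
  rw [Set.ncard_eq_toFinset_card _ (hg.finite_le t),
    Set.ncard_eq_toFinset_card _ (hg.finite_le (4 * t / 9)), mul_comm, AddSubgroup.index,
    Nat.card_eq_fintype_card, ← Finset.card_univ]
  refine Finset.card_le_mul_card_image_of_maps_to
    (f := ((↑) : G → G ⧸ threeMultiples G)) (fun _ _ ↦ Finset.mem_univ _) _ fun b _ ↦ ?_
  rcases ((hg.finite_le t).toFinset.filter fun P : G ↦ (P : G ⧸ _) = b).eq_empty_or_nonempty with
    hempty | ⟨P₀, hP₀⟩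
  · simp [hempty]
  rw [Finset.mem_filter, Set.Finite.mem_toFinset] at hP₀
  have hdiff : ∀ P ∈ (hg.finite_le t).toFinset.filter fun P : G ↦ (P : G ⧸ _) = b,
      ∃ R : G, 3 • R = P - P₀ := fun P hP ↦ by
    have hcoset := QuotientAddGroup.eq.1 (hP₀.2.trans (Finset.mem_filter.1 hP).2.symm)
    rwa [neg_add_eq_sub] at hcoset
  choose! r hr using hdiff
  refine Finset.card_le_card_of_injOn r (fun P hP ↦ ?_) fun P hP Q hQ hPQ ↦ ?_
  · have hP' := (Finset.mem_filter.1 hP).1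
    rw [Set.Finite.mem_toFinset] at hP'
    rw [Set.Finite.coe_toFinset]
    have hthree := hg.map_three_nsmul (r P)
    rw [hr P hP] at hthree
    change g P ≤ t at hP'
    change g (r P) ≤ 4 * t / 9
    linarith [hg.map_sub_le P P₀, show g P₀ ≤ t from hP₀.1]
  · exact sub_left_injective ((hr P hP).symm.trans ((congrArg (3 • ·) hPQ).trans (hr Q hQ)))

lemma ncard_ball_le_pow (t : ℝ) (j : ℕ) :
    {P | g P ≤ t}.ncard ≤ (threeMultiples G).index ^ j * {P | g P ≤ (4 / 9) ^ j * t}.ncard := by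
  induction j with
  | zero => simp
  | succ j ih =>
    have hstep := hg.ncard_ball_le ((4 / 9) ^ j * t)
    rw [show 4 * ((4 / 9) ^ j * t) / 9 = (4 / 9) ^ (j + 1) * t by ring] at hstep
    rw [pow_succ, mul_assoc]
    exact ih.trans (Nat.mul_le_mul_left _ hstep)

theorem card_le_index_pow {M : ℝ} {T : Finset G} (hT : ∀ P ∈ T, g P ≤ 4 * M)
    (hsep : ∀ P ∈ T, ∀ Q ∈ T, P ≠ Q → 2 * M ≤ g (P - Q)) (hM : 0 < M) :
    T.card ≤ (threeMultiples G).index ^ 5 := by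
  have hball : {P | g P ≤ 9 * M}.ncard ≤
      (threeMultiples G).index ^ 5 * {P | g P ≤ M / 3}.ncard := by
    refine (hg.ncard_ball_le_pow _ 5).trans (Nat.mul_le_mul_left _
      (Set.ncard_le_ncard (fun P (hP : g P ≤ _) ↦ hP.trans ?_) (hg.finite_le _)))
    norm_num
    linarith
  have hpos : 0 < {P | g P ≤ M / 3}.ncard :=
    (Set.ncard_pos (hg.finite_le _)).2 ⟨0, by rw [Set.mem_ofPred_eq, hg.map_zero]; positivity⟩
  exact Nat.le_of_mul_le_mul_right ((hg.card_mul_ncard_ball_le hT hsep hM).trans hball) hpos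

end IsCanonicalHeight

end CanonicalHeight

/-! ### Heights on `y² = x³ + c` -/

section NaiveHeight

open Height MvPolynomial WeierstrassCurve

section AddSub

variable {F : Type*} [Field F] {c x₁ y₁ x₂ y₂ l m : F} (h₁ : y₁ ^ 2 = x₁ ^ 3 + c)
  (h₂ : y₂ ^ 2 = x₂ ^ 3 + c)

include h₁ h₂

lemma X_add_add_X_sub (hl : l * (x₁ - x₂) = y₁ - y₂) (hm : m * (x₁ - x₂) = y₁ - -y₂) :
    (x₁ - x₂) ^ 2 * ((l ^ 2 - x₁ - x₂) + (m ^ 2 - x₁ - x₂)) =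
      2 * (x₁ * x₂ * (x₁ + x₂) + 2 * c) := by
  linear_combination (l * (x₁ - x₂) + y₁ - y₂) * hl + (m * (x₁ - x₂) + y₁ + y₂) * hm +
    2 * h₁ + 2 * h₂

lemma X_add_mul_X_sub (hne : x₁ ≠ x₂) (hl : l * (x₁ - x₂) = y₁ - y₂)
    (hm : m * (x₁ - x₂) = y₁ - -y₂) :
    (x₁ - x₂) ^ 2 * ((l ^ 2 - x₁ - x₂) * (m ^ 2 - x₁ - x₂)) =
      (x₁ * x₂) ^ 2 - 4 * c * (x₁ + x₂) := by
  have hlm : l * m * (x₁ - x₂) = x₁ ^ 2 + x₁ * x₂ + x₂ ^ 2 := by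
    apply mul_right_cancel₀ (sub_ne_zero.2 hne)
    linear_combination m * (x₁ - x₂) * hl + (y₁ - y₂) * hm + h₁ - h₂
  linear_combination (l * m * (x₁ - x₂) + x₁ ^ 2 + x₁ * x₂ + x₂ ^ 2) * hlm
    - (x₁ + x₂) * ((l * (x₁ - x₂) + y₁ - y₂) * hl + (m * (x₁ - x₂) + y₁ + y₂) * hm)
    - 2 * (x₁ + x₂) * (h₁ + h₂)

end AddSub

section DoublingMap

variable {K : Type*} [Field K]

/-- The homogeneous form of `z ↦ z (z - 8)³ / (64 (z + 1)³)`, the effect of doubling on the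
coordinate `z = x³ / c` of `mordell c`. -/
noncomputable def doublingMap (K : Type*) [Field K] : Fin 2 → MvPolynomial (Fin 2) K :=
  ![X 0 * (X 0 - 8 * X 1) ^ 3, 64 * (X 1 * (X 0 + X 1) ^ 3)]

/-- Up to the scalar `1259712`, coefficients that express `X 0 ^ 7` and `X 1 ^ 7` through
`doublingMap`; they witness that the two forms have no common zero. -/
noncomputable def doublingMapCoeff (K : Type*) [Field K] :
    Fin 2 × Fin 2 → MvPolynomial (Fin 2) K
  | (0, 0) => C 64 * (C 19456 * X 1 ^ 3 + C 58496 * (X 0 * X 1 ^ 2) + C 58696 * (X 0 ^ 2 * X 1)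
      + C 19683 * X 0 ^ 3)
  | (0, 1) => C 64 * (C 155648 * (X 0 * X 1 ^ 2) - C 57344 * (X 0 ^ 2 * X 1) + C 6464 * X 0 ^ 3)
  | (1, 0) => C 6464 * X 1 ^ 3 + C 7168 * (X 0 * X 1 ^ 2) + C 2432 * (X 0 ^ 2 * X 1)
  | (1, 1) => C 19683 * X 1 ^ 3 - C 7337 * (X 0 * X 1 ^ 2) + C 914 * (X 0 ^ 2 * X 1)
      - C 38 * X 0 ^ 3

lemma isHomogeneous_doublingMap (i : Fin 2) : (doublingMap K i).IsHomogeneous 4 := by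
  have h0 := isHomogeneous_X K (0 : Fin 2)
  have h1 := isHomogeneous_X K (1 : Fin 2)
  fin_cases i
  · exact h0.mul ((h0.sub (h1.C_mul 8)).pow 3)
  · exact (h1.mul ((h0.add h1).pow 3)).C_mul 64

lemma isHomogeneous_doublingMapCoeff (a : Fin 2 × Fin 2) :
    (doublingMapCoeff K a).IsHomogeneous 3 := by
  have h0 := isHomogeneous_X K (0 : Fin 2)
  have h1 := isHomogeneous_X K (1 : Fin 2)
  have h03 := h0.pow 3
  have h13 := h1.pow 3
  have h012 := h0.mul (h1.pow 2)
  have h021 := (h0.pow 2).mul h1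
  rcases a with ⟨i, j⟩
  fin_cases i <;> fin_cases j
  · exact ((((h13.C_mul _).add (h012.C_mul _)).add (h021.C_mul _)).add (h03.C_mul _)).C_mul _
  · exact (((h012.C_mul _).sub (h021.C_mul _)).add (h03.C_mul _)).C_mul _
  · exact ((h13.C_mul _).add (h012.C_mul _)).add (h021.C_mul _)
  · exact (((h13.C_mul _).sub (h012.C_mul _)).add (h021.C_mul _)).sub (h03.C_mul _)

lemma sum_doublingMapCoeff_mul_doublingMap [CharZero K] (x : Fin 2 → K) (i : Fin 2) :
    ∑ j, eval x (C (1259712 : K)⁻¹ * doublingMapCoeff K (i, j)) * eval x (doublingMap K j) =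
      x i ^ 7 := by
  have h0 : (1259712 : K) ≠ 0 := by norm_num
  rw [Fin.sum_univ_two]
  simp only [map_mul, eval_C, mul_assoc, ← mul_add, inv_mul_eq_iff_eq_mul₀ h0]
  fin_cases i <;>
  · simp [doublingMap, doublingMapCoeff]
    ring

lemma exists_abs_logHeight_doublingMap_sub_le (K : Type*) [Field K] [AdmissibleAbsValues K]
    [CharZero K] :
    ∃ D, ∀ x : Fin 2 → K,
      |logHeight (fun i ↦ eval x (doublingMap K i)) - 4 * logHeight x| ≤ D := by
  obtain ⟨D₁, hD₁⟩ := logHeight_eval_le' (isHomogeneous_doublingMap (K := K))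
  obtain ⟨D₂, hD₂⟩ := logHeight_eval_ge' (N := 4)
    fun a ↦ (isHomogeneous_doublingMapCoeff (K := K) a).C_mul (1259712 : K)⁻¹
  refine ⟨max D₁ (-D₂), fun x ↦ abs_sub_le_iff.2 ⟨?_, ?_⟩⟩
  · have := hD₁ x
    push_cast at this
    linarith [le_max_left D₁ (-D₂)]
  · have := hD₂ _ (sum_doublingMapCoeff_mul_doublingMap x)
    push_cast at this
    linarith [le_max_right D₁ (-D₂)]

lemma exists_abs_logHeight₁_sub_four_mul_le (K : Type*) [Field K] [AdmissibleAbsValues K]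
    [CharZero K] :
    ∃ D, ∀ z w : K, z ≠ -1 → w * (64 * (z + 1) ^ 3) = z * (z - 8) ^ 3 →
      |logHeight₁ w - 4 * logHeight₁ z| ≤ D := by
  obtain ⟨D, hD⟩ := exists_abs_logHeight_doublingMap_sub_le K
  refine ⟨D, fun z w hz hw ↦ ?_⟩
  have hden : 64 * (z + 1) ^ 3 ≠ 0 :=
    mul_ne_zero (by norm_num) (pow_ne_zero 3 (by rwa [Ne, ← eq_neg_iff_add_eq_zero]))
  rw [eq_div_of_mul_eq hden hw, logHeight₁_div_eq_logHeight, logHeight₁_eq_logHeight z]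
  convert hD ![z, 1] using 4
  ext i
  fin_cases i <;> simp [doublingMap]

end DoublingMap

variable {K : Type*} [Field K] [AdmissibleAbsValues K] {c : K}

/-- The height of the coordinate `x³ / c`. This coordinate does not change under the twists of
`mordell c`, which makes the constant in the doubling estimate independent of `c`. -/
noncomputable def naiveHeight : (mordell c).Point → ℝ
  | .zero => 0
  | .some x _ _ => logHeight₁ (x ^ 3 / c)

@[simp] lemma naiveHeight_zero : naiveHeight (0 : (mordell c).Point) = 0 := rfl

lemma naiveHeight_nonneg (P : (mordell c).Point) : 0 ≤ naiveHeight P := by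
  rcases P with _ | _
  · exact le_rfl
  · exact zero_le_logHeight₁ _

lemma naiveHeight_neg (P : (mordell c).Point) : naiveHeight (-P) = naiveHeight P := by
  rcases P with _ | _ <;> rfl

variable [CharZero K]

lemma naiveHeight_point (hc : c ≠ 0) {x y : K} (h) :
    naiveHeight (point hc x y h) = logHeight₁ (x ^ 3 / c) := rfl

lemma naiveHeight_point_le (hc : c ≠ 0) {x y : K} (h) :
    naiveHeight (point hc x y h) ≤ 3 * logHeight₁ x + logHeight₁ c := by
  have := logHeight₁_mul_le (x ^ 3) c⁻¹
  rw [logHeight₁_inv, logHeight₁_pow, ← div_eq_mul_inv] at this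
  exact_mod_cast this

lemma three_mul_logHeight₁_le (hc : c ≠ 0) {x y : K} (h) :
    3 * logHeight₁ x ≤ naiveHeight (point hc x y h) + logHeight₁ c := by
  have := logHeight₁_mul_le (x ^ 3 / c) c
  rw [div_mul_cancel₀ _ hc, logHeight₁_pow] at this
  exact_mod_cast this

lemma exists_abs_naiveHeight_add_self_sub_le (K : Type*) [Field K] [AdmissibleAbsValues K]
    [CharZero K] [DecidableEq K] :
    ∃ D, ∀ c : K, c ≠ 0 → ∀ P : (mordell c).Point,
      |naiveHeight (P + P) - 4 * naiveHeight P| ≤ D := by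
  obtain ⟨D, hD⟩ := exists_abs_logHeight₁_sub_four_mul_le K
  have hD0 : 0 ≤ D := (abs_nonneg _).trans (hD 0 0 (by norm_num) (by ring))
  refine ⟨D, fun c hc P ↦ ?_⟩
  rcases eq_zero_or_eq_point hc P with rfl | ⟨x, y, h, rfl⟩
  · simpa using hD0
  obtain rfl | hy := eq_or_ne y 0
  · have hz : x ^ 3 / c = -1 := by rw [div_eq_iff hc]; linear_combination -h
    rw [point_add_point_of_Y_eq_neg hc (by simp), naiveHeight_point, hz]
    simpa using hD0
  have hl : 3 * x ^ 2 / (2 * y) * (2 * y) = 3 * x ^ 2 := div_mul_cancel₀ _ (by simpa using hy)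
  generalize 3 * x ^ 2 / (2 * y) = l at hl
  have hdouble : (-(l * ((l ^ 2 - 2 * x) - x) + y)) ^ 2 = (l ^ 2 - 2 * x) ^ 3 + c := by
    linear_combination h + (l ^ 2 - 3 * x) * hl
  rw [point_add_self_of_tangent hc hy hl rfl rfl (h₃ := hdouble), naiveHeight_point,
    naiveHeight_point]
  have hz : x ^ 3 / c + 1 = y ^ 2 / c := by rw [h]; field_simp
  refine hD _ _ (fun h0 ↦ div_ne_zero (pow_ne_zero 2 hy) hc (by rw [← hz, h0]; ring)) ?_
  obtain rfl : l = 3 * x ^ 2 / (2 * y) := eq_div_of_mul_eq (by simpa using hy) hl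
  obtain rfl : c = y ^ 2 - x ^ 3 := by rw [h]; ring
  rw [hz]
  field_simp
  ring

lemma exists_logHeight₁_add_logHeight₁_le (c : K) :
    ∃ D, ∀ x₁ x₂ x₃ x₄ : K, x₁ ≠ x₂ →
      (x₁ - x₂) ^ 2 * (x₃ + x₄) = 2 * (x₁ * x₂ * (x₁ + x₂) + 2 * c) →
      (x₁ - x₂) ^ 2 * (x₃ * x₄) = (x₁ * x₂) ^ 2 - 4 * c * (x₁ + x₂) →
      logHeight₁ x₃ + logHeight₁ x₄ ≤ 2 * logHeight₁ x₁ + 2 * logHeight₁ x₂ + D := by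
  obtain ⟨D₁, hD₁⟩ := abs_logHeight_sym2_sub_le K
  obtain ⟨D₂, hD₂⟩ := logHeight_eval_le' (isHomogeneous_addSubMap (mordell c))
  refine ⟨3 * D₁ + D₂, fun x₁ x₂ x₃ x₄ hne hadd hmul ↦ ?_⟩
  have hsym (a b : K) :
      |logHeight ![a * b, a + b, 1] - (logHeight₁ a + logHeight₁ b)| ≤ D₁ := by
    simpa [logHeight₁_eq_logHeight] using hD₁ (a := a) (b := 1) (c := b) (d := 1) (by simp)
      (by simp)
  have hmap : (fun i ↦ eval ![x₁ * x₂, x₁ + x₂, 1] (addSubMap (mordell c) i)) =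
      (x₁ - x₂) ^ 2 • ![x₃ * x₄, x₃ + x₄, 1] := by
    ext i
    fin_cases i
    · simp [addSubMap, b₂, b₄, b₆, b₈, hmul]
    · simp [addSubMap, b₂, b₄, b₆, b₈, hadd]; ring
    · simp [addSubMap, b₂, b₄, b₆, b₈]; ring
  have hle := hD₂ ![x₁ * x₂, x₁ + x₂, 1]
  rw [hmap, logHeight_smul_eq_logHeight _ (pow_ne_zero 2 (sub_ne_zero.2 hne))] at hle
  push_cast at hle
  linarith [(abs_le.1 (hsym x₁ x₂)).2, (abs_le.1 (hsym x₃ x₄)).1]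

lemma exists_naiveHeight_add_add_naiveHeight_sub_le [DecidableEq K] (hc : c ≠ 0) :
    ∃ D, ∀ P Q : (mordell c).Point,
      naiveHeight (P + Q) + naiveHeight (P - Q) ≤ 2 * naiveHeight P + 2 * naiveHeight Q + D := by
  obtain ⟨D₁, hD₁⟩ := exists_abs_naiveHeight_add_self_sub_le K
  obtain ⟨D₂, hD₂⟩ := exists_logHeight₁_add_logHeight₁_le c
  set D := |D₁| + 3 * |D₂| + 6 * logHeight₁ c
  have hD₁0 := le_abs_self D₁
  have hD₂0 := le_abs_self D₂
  have hc0 := zero_le_logHeight₁ c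
  have hdouble (P : (mordell c).Point) : naiveHeight (P + P) ≤ 4 * naiveHeight P + D := by
    linarith [(abs_le.1 (hD₁ c hc P)).2, abs_nonneg D₂]
  refine ⟨D, fun P Q ↦ ?_⟩
  rcases eq_zero_or_eq_point hc P with rfl | ⟨x₁, y₁, h₁, rfl⟩
  · simp only [zero_add, zero_sub, naiveHeight_neg, naiveHeight_zero]
    linarith [abs_nonneg D₁, abs_nonneg D₂]
  rcases eq_zero_or_eq_point hc Q with rfl | ⟨x₂, y₂, h₂, rfl⟩
  · simp only [add_zero, sub_zero, naiveHeight_zero]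
    linarith [abs_nonneg D₁, abs_nonneg D₂]
  obtain rfl | hne := eq_or_ne x₁ x₂
  · rcases eq_or_eq_neg_of_X_eq h₁ h₂ with rfl | rfl
    · rw [sub_self, naiveHeight_zero]
      linarith [hdouble (point hc x₁ y₁ h₁)]
    · rw [← neg_point hc h₂, neg_add_cancel, ← neg_add', naiveHeight_neg, naiveHeight_neg,
        naiveHeight_zero]
      linarith [hdouble (point hc x₁ y₂ h₂)]
  have hs : x₁ - x₂ ≠ 0 := sub_ne_zero.2 hne
  have h₂' : (-y₂) ^ 2 = x₂ ^ 3 + c := by rw [neg_sq, h₂]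
  have hl : (y₁ - y₂) / (x₁ - x₂) * (x₁ - x₂) = y₁ - y₂ := div_mul_cancel₀ _ hs
  have hm : (y₁ - -y₂) / (x₁ - x₂) * (x₁ - x₂) = y₁ - -y₂ := div_mul_cancel₀ _ hs
  generalize (y₁ - y₂) / (x₁ - x₂) = l at hl
  generalize (y₁ - -y₂) / (x₁ - x₂) = m at hm
  rw [sub_eq_add_neg, neg_point,
    point_add_point_of_chord hc hne hl rfl rfl (h₃ := chord_third_point h₁ h₂ hne hl),
    point_add_point_of_chord hc hne hm rfl rfl (h₃ := chord_third_point h₁ h₂' hne hm)]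
  have hpar := hD₂ _ _ _ _ hne (X_add_add_X_sub h₁ h₂ hl hm) (X_add_mul_X_sub h₁ h₂ hne hl hm)
  linarith [abs_nonneg D₁, naiveHeight_point_le hc (chord_third_point h₁ h₂ hne hl),
    naiveHeight_point_le hc (chord_third_point h₁ h₂' hne hm),
    three_mul_logHeight₁_le hc h₁, three_mul_logHeight₁_le hc h₂]

end NaiveHeight

section NumberField

open Height

variable {K : Type*} [Field K] [NumberField K] {c : K}

lemma finite_naiveHeight_le (hc : c ≠ 0) (t : ℝ) :
    {P : (mordell c).Point | naiveHeight P ≤ t}.Finite := by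
  classical
  have hX := NumberField.finite_setOfPred_logHeight₁_le K ((t + logHeight₁ c) / 3)
  have hY : {q : K × K | logHeight₁ q.1 ≤ (t + logHeight₁ c) / 3 ∧
      q.2 ^ 2 = q.1 ^ 3 + c}.Finite := by
    refine (hX.biUnion (t := fun x ↦ {x} ×ˢ {y : K | y ^ 2 = x ^ 3 + c}) fun x _ ↦
      (Set.finite_singleton x).prod ?_).subset fun q hq ↦
        Set.mem_biUnion hq.1 ⟨rfl, hq.2⟩
    exact (Polynomial.nthRoots 2 (x ^ 3 + c)).toFinset.finite_toSet.subset fun y hy ↦ by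
      simpa using hy
  refine ((hY.image fun q ↦ if h : q.2 ^ 2 = q.1 ^ 3 + c then point hc q.1 q.2 h else 0).union
    (Set.finite_singleton 0)).subset fun P hP ↦ ?_
  rcases eq_zero_or_eq_point hc P with rfl | ⟨x, y, h, rfl⟩
  · exact Or.inr rfl
  · refine Or.inl ⟨(x, y), ⟨?_, h⟩, dif_pos h⟩
    have hle := three_mul_logHeight₁_le hc h
    rw [Set.mem_ofPred_eq] at hP
    simp only
    linarith

theorem exists_forall_isCanonicalHeight (K : Type*) [Field K] [NumberField K] [DecidableEq K] :
    ∃ D, ∀ c : K, c ≠ 0 → ∃ g : (mordell c).Point → ℝ,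
      IsCanonicalHeight g ∧ ∀ P, |g P - naiveHeight P| ≤ D := by
  obtain ⟨D, hD⟩ := exists_abs_naiveHeight_add_self_sub_le K
  refine ⟨D, fun c hc ↦ ?_⟩
  obtain ⟨D', hD'⟩ := exists_naiveHeight_add_add_naiveHeight_sub_le hc
  exact exists_isCanonicalHeight naiveHeight_nonneg (hD c hc) hD' (finite_naiveHeight_le hc)

end NumberField

/-! ### Rational points of small height -/

section SmallHeight

open Height

lemma logHeight₁_intCast {n : ℤ} (hn : n ≠ 0) : logHeight₁ (n : ℚ) = Real.log |(n : ℝ)| := by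
  have hpos : 1 ≤ n.natAbs := Int.natAbs_pos.2 hn
  rw [Rat.logHeight₁_eq_log_max, Rat.num_intCast, Rat.den_intCast, max_eq_left hpos,
    Nat.cast_natAbs, Int.cast_abs]

lemma abs_num_le_mulHeight₁ (q : ℚ) : |(q.num : ℝ)| ≤ mulHeight₁ q := by
  rw [Rat.mulHeight₁_eq_max, ← Int.cast_abs, ← Nat.cast_natAbs]
  exact_mod_cast le_max_left _ _

lemma den_le_mulHeight₁ (q : ℚ) : (q.den : ℝ) ≤ mulHeight₁ q := by
  rw [Rat.mulHeight₁_eq_max]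
  exact_mod_cast le_max_right _ _

lemma mulHeight₁_le_of_mul_eq {q : ℚ} {a b : ℤ} {M : ℝ} (hb : b ≠ 0) (hab : q * b = a)
    (ha : |(a : ℝ)| ≤ M) (hbM : |(b : ℝ)| ≤ M) : mulHeight₁ q ≤ M := by
  have hq : q = Rat.divInt a b := by
    rw [Rat.divInt_eq_div]
    exact eq_div_of_mul_eq (by exact_mod_cast hb) hab
  have hnum : q.num.natAbs ≤ max a.natAbs b.natAbs := by
    obtain rfl | ha0 := eq_or_ne a 0
    · simp [hq]
    · exact le_max_of_le_left (Int.natAbs_le_of_dvd_ne_zero (hq ▸ Rat.num_dvd a hb) ha0)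
  have hden : q.den ≤ max a.natAbs b.natAbs :=
    le_max_of_le_right
      (Int.natAbs_le_of_dvd_ne_zero (show (q.den : ℤ) ∣ b from hq ▸ Rat.den_dvd a b) hb)
  rw [Rat.mulHeight₁_eq_max]
  refine (Nat.cast_le.2 (max_le hnum hden)).trans ?_
  rw [Nat.cast_max, Nat.cast_natAbs, Nat.cast_natAbs, Int.cast_abs, Int.cast_abs]
  exact max_le ha hbM

lemma dvd_pow_five_of_sixthPowerFree {n m : ℤ} (hn : SixthPowerFree n) (hm : m ≠ 0)
    (h : ∀ p : ℕ, p.Prime → (p : ℤ) ∣ n → (p : ℤ) ∣ m) : n ∣ m ^ 5 := by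
  have hn0 : n.natAbs ≠ 0 := Int.natAbs_ne_zero.2 hn.1
  have hm0 : m.natAbs ≠ 0 := Int.natAbs_ne_zero.2 hm
  rw [← Int.natAbs_dvd_natAbs, Int.natAbs_pow,
    ← Nat.factorization_prime_le_iff_dvd hn0 (pow_ne_zero 5 hm0)]
  intro p hp
  rw [Nat.factorization_pow, Finsupp.smul_apply, smul_eq_mul]
  have hle : n.natAbs.factorization p ≤ 5 := by
    by_contra! hlt
    refine hn.2 p hp ?_
    rw [← Int.natAbs_dvd_natAbs, Int.natAbs_pow, Int.natAbs_natCast]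
    exact (hp.pow_dvd_iff_le_factorization hn0).2 hlt
  by_cases hpn : p ∣ n.natAbs
  · have hpm := h p hp (Int.natCast_dvd.2 hpn)
    have := (hp.dvd_iff_one_le_factorization hm0).1 (Int.natCast_dvd.1 hpm)
    lia
  · rw [Nat.factorization_eq_zero_of_not_dvd hpn]
    exact Nat.zero_le _

lemma padicValInt_mem_Icc_of_sixthPowerFree {n : ℤ} (hn : SixthPowerFree n) {p : ℕ} [Fact p.Prime]
    (hpn : (p : ℤ) ∣ n) : padicValInt p n ∈ Set.Icc 1 5 := by
  have hdvd (k : ℕ) : (p : ℤ) ^ k ∣ n ↔ k ≤ padicValInt p n := by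
    rw [padicValInt_dvd_iff, or_iff_right hn.1]
  refine ⟨(hdvd 1).1 (by rwa [pow_one]), ?_⟩
  by_contra! hlt
  exact hn.2 p Fact.out ((hdvd 6).2 hlt)

lemma padicValRat_intCast_div_intCast {p : ℕ} [Fact p.Prime] {a b : ℤ} (ha : ¬(p : ℤ) ∣ a)
    (hb : ¬(p : ℤ) ∣ b) : padicValRat p (a / b) = 0 := by
  have hne {k : ℤ} (hk : ¬(p : ℤ) ∣ k) : (k : ℚ) ≠ 0 :=
    Int.cast_ne_zero.2 fun h0 ↦ hk (h0 ▸ dvd_zero _)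
  rw [padicValRat.div (hne ha) (hne hb), padicValRat.of_int, padicValRat.of_int,
    padicValInt.eq_zero_of_not_dvd ha, padicValInt.eq_zero_of_not_dvd hb, sub_self]

variable {n : ℤ} {x y : ℚ}

-- Otherwise `x³ / n` and `y² / n` are `p`-adic units, so `v_p(n)` is divisible by `3` and by `2`.
lemma natCast_dvd_num_mul_add_mul_den (hn : SixthPowerFree n) (h : y ^ 2 = x ^ 3 + n) (hx : x ≠ 0)
    (hy : y ≠ 0) {z : ℚ} (hz : z * n = x ^ 3) {p : ℕ} (hp : p.Prime) (hpn : (p : ℤ) ∣ n) :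
    (p : ℤ) ∣ z.num * (z.num + z.den) * z.den := by
  have := Fact.mk hp
  have hn0 : (n : ℚ) ≠ 0 := Int.cast_ne_zero.2 hn.1
  by_contra hdvd
  have hu : ¬(p : ℤ) ∣ z.num := fun hu ↦ hdvd ((hu.mul_right _).mul_right _)
  have hv : ¬(p : ℤ) ∣ z.num + z.den := fun hv ↦ hdvd ((hv.mul_left _).mul_right _)
  have hw : ¬(p : ℤ) ∣ z.den := fun hw ↦ hdvd (hw.mul_left _)
  have hd0 : (z.den : ℚ) ≠ 0 := Nat.cast_ne_zero.2 z.den_ne_zero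
  have hx3 : x ^ 3 / n = (z.num : ℤ) / (z.den : ℤ) := by
    rw [← hz, mul_div_cancel_right₀ _ hn0, Int.cast_natCast, Rat.num_div_den]
  have hy2 : y ^ 2 / n = ((z.num + z.den : ℤ) : ℚ) / (z.den : ℤ) := by
    rw [h, add_div, hx3, div_self hn0]
    push_cast
    rw [add_div, div_self hd0]
  have hvx : padicValRat p (x ^ 3 / n) = 0 := by rw [hx3, padicValRat_intCast_div_intCast hu hw]
  have hvy : padicValRat p (y ^ 2 / n) = 0 := by rw [hy2, padicValRat_intCast_div_intCast hv hw]
  rw [padicValRat.div (pow_ne_zero 3 hx) hn0, padicValRat.pow, padicValRat.of_int] at hvx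
  rw [padicValRat.div (pow_ne_zero 2 hy) hn0, padicValRat.pow, padicValRat.of_int] at hvy
  obtain ⟨h1, h5⟩ := padicValInt_mem_Icc_of_sixthPowerFree hn hpn
  push_cast at hvx hvy
  lia

lemma abs_le_mulHeight₁_pow (hn : SixthPowerFree n) (h : y ^ 2 = x ^ 3 + n) (hx : x ≠ 0)
    (hy : y ≠ 0) : |(n : ℝ)| ≤ 32 * mulHeight₁ (x ^ 3 / n : ℚ) ^ 15 := by
  have hn0 : (n : ℚ) ≠ 0 := Int.cast_ne_zero.2 hn.1
  set z := x ^ 3 / (n : ℚ)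
  have hzn : z * n = x ^ 3 := div_mul_cancel₀ _ hn0
  have hz0 : z ≠ 0 := div_ne_zero (pow_ne_zero 3 hx) hn0
  have hadd : z.num + z.den ≠ 0 := fun h0 ↦ by
    have hzd : z * z.den = z.num := Rat.mul_den_eq_num z
    have hd0 : (z.den : ℚ) ≠ 0 := Nat.cast_ne_zero.2 z.den_ne_zero
    have h0' : (z.num : ℚ) + z.den = 0 := by exact_mod_cast h0
    have hz1 : z = -1 := mul_right_cancel₀ hd0 (by linear_combination hzd + h0')
    exact pow_ne_zero 2 hy (by rw [h, ← hzn, hz1]; ring)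
  set m := z.num * (z.num + z.den) * z.den with hm
  have hm0 : m ≠ 0 :=
    mul_ne_zero (mul_ne_zero (Rat.num_ne_zero.2 hz0) hadd) (Int.natCast_ne_zero.2 z.den_ne_zero)
  have hdvd := dvd_pow_five_of_sixthPowerFree hn hm0
    fun p ↦ natCast_dvd_num_mul_add_mul_den hn h hx hy hzn
  have hnm : |(n : ℝ)| ≤ |(m : ℝ)| ^ 5 := by
    rw [← abs_pow]
    exact_mod_cast Int.le_of_dvd (abs_pos.2 (pow_ne_zero 5 hm0)) ((abs_dvd_abs _ _).2 hdvd)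
  have hmH : |(m : ℝ)| ≤ mulHeight₁ z * (mulHeight₁ z + mulHeight₁ z) * mulHeight₁ z := by
    have hnum := abs_num_le_mulHeight₁ z
    have hden : |(z.den : ℝ)| ≤ mulHeight₁ z := by simpa using den_le_mulHeight₁ z
    rw [hm]
    push_cast
    rw [abs_mul, abs_mul]
    gcongr
    exact (abs_add_le _ _).trans (add_le_add hnum hden)
  calc |(n : ℝ)| ≤ |(m : ℝ)| ^ 5 := hnm
    _ ≤ (mulHeight₁ z * (mulHeight₁ z + mulHeight₁ z) * mulHeight₁ z) ^ 5 := by gcongr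
    _ = 32 * mulHeight₁ z ^ 15 := by ring

lemma log_abs_le_logHeight₁ (hn : SixthPowerFree n) (h : y ^ 2 = x ^ 3 + n) (hx : x ≠ 0)
    (hy : y ≠ 0) : Real.log |(n : ℝ)| ≤ Real.log 32 + 15 * logHeight₁ (x ^ 3 / n : ℚ) := by
  have hpos := mulHeight₁_pos (x ^ 3 / n : ℚ)
  have hlog := Real.log_le_log (abs_pos.2 (Int.cast_ne_zero.2 hn.1))
    (abs_le_mulHeight₁_pow hn h hx hy)
  rw [Real.log_mul (by norm_num) (pow_ne_zero _ hpos.ne'), Real.log_pow,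
    ← logHeight₁_eq_log_mulHeight₁] at hlog
  exact_mod_cast hlog

lemma ncard_le_four_of_X_eq_zero_or_Y_eq_zero {K : Type*} [Field K] [LinearOrder K]
    [IsStrictOrderedRing K] {c : K} (hc : c ≠ 0) {s : Set (mordell c).Point}
    (hs : ∀ x y h, point hc x y h ∈ s → x = 0 ∨ y = 0) : s.ncard ≤ 4 := by
  let f : (mordell c).Point → Option SignType
    | .zero => none
    | .some _ y _ => some (SignType.sign y)
  have hf (x y : K) (h : y ^ 2 = x ^ 3 + c) :
      f (point hc x y h) = some (SignType.sign y) := rfl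
  refine (Set.ncard_le_ncard_of_injOn (t := Set.univ) f (fun _ _ ↦ Set.mem_univ _) ?_
    Set.finite_univ).trans (by rw [Set.ncard_univ, Nat.card_eq_fintype_card]; rfl)
  intro P hP Q hQ hPQ
  rcases eq_zero_or_eq_point hc P with rfl | ⟨x₁, y₁, h₁, rfl⟩ <;>
    rcases eq_zero_or_eq_point hc Q with rfl | ⟨x₂, y₂, h₂, rfl⟩
  · rfl
  · exact absurd hPQ (Option.some_ne_none _).symm
  · exact absurd hPQ (Option.some_ne_none _)
  have hsign : SignType.sign y₁ = SignType.sign y₂ := by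
    rwa [hf, hf, Option.some_inj] at hPQ
  rw [point_inj]
  obtain rfl | hy₁ := eq_or_ne y₁ 0
  · obtain rfl : y₂ = 0 := by rwa [sign_zero, eq_comm, sign_eq_zero_iff] at hsign
    exact ⟨(Odd.strictMono_pow (by decide : Odd 3)).injective (by linear_combination h₂ - h₁), rfl⟩
  · have hy₂ : y₂ ≠ 0 := fun h0 ↦ hy₁ (by rwa [h0, sign_zero, sign_eq_zero_iff] at hsign)
    obtain rfl := (hs _ _ _ hP).resolve_right hy₁
    obtain rfl := (hs _ _ _ hQ).resolve_right hy₂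
    refine ⟨rfl, (eq_or_eq_neg_of_X_eq h₁ h₂).resolve_right fun hneg ↦ ?_⟩
    rw [hneg, Left.sign_neg] at hsign
    exact hy₂ (sign_eq_zero_iff.1 (SignType.neg_eq_self_iff.1 hsign))

lemma ncard_naiveHeight_le_four (hn : SixthPowerFree n) {t : ℝ}
    (ht : Real.log 32 + 15 * t < Real.log |(n : ℝ)|) :
    {P : (mordell (n : ℚ)).Point | naiveHeight P ≤ t}.ncard ≤ 4 := by
  refine ncard_le_four_of_X_eq_zero_or_Y_eq_zero (Int.cast_ne_zero.2 hn.1) fun x y h hP ↦ ?_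
  by_contra! hxy
  rw [Set.mem_ofPred_eq, naiveHeight_point] at hP
  linarith [log_abs_le_logHeight₁ hn h hxy.1 hxy.2]

end SmallHeight

/-! ### Sets of points with comparable coordinates -/

section Cluster

open Height

lemma exists_ncard_naiveHeight_le {κ : ℝ} (hκ : 15 * κ < 1) (D : ℝ) :
    ∃ K : ℕ, ∀ n : ℤ, SixthPowerFree n →
      {P : (mordell (n : ℚ)).Point | naiveHeight P ≤ κ * Real.log |(n : ℝ)| + D}.ncard ≤ K := by
  set A := (Real.log 32 + 15 * D) / (1 - 15 * κ) with hA
  set f : ℤ → ℕ := fun n ↦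
    {P : (mordell (n : ℚ)).Point | naiveHeight P ≤ κ * Real.log |(n : ℝ)| + D}.ncard
  obtain ⟨K, hK⟩ := ((Set.finite_Icc (-⌊Real.exp A⌋) ⌊Real.exp A⌋).image f).bddAbove
  refine ⟨max 4 K, fun n hn ↦ ?_⟩
  rcases lt_or_ge A (Real.log |(n : ℝ)|) with hlt | hge
  · refine le_max_of_le_left (ncard_naiveHeight_le_four hn ?_)
    rw [hA, div_lt_iff₀ (by linarith)] at hlt
    linarith
  · refine le_max_of_le_right (hK ⟨n, ?_, rfl⟩)
    have hle : |(n : ℝ)| ≤ Real.exp A :=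
      (Real.log_le_iff_le_exp (abs_pos.2 (Int.cast_ne_zero.2 hn.1))).1 hge
    exact abs_le.1 (Int.le_floor.2 (by exact_mod_cast hle))

/-- The archimedean part `max |x| 1` of the height of a rational number. -/
noncomputable def archSize (x : ℚ) : ℝ := max |(x : ℝ)| 1

lemma one_le_archSize (x : ℚ) : 1 ≤ archSize x := le_max_right _ _

lemma abs_le_archSize (x : ℚ) : |(x : ℝ)| ≤ archSize x := le_max_left _ _

lemma logHeight₁_eq_log_den_add (x : ℚ) :
    logHeight₁ x = Real.log x.den + Real.log (archSize x) := by
  have hd : (0 : ℝ) < x.den := Nat.cast_pos.2 x.den_pos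
  have hnum : (x.num : ℝ) = x.den * x := by
    rw [mul_comm]
    exact_mod_cast (Rat.mul_den_eq_num x).symm
  rw [Rat.logHeight₁_eq_log_max,
    ← Real.log_mul hd.ne' (zero_lt_one.trans_le (one_le_archSize x)).ne', archSize,
    mul_max_of_nonneg _ _ hd.le, mul_one, Nat.cast_max, Nat.cast_natAbs, Int.cast_abs, hnum,
    abs_mul, abs_of_pos hd]

lemma exists_intCast_eq_mul_of_den_dvd {x : ℚ} {L : ℕ} (h : x.den ∣ L) :
    ∃ k : ℤ, (k : ℚ) = L * x := by
  obtain ⟨e, rfl⟩ := h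
  refine ⟨e * x.num, ?_⟩
  push_cast
  rw [← Rat.mul_den_eq_num x]
  ring

lemma exists_intCast_eq_of_sq_eq_intCast {q : ℚ} {k : ℤ} (h : q ^ 2 = k) :
    ∃ m : ℤ, (m : ℚ) = q := by
  have hd : q.den ^ 2 = 1 := by rw [← Rat.den_pow, h, Rat.den_intCast]
  exact ⟨q.num, (Rat.den_eq_one_iff q).1 (by simpa using hd)⟩

lemma abs_mul_le_of_sq_le {R : Type*} [CommRing R] [LinearOrder R] [IsStrictOrderedRing R]
    {a b M : R} (ha : a ^ 2 ≤ M) (hb : b ^ 2 ≤ M) : |a * b| ≤ M := by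
  refine abs_le_of_sq_le_sq ?_ ((sq_nonneg a).trans ha)
  rw [mul_pow, sq M]
  exact mul_le_mul ha hb (sq_nonneg b) ((sq_nonneg a).trans ha)

section Chord

variable {n : ℤ} {x₁ y₁ x₂ y₂ l : ℚ} {B : ℝ}

lemma sq_le_two_mul_pow_of_abs_le {x y : ℚ} (h : y ^ 2 = x ^ 3 + n) (hB : 1 ≤ B)
    (hn : |(n : ℝ)| ≤ B) (hx : |(x : ℝ)| ≤ B) : (y : ℝ) ^ 2 ≤ 2 * B ^ 3 := by
  have hxB : (x : ℝ) ^ 3 ≤ B ^ 3 := by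
    refine (le_abs_self _).trans ?_
    rw [abs_pow]
    gcongr
  calc (y : ℝ) ^ 2 = x ^ 3 + n := by exact_mod_cast h
    _ ≤ B ^ 3 + B := add_le_add hxB ((le_abs_self _).trans hn)
    _ ≤ 2 * B ^ 3 := by linarith [le_self_pow₀ hB (by norm_num : 3 ≠ 0)]

lemma abs_chord_numerator_le (h₁ : y₁ ^ 2 = x₁ ^ 3 + n) (h₂ : y₂ ^ 2 = x₂ ^ 3 + n) (hB : 1 ≤ B)
    (hn : |(n : ℝ)| ≤ B) (hx₁ : |(x₁ : ℝ)| ≤ B) (hx₂ : |(x₂ : ℝ)| ≤ B) :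
    |(x₁ : ℝ) * x₂ * (x₁ + x₂) + 2 * n - 2 * (y₁ * y₂)| ≤ 8 * B ^ 3 := by
  have hyy := abs_mul_le_of_sq_le (sq_le_two_mul_pow_of_abs_le h₁ hB hn hx₁)
    (sq_le_two_mul_pow_of_abs_le h₂ hB hn hx₂)
  have hxx : |(x₁ : ℝ) * x₂ * (x₁ + x₂)| ≤ B * B * (B + B) := by
    rw [abs_mul, abs_mul]
    gcongr
    exact (abs_add_le _ _).trans (add_le_add hx₁ hx₂)
  calc _ ≤ |(x₁ : ℝ) * x₂ * (x₁ + x₂)| + 2 * |(n : ℝ)| + 2 * |(y₁ * y₂ : ℝ)| := by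
        rw [← abs_two, ← abs_mul, ← abs_mul, abs_two]
        exact (abs_sub _ _).trans (by gcongr; exact abs_add_le _ _)
    _ ≤ B * B * (B + B) + 2 * B + 2 * (2 * B ^ 3) := by gcongr
    _ ≤ 8 * B ^ 3 := by linarith [le_self_pow₀ hB (by norm_num : 3 ≠ 0)]

-- The product `L³ y₁ y₂` is an integer because its square is one, even though `L³ y₁` need not be.
lemma mulHeight₁_chord_le (h₁ : y₁ ^ 2 = x₁ ^ 3 + n) (h₂ : y₂ ^ 2 = x₂ ^ 3 + n) (hne : x₁ ≠ x₂)
    (hl : l * (x₁ - x₂) = y₁ - y₂) {L : ℕ} (hL : L ≠ 0) (hd₁ : x₁.den ∣ L) (hd₂ : x₂.den ∣ L)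
    (hB : 1 ≤ B) (hn : |(n : ℝ)| ≤ B) (hx₁ : |(x₁ : ℝ)| ≤ B) (hx₂ : |(x₂ : ℝ)| ≤ B) :
    mulHeight₁ (l ^ 2 - x₁ - x₂) ≤ L ^ 3 * (8 * B ^ 3) := by
  obtain ⟨a, ha⟩ := exists_intCast_eq_mul_of_den_dvd hd₁
  obtain ⟨b, hb⟩ := exists_intCast_eq_mul_of_den_dvd hd₂
  obtain ⟨c, hc⟩ : ∃ c : ℤ, (c : ℚ) = L ^ 3 * (y₁ * y₂) := by
    refine exists_intCast_eq_of_sq_eq_intCast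
      (k := (a ^ 3 + L ^ 3 * n) * (b ^ 3 + L ^ 3 * n)) ?_
    push_cast
    rw [ha, hb, mul_pow, mul_pow y₁, h₁, h₂]
    ring
  have ha' : (a : ℝ) = L * x₁ := by exact_mod_cast ha
  have hb' : (b : ℝ) = L * x₂ := by exact_mod_cast hb
  have hc' : (c : ℝ) = L ^ 3 * (y₁ * y₂) := by exact_mod_cast hc
  refine mulHeight₁_le_of_mul_eq (a := a * b * (a + b) + 2 * n * L ^ 3 - 2 * c)
    (b := L * (a - b) ^ 2) ?_ ?_ ?_ ?_
  · have hab : a ≠ b := fun hab ↦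
      hne (mul_left_cancel₀ (Nat.cast_ne_zero.2 hL) (ha.symm.trans (hab ▸ hb)))
    exact mul_ne_zero (Int.natCast_ne_zero.2 hL) (pow_ne_zero 2 (sub_ne_zero.2 hab))
  · push_cast
    rw [ha, hb, hc]
    linear_combination (L : ℚ) ^ 3 * (l * (x₁ - x₂) + (y₁ - y₂)) * hl + (L : ℚ) ^ 3 * (h₁ + h₂)
  · push_cast
    rw [ha', hb', hc', show L * (x₁ : ℝ) * (L * x₂) * (L * x₁ + L * x₂) + 2 * n * L ^ 3
      - 2 * (L ^ 3 * (y₁ * y₂)) = L ^ 3 * (x₁ * x₂ * (x₁ + x₂) + 2 * n - 2 * (y₁ * y₂)) by ring,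
      abs_mul, abs_of_nonneg (by positivity : (0 : ℝ) ≤ L ^ 3)]
    gcongr
    exact abs_chord_numerator_le h₁ h₂ hB hn hx₁ hx₂
  · push_cast
    rw [ha', hb', show L * (L * (x₁ : ℝ) - L * x₂) ^ 2 = L ^ 3 * (x₁ - x₂) ^ 2 by ring, abs_mul,
      abs_of_nonneg (by positivity : (0 : ℝ) ≤ L ^ 3), abs_pow]
    have hsub : |(x₁ : ℝ) - x₂| ≤ 2 * B := (abs_sub _ _).trans (by linarith)
    calc (L : ℝ) ^ 3 * |(x₁ : ℝ) - x₂| ^ 2 ≤ L ^ 3 * (2 * B) ^ 2 := by gcongr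
      _ = L ^ 3 * (4 * B ^ 2) := by ring
      _ ≤ L ^ 3 * (8 * B ^ 3) := by
        gcongr
        · norm_num
        · norm_num

lemma logHeight₁_chord_le (h₁ : y₁ ^ 2 = x₁ ^ 3 + n) (h₂ : y₂ ^ 2 = x₂ ^ 3 + n) (hne : x₁ ≠ x₂)
    (hl : l * (x₁ - x₂) = y₁ - y₂) {L : ℕ} (hL : L ≠ 0) (hd₁ : x₁.den ∣ L) (hd₂ : x₂.den ∣ L)
    (hB : 1 ≤ B) (hn : |(n : ℝ)| ≤ B) (hx₁ : |(x₁ : ℝ)| ≤ B) (hx₂ : |(x₂ : ℝ)| ≤ B) :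
    logHeight₁ (l ^ 2 - x₁ - x₂) ≤ 3 * Real.log L + 3 * Real.log B + Real.log 8 := by
  have hB0 : B ≠ 0 := (zero_lt_one.trans_le hB).ne'
  have hlog := Real.log_le_log (mulHeight₁_pos _)
    (mulHeight₁_chord_le h₁ h₂ hne hl hL hd₁ hd₂ hB hn hx₁ hx₂)
  rw [← logHeight₁_eq_log_mulHeight₁,
    Real.log_mul (pow_ne_zero 3 (Nat.cast_ne_zero.2 hL)) (by positivity),
    Real.log_mul (by norm_num) (pow_ne_zero 3 hB0), Real.log_pow, Real.log_pow] at hlog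
  push_cast at hlog
  linarith

end Chord

/-- A set of points of `y² = x³ + n` whose `x`-coordinates have denominators close to the common
denominator `L` and comparable archimedean sizes. The constants `16` and `8` suit arithmetic
progressions; the packing argument needs only that `16` is large enough. -/
structure IsCluster (n : ℤ) (T : Finset (ℚ × ℚ)) (L : ℕ) : Prop where
  ne_zero : L ≠ 0
  equation : ∀ p ∈ T, p.2 ^ 2 = p.1 ^ 3 + n
  den : ∀ p ∈ T, ∃ g : ℕ, L = p.1.den * g ∧ g ^ 16 ≤ L
  archSize_le : ∀ p ∈ T, ∀ q ∈ T, archSize q.1 ≤ 8 * |(n : ℝ)| * archSize p.1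

namespace IsCluster

variable {n : ℤ} {T : Finset (ℚ × ℚ)} {L : ℕ} {p₀ p q : ℚ × ℚ}

section Height

variable (hT : IsCluster n T L) (hn : n ≠ 0) (hp₀ : p₀ ∈ T) (hp : p ∈ T)
include hT hn hp₀ hp

lemma log_archSize_le : Real.log (archSize p.1) ≤
    Real.log 8 + Real.log |(n : ℝ)| + Real.log (archSize p₀.1) := by
  have h₀ := zero_lt_one.trans_le (one_le_archSize p₀.1)
  have hpos := zero_lt_one.trans_le (one_le_archSize p.1)
  have hn0 : |(n : ℝ)| ≠ 0 := abs_ne_zero.2 (Int.cast_ne_zero.2 hn)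
  rw [← Real.log_mul (by norm_num) hn0, ← Real.log_mul (mul_ne_zero (by norm_num) hn0) h₀.ne']
  exact Real.log_le_log hpos (hT.archSize_le p₀ hp₀ p hp)

lemma logHeight₁_le : logHeight₁ p.1 ≤
    Real.log (L * archSize p₀.1) + Real.log 8 + Real.log |(n : ℝ)| := by
  obtain ⟨g, hg, -⟩ := hT.den p hp
  have hL : (L : ℝ) ≠ 0 := Nat.cast_ne_zero.2 hT.ne_zero
  have hden : Real.log p.1.den ≤ Real.log L := Real.log_le_log (Nat.cast_pos.2 p.1.den_pos)
    (Nat.cast_le.2 (Nat.le_of_dvd (Nat.pos_of_ne_zero hT.ne_zero) ⟨g, hg⟩))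
  rw [logHeight₁_eq_log_den_add,
    Real.log_mul hL (zero_lt_one.trans_le (one_le_archSize p₀.1)).ne']
  linarith [hT.log_archSize_le hn hp₀ hp]

lemma le_logHeight₁ : 15 / 16 * Real.log (L * archSize p₀.1) - Real.log 8 - Real.log |(n : ℝ)| ≤
    logHeight₁ p.1 := by
  obtain ⟨g, hg, hg16⟩ := hT.den p hp
  have hg0 : g ≠ 0 := fun h0 ↦ hT.ne_zero (by rw [hg, h0, mul_zero])
  have hL : (L : ℝ) ≠ 0 := Nat.cast_ne_zero.2 hT.ne_zero
  have hlog : Real.log L = Real.log p.1.den + Real.log g := by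
    rw [hg, Nat.cast_mul, Real.log_mul (Nat.cast_ne_zero.2 p.1.den_ne_zero)
      (Nat.cast_ne_zero.2 hg0)]
  have hlog16 : 16 * Real.log g ≤ Real.log L := by
    have := Real.log_le_log (x := (g : ℝ) ^ 16) (y := L) (by positivity) (by exact_mod_cast hg16)
    rwa [Real.log_pow, Nat.cast_ofNat] at this
  rw [logHeight₁_eq_log_den_add,
    Real.log_mul hL (zero_lt_one.trans_le (one_le_archSize p₀.1)).ne']
  linarith [hT.log_archSize_le hn hp hp₀, Real.log_nonneg (one_le_archSize p₀.1)]

end Height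

lemma naiveHeight_add_le (hT : IsCluster n T L) (hn : (n : ℚ) ≠ 0) (hp₀ : p₀ ∈ T) (hp : p ∈ T)
    (hq : q ∈ T) (hpq : p ≠ q) :
    naiveHeight (point hn p.1 p.2 (hT.equation p hp) + point hn q.1 q.2 (hT.equation q hq)) ≤
      9 * Real.log (L * archSize p₀.1) + 12 * Real.log 8 + 10 * Real.log |(n : ℝ)| := by
  have hn0 : n ≠ 0 := Int.cast_ne_zero.1 hn
  have hn1 : 1 ≤ |(n : ℝ)| := by exact_mod_cast Int.one_le_abs hn0
  have hL1 : (1 : ℝ) ≤ L := by exact_mod_cast Nat.one_le_iff_ne_zero.2 hT.ne_zero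
  have hX := one_le_archSize p₀.1
  obtain hx | hx := eq_or_ne p.1 q.1
  · have hy : p.2 = -q.2 := (eq_or_eq_neg_of_X_eq (hx ▸ hT.equation p hp)
      (hT.equation q hq)).resolve_left fun hy ↦ hpq (Prod.ext hx hy)
    rw [point_congr hn hx rfl (h' := hx ▸ hT.equation p hp),
      point_add_point_of_Y_eq_neg hn (by rw [hy, neg_neg]), naiveHeight_zero]
    have := Real.log_nonneg (one_le_mul_of_one_le_of_one_le hL1 hX)
    have := Real.log_nonneg hn1
    positivity
  have hl : (p.2 - q.2) / (p.1 - q.1) * (p.1 - q.1) = p.2 - q.2 :=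
    div_mul_cancel₀ _ (sub_ne_zero.2 hx)
  have hthird := chord_third_point (hT.equation p hp) (hT.equation q hq) hx hl
  rw [point_add_point_of_chord hn hx hl rfl rfl (h₃ := hthird)]
  refine (naiveHeight_point_le hn hthird).trans ?_
  obtain ⟨g₁, hg₁, -⟩ := hT.den p hp
  obtain ⟨g₂, hg₂, -⟩ := hT.den q hq
  have hnB : |(n : ℝ)| ≤ 8 * |(n : ℝ)| * archSize p₀.1 := by nlinarith
  have hheight := logHeight₁_chord_le (hT.equation p hp) (hT.equation q hq) hx hl hT.ne_zero
    ⟨g₁, hg₁⟩ ⟨g₂, hg₂⟩ (hn1.trans hnB) hnB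
    ((abs_le_archSize _).trans (hT.archSize_le p₀ hp₀ p hp))
    ((abs_le_archSize _).trans (hT.archSize_le p₀ hp₀ q hq))
  rw [Real.log_mul (by positivity) (by positivity), Real.log_mul (by positivity) (by positivity)]
    at hheight
  rw [logHeight₁_intCast hn0, Real.log_mul (by positivity) (by positivity)]
  linarith

section CanonicalHeight

variable (hT : IsCluster n T L) (hn : (n : ℚ) ≠ 0) {g : (mordell (n : ℚ)).Point → ℝ} {D : ℝ}
  (hgD : ∀ P, |g P - naiveHeight P| ≤ D)
include hT hn hgD

lemma canonicalHeight_le (hp₀ : p₀ ∈ T) (hp : p ∈ T) :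
    g (point hn p.1 p.2 (hT.equation p hp)) ≤
      3 * Real.log (L * archSize p₀.1) + 4 * (Real.log |(n : ℝ)| + D + Real.log 8) := by
  have hn0 : n ≠ 0 := Int.cast_ne_zero.1 hn
  have hD := (abs_nonneg _).trans (hgD 0)
  have hnaive := naiveHeight_point_le hn (hT.equation p hp)
  rw [logHeight₁_intCast hn0] at hnaive
  linarith [hT.logHeight₁_le hn0 hp₀ hp, abs_le.1 (hgD (point hn p.1 p.2 (hT.equation p hp))),
    Real.log_nonneg (by norm_num : (1 : ℝ) ≤ 8)]

lemma le_canonicalHeight (hp₀ : p₀ ∈ T) (hp : p ∈ T) :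
    45 / 16 * Real.log (L * archSize p₀.1) - 4 * (Real.log |(n : ℝ)| + D + Real.log 8) ≤
      g (point hn p.1 p.2 (hT.equation p hp)) := by
  have hn0 : n ≠ 0 := Int.cast_ne_zero.1 hn
  have hD := (abs_nonneg _).trans (hgD 0)
  have hnaive := three_mul_logHeight₁_le hn (hT.equation p hp)
  rw [logHeight₁_intCast hn0] at hnaive
  linarith [hT.le_logHeight₁ hn0 hp₀ hp, abs_le.1 (hgD (point hn p.1 p.2 (hT.equation p hp))),
    Real.log_nonneg (by norm_num : (1 : ℝ) ≤ 8)]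

-- `g(P - Q) = 2g(P) + 2g(Q) - g(P + Q)`, and the height of `P + Q` is at most about `9M` rather
-- than the generic `12M` because both points have nearly the same denominator.
lemma le_canonicalHeight_sub (hg : IsCanonicalHeight g) (hp₀ : p₀ ∈ T) (hp : p ∈ T) (hq : q ∈ T)
    (hpq : p ≠ q) :
    9 / 4 * Real.log (L * archSize p₀.1) - 28 * (Real.log |(n : ℝ)| + D + Real.log 8) ≤
      g (point hn p.1 p.2 (hT.equation p hp) - point hn q.1 q.2 (hT.equation q hq)) := by
  have hn1 : 1 ≤ |(n : ℝ)| := by exact_mod_cast Int.one_le_abs (Int.cast_ne_zero.1 hn)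
  have hD := (abs_nonneg _).trans (hgD 0)
  linarith [hT.naiveHeight_add_le hn hp₀ hp hq hpq, hT.le_canonicalHeight hn hgD hp₀ hp,
    hT.le_canonicalHeight hn hgD hp₀ hq, Real.log_nonneg hn1,
    hg.parallelogram (point hn p.1 p.2 (hT.equation p hp)) (point hn q.1 q.2 (hT.equation q hq)),
    abs_le.1 (hgD (point hn p.1 p.2 (hT.equation p hp) + point hn q.1 q.2 (hT.equation q hq)))]

-- If the height `M` of the cluster is large, its points are well separated; otherwise they are all
-- small.
lemma card_le_index_pow_or_card_le_ncard [(threeMultiples (mordell (n : ℚ)).Point).FiniteIndex]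
    (hg : IsCanonicalHeight g) :
    T.card ≤ (threeMultiples (mordell (n : ℚ)).Point).index ^ 5 ∨
      T.card ≤ {P | g P ≤ 340 * (Real.log |(n : ℝ)| + D + Real.log 8)}.ncard := by
  classical
  rcases T.eq_empty_or_nonempty with rfl | ⟨p₀, hp₀⟩
  · simp
  have hn1 : 1 ≤ |(n : ℝ)| := by exact_mod_cast Int.one_le_abs (Int.cast_ne_zero.1 hn)
  have hE : 0 < Real.log |(n : ℝ)| + D + Real.log 8 := by
    have hD := (abs_nonneg _).trans (hgD 0)
    have := Real.log_nonneg hn1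
    positivity
  have hle := fun p : T ↦ hT.canonicalHeight_le hn hgD hp₀ p.2
  have hsub := fun p q : T ↦ hT.le_canonicalHeight_sub hn hgD hg hp₀ p.2 q.2
  set φ : T → (mordell (n : ℚ)).Point := fun p ↦ point hn p.1.1 p.1.2 (hT.equation p p.2)
  have hφ : Function.Injective φ := fun p q h ↦
    Subtype.ext (Prod.ext_iff.2 ((point_inj hn).1 h))
  rw [← Fintype.card_coe T, ← Finset.card_univ, ← Finset.card_image_of_injective _ hφ]
  set M := Real.log (L * archSize p₀.1)
  rcases le_or_gt (112 * (Real.log |(n : ℝ)| + D + Real.log 8)) M with hM | hM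
  · refine Or.inl (hg.card_le_index_pow (M := M) ?_ ?_ (by linarith))
    · simp only [Finset.forall_mem_image]
      exact fun p _ ↦ (hle p).trans (by linarith)
    · simp only [Finset.forall_mem_image]
      exact fun p _ q _ hpq ↦
        le_trans (by linarith) (hsub p q fun h ↦ hpq (congrArg φ (Subtype.ext h)))
  · rw [Set.ncard_eq_toFinset_card _ (hg.finite_le _)]
    refine Or.inr (Finset.card_le_card (Finset.image_subset_iff.2 fun p _ ↦ ?_))
    rw [Set.Finite.mem_toFinset]
    exact (hle p).trans (by linarith)

end CanonicalHeight

end IsCluster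

theorem exists_card_le_mul_index_pow : ∃ K : ℕ, ∀ n : ℤ, SixthPowerFree n →
    ∀ [(threeMultiples (mordell (n : ℚ)).Point).FiniteIndex] (T : Finset (ℚ × ℚ)) (L : ℕ),
      IsCluster n T L →
        T.card ≤ K * (threeMultiples (mordell (n : ℚ)).Point).index ^ 13 := by
  obtain ⟨D, hD⟩ := exists_forall_isCanonicalHeight ℚ
  obtain ⟨K, hK⟩ := exists_ncard_naiveHeight_le (κ := 1 / 60) (by norm_num)
    (1 / 60 * (D + Real.log 8) + D)
  refine ⟨K + 1, fun n hn _ T L hT ↦ ?_⟩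
  have hn0 : (n : ℚ) ≠ 0 := Int.cast_ne_zero.2 hn.1
  obtain ⟨g, hg, hgD⟩ := hD n hn0
  set S := (threeMultiples (mordell (n : ℚ)).Point).index
  have hS : 1 ≤ S := Nat.one_le_iff_ne_zero.2 AddSubgroup.FiniteIndex.index_ne_zero
  rcases hT.card_le_index_pow_or_card_le_ncard hn0 hgD hg with hcard | hcard
  · calc T.card ≤ S ^ 5 := hcard
      _ ≤ S ^ 13 := Nat.pow_le_pow_right hS (by norm_num)
      _ ≤ (K + 1) * S ^ 13 := Nat.le_mul_of_pos_left _ K.succ_pos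
  · have hn1 : 1 ≤ |(n : ℝ)| := by exact_mod_cast Int.one_le_abs hn.1
    have hball : {P | g P ≤ (4 / 9) ^ 13 * (340 * (Real.log |(n : ℝ)| + D + Real.log 8))} ⊆
        {P | naiveHeight P ≤ 1 / 60 * Real.log |(n : ℝ)| + (1 / 60 * (D + Real.log 8) + D)} := by
      intro P (hP : g P ≤ _)
      have hD0 := (abs_nonneg _).trans (hgD 0)
      have hE : 0 ≤ Real.log |(n : ℝ)| + D + Real.log 8 := by
        have := Real.log_nonneg hn1
        positivity
      change naiveHeight P ≤ _
      linarith [abs_le.1 (hgD P)]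
    calc T.card ≤ _ := hcard
      _ ≤ S ^ 13 * _ := hg.ncard_ball_le_pow _ 13
      _ ≤ S ^ 13 * K := Nat.mul_le_mul_left _
        ((Set.ncard_le_ncard hball (finite_naiveHeight_le hn0 _)).trans (hK n hn))
      _ ≤ (K + 1) * S ^ 13 := by rw [mul_comm]; exact Nat.mul_le_mul_right _ K.le_succ

end Cluster

/-! ### Arithmetic progressions of coordinates -/

section Progression

open Finset

variable {N : ℕ}

lemma injective_of_isNontrivAP {F : Type*} [Field F] [CharZero F] {z : Fin N → F}
    (hz : IsNontrivAP z) : Function.Injective z := by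
  obtain ⟨a, b, hb, hz⟩ := hz
  intro i j hij
  rw [hz, hz] at hij
  have := Nat.cast_injective (mul_right_cancel₀ hb (add_left_cancel hij))
  exact Fin.ext (Nat.succ_injective this)

lemma exists_den_eq_pow {x y : ℚ} {n : ℤ} (h : y ^ 2 = x ^ 3 + n) :
    ∃ d : ℕ, x.den = d ^ 2 ∧ y.den = d ^ 3 := by
  refine Nat.exists_eq_pow_of_exponent_coprime_of_pow_eq_pow rfl ?_
  rw [← Rat.den_pow, ← Rat.den_pow, h, Rat.add_intCast_den]

-- A second multiple of `p` forces a multiple `p` steps away; their difference is then divisible by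
-- `p²`, so that `p` divides the common difference.
lemma eq_of_dvd_of_forall_dvd_sq {p : ℕ} (hp : p.Prime) {w : Fin N → ℤ} {b : ℤ}
    (hw : ∀ i j, w i - w j = ((i : ℕ) - (j : ℕ) : ℤ) * b)
    (hsq : ∀ i, (p : ℤ) ∣ w i → (p : ℤ) ^ 2 ∣ w i) {k : Fin N} (hk : ¬(p : ℤ) ∣ w k) {i j : Fin N}
    (hi : (p : ℤ) ∣ w i) (hj : (p : ℤ) ∣ w j) : i = j := by
  wlog hij : i ≤ j generalizing i j
  · exact (this hj hi (le_of_not_ge hij)).symm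
  by_contra hne
  have : (i : ℕ) < j := lt_of_le_of_ne hij (Fin.val_ne_of_ne hne)
  have hpb : ¬(p : ℤ) ∣ b := fun hpb ↦ hk ((dvd_iff_dvd_of_dvd_sub (by
    rw [hw]; exact hpb.mul_left _)).2 hi)
  have hpij : (p : ℤ) ∣ (j : ℕ) - (i : ℕ) :=
    ((Nat.prime_iff_prime_int.1 hp).dvd_or_dvd (hw j i ▸ dvd_sub hj hi)).resolve_right hpb
  have hple : (p : ℤ) ≤ (j : ℕ) - (i : ℕ) := Int.le_of_dvd (by lia) hpij
  have hm := hw ⟨i + p, by lia⟩ i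
  rw [Nat.cast_add, add_sub_cancel_left] at hm
  have hpm : (p : ℤ) ∣ w ⟨i + p, by lia⟩ :=
    (dvd_iff_dvd_of_dvd_sub (hm ▸ dvd_mul_right _ _)).2 hi
  have hdvd : (p : ℤ) * p ∣ p * b := by
    rw [← hm, ← sq]
    exact dvd_sub (hsq _ hpm) (hsq _ hi)
  exact hpb (Int.dvd_of_mul_dvd_mul_left (by exact_mod_cast hp.ne_zero) hdvd)

lemma lcm_ne_zero {ι : Type*} [Fintype ι] {d : ι → ℕ} (hd : ∀ i, d i ≠ 0) : univ.lcm d ≠ 0 := by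
  simpa [Finset.lcm_eq_zero_iff] using hd

lemma exists_not_dvd_lcm_div {ι : Type*} [Fintype ι] {d : ι → ℕ} (hd : ∀ i, d i ≠ 0) {p : ℕ}
    (hp : p.Prime) (hpD : p ∣ univ.lcm d) : ∃ k, ¬p ∣ univ.lcm d / d k := by
  by_contra! hall
  have hdvd : univ.lcm d ∣ univ.lcm d / p := Finset.lcm_dvd fun i _ ↦ by
    refine (Nat.dvd_div_iff_mul_dvd hpD).2 ?_
    rw [mul_comm]
    exact (Nat.dvd_div_iff_mul_dvd (dvd_lcm (mem_univ i))).1 (hall i)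
  have hpos : 0 < univ.lcm d := Nat.pos_of_ne_zero (lcm_ne_zero hd)
  exact (Nat.div_lt_self hpos hp.one_lt).not_ge
    (Nat.le_of_dvd (Nat.div_pos (Nat.le_of_dvd hpos hpD) hp.pos) hdvd)

lemma natCast_dvd_pow_mul_num_iff {p : ℕ} (hp : p.Prime) {c : ℕ} (hc : c ≠ 0) {x : ℚ} {d r : ℕ}
    (hd : x.den = d ^ c) (hdr : p ∣ d * r) : (p : ℤ) ∣ (r : ℤ) ^ c * x.num ↔ p ∣ r := by
  have hp' := Nat.prime_iff_prime_int.1 hp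
  refine ⟨fun h ↦ by_contra fun hr ↦ ?_, fun h ↦
    ((Int.natCast_dvd_natCast.2 h).trans (dvd_pow_self _ hc)).mul_right _⟩
  have hden : p ∣ x.den := by
    rw [hd]
    exact ((hp.dvd_mul.1 hdr).resolve_right hr).trans (dvd_pow_self _ hc)
  rcases hp'.dvd_or_dvd h with h | h
  · exact hr (Int.natCast_dvd_natCast.1 (hp'.dvd_of_dvd_pow h))
  · exact Nat.Prime.not_coprime_iff_dvd.2 ⟨p, hp, Int.natCast_dvd.1 h, hden⟩ x.reduced

lemma coprime_lcm_div_of_isNontrivAP {c : ℕ} (hc : 2 ≤ c) {z : Fin N → ℚ} (hz : IsNontrivAP z)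
    {d : Fin N → ℕ} (hd : ∀ i, (z i).den = d i ^ c) {i j : Fin N} (hij : i ≠ j) :
    Nat.Coprime (univ.lcm d / d i) (univ.lcm d / d j) := by
  have hd0 (i) : d i ≠ 0 := fun h0 ↦
    (z i).den_ne_zero (by rw [hd, h0, zero_pow (by lia)])
  set D := univ.lcm d
  set r : Fin N → ℕ := fun i ↦ D / d i
  have hr (k) : d k * r k = D := Nat.mul_div_cancel' (dvd_lcm (mem_univ k))
  by_contra hcop
  obtain ⟨p, hp, hpi, hpj⟩ := Nat.Prime.not_coprime_iff_dvd.1 hcop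
  have hpD : p ∣ D := hr i ▸ hpi.mul_left _
  obtain ⟨k, hk⟩ := exists_not_dvd_lcm_div hd0 hp hpD
  let w : Fin N → ℤ := fun k ↦ (r k : ℤ) ^ c * (z k).num
  have hw (k) : (w k : ℚ) = D ^ c * z k := by
    have hden : (d k : ℚ) ^ c = (z k).den := by exact_mod_cast (hd k).symm
    rw [← hr k, Nat.cast_mul, mul_pow, hden, mul_right_comm, mul_comm ((z k).den : ℚ),
      Rat.mul_den_eq_num, mul_comm]
    simp [w]
  have hpw (k) : (p : ℤ) ∣ w k ↔ p ∣ r k :=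
    natCast_dvd_pow_mul_num_iff hp (by lia) (hd k) (hr k ▸ hpD)
  obtain ⟨b, hb⟩ : ∃ b : ℤ, ∀ i j, w i - w j = ((i : ℕ) - (j : ℕ) : ℤ) * b := by
    obtain ⟨a, b, -, hz⟩ := hz
    have hN : 1 < N := by lia
    refine ⟨w ⟨1, hN⟩ - w ⟨0, by lia⟩, fun i j ↦ ?_⟩
    qify
    rw [hw, hw, hw, hw, hz, hz, hz ⟨1, hN⟩, hz ⟨0, by lia⟩]
    push_cast
    ring
  refine hij (eq_of_dvd_of_forall_dvd_sq hp hb (fun k hk ↦ ?_) ((hpw k).not.2 hk) ((hpw i).2 hpi)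
    ((hpw j).2 hpj))
  exact ((pow_dvd_pow_of_dvd (Int.natCast_dvd_natCast.2 ((hpw k).1 hk)) 2).trans
    (pow_dvd_pow _ hc)).mul_right _

lemma card_filter_lt_pow_lt {ι : Type*} [Fintype ι] {D : ℕ} (hD : D ≠ 0) {r : ι → ℕ}
    (hr : ∀ i, r i ∣ D) (hcop : Pairwise fun i j ↦ Nat.Coprime (r i) (r j)) {m : ℕ} (hm : m ≠ 0) :
    #{i | D < r i ^ m} < m := by
  by_contra! hcard
  set E : Finset ι := {i | D < r i ^ m}
  have hprod : ∏ i ∈ E, r i ≤ D := Nat.le_of_dvd (Nat.pos_of_ne_zero hD)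
    (Finset.prod_dvd_of_isRelPrime (fun i _ j _ hij ↦ Nat.coprime_iff_isRelPrime.1 (hcop hij))
      fun i _ ↦ hr i)
  have hlt : D ^ #E < D ^ m := calc
    D ^ #E = ∏ _i ∈ E, D := (prod_const D).symm
    _ < ∏ i ∈ E, r i ^ m := Finset.prod_lt_prod_of_nonempty (fun _ _ ↦ Nat.pos_of_ne_zero hD)
      (fun i hi ↦ (mem_filter.1 hi).2) (card_pos.1 (by lia))
    _ = (∏ i ∈ E, r i) ^ m := prod_pow _ _ _
    _ ≤ D ^ m := Nat.pow_le_pow_left hprod m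
  exact hlt.not_ge (Nat.pow_le_pow_right (Nat.pos_of_ne_zero hD) hcard)

section Large

variable {F : Type*} [Field F] [LinearOrder F] [IsStrictOrderedRing F] {z : Fin N → F}

lemma abs_le_five_mul_max_abs (hz : IsNontrivAP z) {i₁ i₂ : Fin N} {m : ℕ}
    (hm : (i₂ : ℕ) = i₁ + m) (hN : N ≤ 2 * m + 1) (j : Fin N) :
    |z j| ≤ 5 * max |z i₁| |z i₂| := by
  obtain ⟨a, b, -, hz⟩ := hz
  have hstep : z i₂ - z i₁ = m * b := by
    rw [hz, hz, hm]
    push_cast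
    ring
  have hmb : m * |b| ≤ 2 * max |z i₁| |z i₂| := by
    rw [← Nat.abs_cast m, ← abs_mul, ← hstep]
    linarith [abs_sub (z i₂) (z i₁), le_max_left |z i₁| |z i₂|, le_max_right |z i₁| |z i₂|]
  have hj : z j = z i₁ + ((j : ℕ) - (i₁ : ℕ) : F) * b := by
    rw [hz, hz]
    push_cast
    ring
  have hdist : |((j : ℕ) - (i₁ : ℕ) : F)| ≤ 2 * m := by
    have hjm : ((j : ℕ) : F) ≤ 2 * m := by exact_mod_cast (by lia : (j : ℕ) ≤ 2 * m)
    have him : ((i₁ : ℕ) : F) ≤ 2 * m := by exact_mod_cast (by lia : (i₁ : ℕ) ≤ 2 * m)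
    exact abs_le.2 ⟨by linarith [(j : ℕ).cast_nonneg (α := F)],
      by linarith [(i₁ : ℕ).cast_nonneg (α := F)]⟩
  calc |z j| ≤ |z i₁| + |((j : ℕ) - (i₁ : ℕ) : F)| * |b| := by
        rw [hj, ← abs_mul]
        exact abs_add_le _ _
    _ ≤ |z i₁| + 2 * m * |b| := by gcongr
    _ ≤ 5 * max |z i₁| |z i₂| := by linarith [le_max_left |z i₁| |z i₂|]

-- Of any two terms at distance `N / 2`, one is comparable to the largest term.
lemma le_two_mul_card_filter_abs_le (hz : IsNontrivAP z) :
    N ≤ 2 * #{i | ∀ j, |z j| ≤ 5 * |z i|} + 1 := by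
  set m := N / 2
  have hlarge (i : Fin m) : ∃ k : Fin N, (∀ j, |z j| ≤ 5 * |z k|) ∧
      ((k : ℕ) = i ∨ (k : ℕ) = i + m) := by
    have hi : (i : ℕ) < N := by lia
    have him : (i : ℕ) + m < N := by lia
    have hmax := abs_le_five_mul_max_abs hz (i₁ := ⟨i, hi⟩) (i₂ := ⟨i + m, him⟩) rfl (by lia)
    rcases le_total |z ⟨i + m, him⟩| |z ⟨i, hi⟩| with hle | hle
    · exact ⟨⟨i, hi⟩, by simpa only [max_eq_left hle] using hmax, Or.inl rfl⟩
    · exact ⟨⟨i + m, him⟩, by simpa only [max_eq_right hle] using hmax, Or.inr rfl⟩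
  choose f hf hfi using hlarge
  have hinj : Function.Injective f := fun i j hij ↦ by
    have hi := hfi i
    have hj := hfi j
    rw [hij] at hi
    exact Fin.ext (by lia)
  have hcard := Finset.card_le_card_of_injOn (s := univ) (t := {i | ∀ j, |z j| ≤ 5 * |z i|}) f
    (fun i _ ↦ by simpa using hf i) hinj.injOn
  rw [card_univ, Fintype.card_fin] at hcard
  lia

end Large

section ArchSize

variable {n : ℤ} {x₁ y₁ x₂ y₂ : ℚ}

lemma archSize_le_of_abs_X_le (hn : n ≠ 0) (h : |x₂| ≤ 5 * |x₁|) :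
    archSize x₂ ≤ 8 * |(n : ℝ)| * archSize x₁ := by
  have hn1 : 1 ≤ |(n : ℝ)| := by exact_mod_cast Int.one_le_abs hn
  have hX := one_le_archSize x₁
  have hx : |(x₂ : ℝ)| ≤ 5 * |(x₁ : ℝ)| := by exact_mod_cast h
  have hle : 8 * 1 * archSize x₁ ≤ 8 * |(n : ℝ)| * archSize x₁ := by gcongr
  exact max_le (by linarith [abs_le_archSize x₁]) (by linarith)

lemma archSize_le_of_abs_Y_le (hn : n ≠ 0) (h₁ : y₁ ^ 2 = x₁ ^ 3 + n) (h₂ : y₂ ^ 2 = x₂ ^ 3 + n)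
    (h : |y₂| ≤ 5 * |y₁|) : archSize x₂ ≤ 8 * |(n : ℝ)| * archSize x₁ := by
  have hn1 : 1 ≤ |(n : ℝ)| := by exact_mod_cast Int.one_le_abs hn
  have hX := one_le_archSize x₁
  have hX3 : 1 ≤ archSize x₁ ^ 3 := one_le_pow₀ hX
  have h₁' : (y₁ : ℝ) ^ 2 = x₁ ^ 3 + n := by exact_mod_cast h₁
  have h₂' : (y₂ : ℝ) ^ 2 = x₂ ^ 3 + n := by exact_mod_cast h₂
  have hy : (y₂ : ℝ) ^ 2 ≤ 25 * (y₁ : ℝ) ^ 2 := by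
    have hsq := pow_le_pow_left₀ (abs_nonneg _) h 2
    rw [mul_pow, sq_abs, sq_abs] at hsq
    norm_num at hsq
    exact_mod_cast hsq
  have hx₁ : (x₁ : ℝ) ^ 3 ≤ archSize x₁ ^ 3 := by
    refine (le_abs_self _).trans ?_
    rw [abs_pow]
    exact pow_le_pow_left₀ (abs_nonneg _) (abs_le_archSize x₁) 3
  have hx₂ : |(x₂ : ℝ)| ^ 3 ≤ (y₂ : ℝ) ^ 2 + |(n : ℝ)| := by
    rw [← abs_pow, show (x₂ : ℝ) ^ 3 = y₂ ^ 2 - n by rw [h₂']; ring]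
    exact (abs_sub _ _).trans_eq (by rw [abs_sq])
  have hcube : |(x₂ : ℝ)| ^ 3 ≤ (8 * |(n : ℝ)| * archSize x₁) ^ 3 := calc
    |(x₂ : ℝ)| ^ 3 ≤ 25 * archSize x₁ ^ 3 + 26 * |(n : ℝ)| := by linarith [le_abs_self (n : ℝ)]
    _ ≤ 51 * (|(n : ℝ)| * archSize x₁ ^ 3) := by nlinarith
    _ ≤ 8 ^ 3 * (|(n : ℝ)| ^ 3 * archSize x₁ ^ 3) := by
      gcongr
      · norm_num
      · exact le_self_pow₀ hn1 (by norm_num)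
    _ = (8 * |(n : ℝ)| * archSize x₁) ^ 3 := by ring
  refine max_le (le_of_pow_le_pow_left₀ (by norm_num) (by positivity) hcube) ?_
  have hle : 8 * 1 * 1 ≤ 8 * |(n : ℝ)| * archSize x₁ := by gcongr
  linarith

end ArchSize

section Points

variable {n : ℤ} {x y : Fin N → ℚ}

lemma exists_le_card_forall_archSize_le (hn : n ≠ 0) (h : ∀ i, y i ^ 2 = x i ^ 3 + n)
    (hap : IsNontrivAP x ∨ IsNontrivAP y) :
    ∃ G : Finset (Fin N), N ≤ 2 * #G + 1 ∧
      ∀ i ∈ G, ∀ j, archSize (x j) ≤ 8 * |(n : ℝ)| * archSize (x i) := by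
  rcases hap with hx | hy
  · exact ⟨_, le_two_mul_card_filter_abs_le hx, fun i hi j ↦
      archSize_le_of_abs_X_le hn ((mem_filter.1 hi).2 j)⟩
  · exact ⟨_, le_two_mul_card_filter_abs_le hy, fun i hi j ↦
      archSize_le_of_abs_Y_le hn (h i) (h j) ((mem_filter.1 hi).2 j)⟩

lemma exists_isCluster_of_isNontrivAP (hn : n ≠ 0) (h : ∀ i, y i ^ 2 = x i ^ 3 + n)
    (hap : IsNontrivAP x ∨ IsNontrivAP y) : ∃ T L, IsCluster n T L ∧ N ≤ 2 * #T + 31 := by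
  classical
  choose d hdx hdy using fun i ↦ exists_den_eq_pow (h i)
  have hd0 (i) : d i ≠ 0 := fun h0 ↦ (x i).den_ne_zero (by rw [hdx, h0, zero_pow two_ne_zero])
  set D := univ.lcm d
  have hD : D ≠ 0 := lcm_ne_zero hd0
  have hr (i) : d i * (D / d i) = D := Nat.mul_div_cancel' (dvd_lcm (mem_univ i))
  have hcop : Pairwise fun i j ↦ Nat.Coprime (D / d i) (D / d j) := fun i j hij ↦ by
    rcases hap with hx | hy
    · exact coprime_lcm_div_of_isNontrivAP le_rfl hx hdx hij
    · exact coprime_lcm_div_of_isNontrivAP (by norm_num) hy hdy hij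
  have hinj : Function.Injective fun i ↦ (x i, y i) := fun i j hij ↦ by
    rcases hap with hx | hy
    · exact injective_of_isNontrivAP hx (congrArg Prod.fst hij)
    · exact injective_of_isNontrivAP hy (congrArg Prod.snd hij)
  have hfew := card_filter_lt_pow_lt hD (fun i ↦ Dvd.intro_left _ (hr i)) hcop
    (show 16 ≠ 0 by norm_num)
  set E : Finset (Fin N) := {i | D < (D / d i) ^ 16}
  obtain ⟨G, hGcard, hG⟩ := exists_le_card_forall_archSize_le hn h hap
  refine ⟨(G \ E).image fun i ↦ (x i, y i), D ^ 2, ⟨pow_ne_zero 2 hD, ?_, ?_, ?_⟩, ?_⟩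
  · simpa only [forall_mem_image] using fun i _ ↦ h i
  · simp only [forall_mem_image]
    refine fun i hi ↦ ⟨(D / d i) ^ 2, by rw [hdx i, ← mul_pow, hr], ?_⟩
    have hiE : (D / d i) ^ 16 ≤ D := by simpa [E] using (mem_sdiff.1 hi).2
    rw [pow_right_comm]
    exact Nat.pow_le_pow_left hiE 2
  · simp only [forall_mem_image]
    exact fun i hi j _ ↦ hG i (mem_sdiff.1 hi).1 j
  · rw [card_image_of_injective _ hinj]
    have := le_card_sdiff E G
    lia

end Points

theorem exists_max_betaX_betaY_le : ∃ K : ℕ, ∀ n : ℤ, SixthPowerFree n →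
    ∀ [(threeMultiples (mordell (n : ℚ)).Point).FiniteIndex],
      max (betaX (MordellCurve n)) (betaY (MordellCurve n)) ≤
        (K * (threeMultiples (mordell (n : ℚ)).Point).index ^ 13 : ℕ) := by
  obtain ⟨K, hK⟩ := exists_card_le_mul_index_pow
  refine ⟨2 * K + 31, fun n hn _ ↦ ?_⟩
  set S := (threeMultiples (mordell (n : ℚ)).Point).index
  have hle (N : ℕ) (x y : Fin N → ℚ) (h : ∀ i, (mordell (n : ℚ)).Nonsingular (x i) (y i))
      (hap : IsNontrivAP x ∨ IsNontrivAP y) : N ≤ (2 * K + 31) * S ^ 13 := by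
    obtain ⟨T, L, hT, hN⟩ := exists_isCluster_of_isNontrivAP hn.1
      (fun i ↦ (nonsingular_mordell_iff (Int.cast_ne_zero.2 hn.1) _ _).1 (h i)) hap
    have hS : 1 ≤ S ^ 13 := Nat.one_le_pow _ _
      (Nat.pos_of_ne_zero AddSubgroup.FiniteIndex.index_ne_zero)
    linarith [hK n hn T L hT]
  refine max_le (iSup₂_le ?_) (iSup₂_le ?_)
  · rintro N ⟨x, y, h, hx⟩
    exact_mod_cast hle N x y h (Or.inl hx)
  · rintro N ⟨x, y, h, hy⟩
    exact_mod_cast hle N x y h (Or.inr hy)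

end Progression

/-! ### Cosets of the image of the three-isogeny -/

section Collinear

variable {F : Type*} [Field F] {x₁ x₂ x₃ y₁ y₂ y₃ l m w z₁ z₂ : F}

lemma prod_add_eq_cube_of_collinear (hsum : x₁ + x₂ + x₃ = l ^ 2)
    (hpairs : x₁ * x₂ + x₃ * (x₁ + x₂) = -2 * l * m) (hprod : x₁ * x₂ * x₃ = m ^ 2 - w ^ 2) :
    (l * x₁ + m + w) * (l * x₂ + m + w) * (l * x₃ + m + w) = (m + w) ^ 3 := by
  linear_combination l ^ 3 * hprod + l ^ 2 * (m + w) * hpairs + l * (m + w) ^ 2 * hsum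

lemma exists_add_eq_cube_of_prod_eq_cube (hcube : (y₁ + w) * (-y₂ + w) * (-y₃ + w) = (m + w) ^ 3)
    (hprod : x₁ * x₂ * x₃ = m ^ 2 - w ^ 2) (h₂ : y₂ ^ 2 = x₂ ^ 3 + w ^ 2)
    (h₃ : y₃ ^ 2 = x₃ ^ 3 + w ^ 2) (hx₁ : x₁ ≠ 0) (hx₂ : x₂ ≠ 0) (hx₃ : x₃ ≠ 0) (hz₁ : z₁ ≠ 0)
    (hz₂ : z₂ ≠ 0) (hz : (y₁ + w) * z₁ ^ 3 = (y₂ + w) * z₂ ^ 3) : ∃ z ≠ 0, y₃ + w = z ^ 3 := by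
  have hm : m + w ≠ 0 := fun hm ↦ mul_ne_zero (mul_ne_zero hx₁ hx₂) hx₃ (by
    linear_combination hprod + (m - w) * hm)
  have hkey : ((m + w) * z₁) ^ 3 * (y₃ + w) = (z₂ * x₂ * x₃) ^ 3 := by
    linear_combination (-z₁ ^ 3 * (y₃ + w)) * hcube + (-y₂ + w) * (w ^ 2 - y₃ ^ 2) * hz -
      (w ^ 2 - y₃ ^ 2) * z₂ ^ 3 * h₂ + z₂ ^ 3 * x₂ ^ 3 * h₃
  refine ⟨z₂ * x₂ * x₃ / ((m + w) * z₁), by positivity, ?_⟩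
  rw [div_pow, ← hkey]
  field_simp

variable [CharZero F]

lemma exists_two_mul_eq_cube (hw : w ≠ 0) (hmul : (y₁ - w) * (y₂ + w) = -4 * w ^ 2)
    (h₁ : y₁ ^ 2 = x₁ ^ 3 + w ^ 2) (hx₁ : x₁ ≠ 0) (hz₁ : z₁ ≠ 0) (hz₂ : z₂ ≠ 0)
    (hz : (y₁ + w) * z₁ ^ 3 = (y₂ + w) * z₂ ^ 3) : ∃ z ≠ 0, w + w = z ^ 3 := by
  have hkey : (x₁ * z₁) ^ 3 = -4 * w ^ 2 * z₂ ^ 3 := by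
    linear_combination (y₁ - w) * hz + z₂ ^ 3 * hmul - z₁ ^ 3 * h₁
  refine ⟨-2 * w * z₂ / (x₁ * z₁), by simp [*], ?_⟩
  rw [div_pow, hkey]
  field_simp
  ring

lemma exists_add_eq_cube_of_collinear (hw : w ≠ 0) (h₁ : y₁ ^ 2 = x₁ ^ 3 + w ^ 2)
    (h₂ : y₂ ^ 2 = x₂ ^ 3 + w ^ 2) (h₃ : y₃ ^ 2 = x₃ ^ 3 + w ^ 2) (hl₁ : y₁ = l * x₁ + m)
    (hl₂ : -y₂ = l * x₂ + m) (hl₃ : -y₃ = l * x₃ + m) (hsum : x₁ + x₂ + x₃ = l ^ 2)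
    (hpairs : x₁ * x₂ + x₃ * (x₁ + x₂) = -2 * l * m) (hprod : x₁ * x₂ * x₃ = m ^ 2 - w ^ 2)
    (hx₁ : x₁ ≠ 0) (hx₂ : x₂ ≠ 0) (hz₁ : z₁ ≠ 0) (hz₂ : z₂ ≠ 0)
    (hz : (y₁ + w) * z₁ ^ 3 = (y₂ + w) * z₂ ^ 3) :
    ∃ w', (w' = w ∨ w' = -w) ∧ ∃ z ≠ 0, y₃ + w' = z ^ 3 := by
  have hcube := prod_add_eq_cube_of_collinear hsum hpairs hprod
  have hcube' := prod_add_eq_cube_of_collinear (w := -w) hsum hpairs (by rw [hprod, neg_sq])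
  rw [← hl₁, ← hl₂, ← hl₃] at hcube hcube'
  by_cases hx₃ : x₃ = 0
  swap
  · exact ⟨w, Or.inl rfl,
      exists_add_eq_cube_of_prod_eq_cube hcube hprod h₂ h₃ hx₁ hx₂ hx₃ hz₁ hz₂ hz⟩
  obtain rfl : m = -y₃ := by rw [hl₃, hx₃]; ring
  obtain rfl | rfl : y₃ = w ∨ y₃ = -w := sq_eq_sq_iff_eq_or_eq_neg.1 (by rw [h₃, hx₃]; ring)
  · refine ⟨y₃, Or.inl rfl, exists_two_mul_eq_cube hw ?_ h₁ hx₁ hz₁ hz₂ hz⟩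
    apply mul_left_cancel₀ hw
    linear_combination hcube' / 2
  · refine ⟨-w, Or.inr rfl, ?_⟩
    refine exists_two_mul_eq_cube (neg_ne_zero.2 hw) (y₁ := -y₂) (y₂ := -y₁) (x₁ := x₂) ?_
      (by rw [neg_sq, neg_sq, h₂]) hx₂ hz₂ hz₁ (by linear_combination hz)
    apply mul_left_cancel₀ hw
    linear_combination -hcube / 2

end Collinear

section QuadraticField

variable {c : ℚ} {F : Type*} [Field F] {w : F}

/-- `F = ℚ(w)` with `w² = c`. The field is `ℚ` itself when `c` is a square, so that the descent need
not distinguish the two cases. -/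
structure IsQuadraticGenerator (c : ℚ) (w : F) : Prop where
  sq_eq : w ^ 2 = c
  exists_eq (z : F) : ∃ s t : ℚ, z = s + t * w

lemma IsQuadraticGenerator.neg (hw : IsQuadraticGenerator c w) : IsQuadraticGenerator c (-w) where
  sq_eq := by rw [neg_sq, hw.sq_eq]
  exists_eq z := by
    obtain ⟨s, t, rfl⟩ := hw.exists_eq z
    exact ⟨s, -t, by push_cast; ring⟩

lemma exists_isQuadraticGenerator (c : ℚ) : ∃ (F : Type) (_ : Field F) (_ : CharZero F) (w : F),
    IsQuadraticGenerator c w := by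
  by_cases hsq : ∃ w : ℚ, w ^ 2 = c
  · obtain ⟨w, hw⟩ := hsq
    exact ⟨ℚ, inferInstance, inferInstance, w, by simpa using hw, fun z ↦ ⟨z, 0, by simp⟩⟩
  · push Not at hsq
    have : Fact (∀ r : ℚ, r ^ 2 ≠ c + 0 * r) := ⟨fun r ↦ by simpa using hsq r⟩
    have hcast (r : ℚ) : (r : QuadraticAlgebra ℚ c 0) = ⟨r, 0⟩ := by
      rw [← eq_ratCast (algebraMap ℚ (QuadraticAlgebra ℚ c 0))]
      rfl
    refine ⟨QuadraticAlgebra ℚ c 0, inferInstance, inferInstance, ⟨0, 1⟩, ?_, fun z ↦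
      ⟨z.re, z.im, ?_⟩⟩
    · ext <;> simp [sq, hcast]
    · ext <;> simp [hcast]

variable [CharZero F]

lemma IsQuadraticGenerator.ne_zero (hw : IsQuadraticGenerator c w) (hc : c ≠ 0) : w ≠ 0 := by
  rintro rfl
  refine hc (Rat.cast_injective (α := F) ?_)
  rw [← hw.sq_eq, zero_pow two_ne_zero, Rat.cast_zero]

lemma point_mem_range_threeIsogeny_of_sq_eq (hc : c ≠ 0) {x y w z : ℚ} (hw : w ^ 2 = c)
    (h : y ^ 2 = x ^ 3 + c) (hz0 : z ≠ 0) (hz : y + w = z ^ 3) :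
    point hc x y h ∈ (threeIsogeny hc).range := by
  have hw0 : w ≠ 0 := by rintro rfl; exact hc (by rw [← hw]; norm_num)
  have hconj : y - w = (x / z) ^ 3 := by
    rw [div_pow, eq_div_iff (by positivity), ← hz]
    linear_combination h - hw
  refine point_mem_range_threeIsogeny hc h (s := (z + x / z) / 2) (t := (z - x / z) / (2 * w)) ?_ ?_
  · rw [← hw]
    generalize x / z = r at hconj ⊢
    obtain rfl : y = (z ^ 3 + r ^ 3) / 2 := by linear_combination (hz + hconj) / 2
    field_simp
    ring
  · rw [← hw]
    generalize x / z = r at hconj ⊢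
    field_simp
    linear_combination 4 * hz - 4 * hconj

lemma IsQuadraticGenerator.point_mem_range (hc : c ≠ 0) (hw : IsQuadraticGenerator c w) {x y : ℚ}
    (h : y ^ 2 = x ^ 3 + c) {z : F} (hz0 : z ≠ 0) (hz : y + w = z ^ 3) :
    point hc x y h ∈ (threeIsogeny hc).range := by
  obtain ⟨s, t, rfl⟩ := hw.exists_eq z
  by_cases hrat : ∃ w₀ : ℚ, (w₀ : F) = w
  · obtain ⟨w₀, rfl⟩ := hrat
    exact point_mem_range_threeIsogeny_of_sq_eq hc (w := w₀) (z := s + t * w₀)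
      (by exact_mod_cast hw.sq_eq) h (by exact_mod_cast hz0) (by exact_mod_cast hz)
  have hexpand : ((y - (s ^ 3 + 3 * s * t ^ 2 * c) : ℚ) : F) =
      (3 * s ^ 2 * t + t ^ 3 * c - 1 : ℚ) * w := by
    push_cast
    linear_combination hz + (3 * s * t ^ 2 + t ^ 3 * w : F) * hw.sq_eq
  have him : 3 * s ^ 2 * t + t ^ 3 * c - 1 = 0 := by
    by_contra hne
    have hneF : ((3 * s ^ 2 * t + t ^ 3 * c - 1 : ℚ) : F) ≠ 0 := Rat.cast_ne_zero.2 hne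
    refine hrat ⟨(y - (s ^ 3 + 3 * s * t ^ 2 * c)) / (3 * s ^ 2 * t + t ^ 3 * c - 1), ?_⟩
    rw [Rat.cast_div, hexpand, mul_div_cancel_left₀ _ hneF]
  rw [him, Rat.cast_zero, zero_mul, Rat.cast_eq_zero] at hexpand
  exact point_mem_range_threeIsogeny hc h (sub_eq_zero.1 hexpand) (sub_eq_zero.1 him).symm

end QuadraticField

/-- The element `v + a√c` of `ℚ[√c]` is the product of `y + √c` and a cube. For a point `(x, y)` of
`y² = x³ + c` with `x ≠ 0` it represents the class of `y + √c` modulo cubes, which determines the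
point modulo the image of `threeIsogeny`. -/
def CubeRelated (c y a v : ℚ) : Prop :=
  ∃ z : QuadraticAlgebra ℚ c 0, ⟨y, 1⟩ * z ^ 3 = ⟨v, a⟩

lemma cubeRelated_iff {c y a v : ℚ} : CubeRelated c y a v ↔ ∃ s t : ℚ,
    y * (s ^ 3 + 3 * s * t ^ 2 * c) + c * (3 * s ^ 2 * t + t ^ 3 * c) = v ∧
      s ^ 3 + 3 * s * t ^ 2 * c + y * (3 * s ^ 2 * t + t ^ 3 * c) = a := by
  have hcube (s t : ℚ) : (⟨s, t⟩ : QuadraticAlgebra ℚ c 0) ^ 3 =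
      ⟨s ^ 3 + 3 * s * t ^ 2 * c, 3 * s ^ 2 * t + t ^ 3 * c⟩ := by
    ext <;> simp only [pow_succ, pow_zero, one_mul, QuadraticAlgebra.mk_mul_mk] <;> ring
  constructor
  · rintro ⟨⟨s, t⟩, hz⟩
    rw [hcube, QuadraticAlgebra.mk_mul_mk, QuadraticAlgebra.mk.injEq] at hz
    exact ⟨s, t, by linear_combination hz.1, by linear_combination hz.2⟩
  · rintro ⟨s, t, rfl, rfl⟩
    refine ⟨⟨s, t⟩, ?_⟩
    rw [hcube, QuadraticAlgebra.mk_mul_mk]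
    ext <;> simp only [] <;> ring

namespace CubeRelated

variable {c : ℚ} {F : Type*} [Field F] [CharZero F] {w : F}

lemma exists_mul_cube_eq {y a v : ℚ} (h : CubeRelated c y a v) (hw : w ^ 2 = c) :
    ∃ z : F, (y + w) * z ^ 3 = v + a * w := by
  obtain ⟨s, t, rfl, rfl⟩ := cubeRelated_iff.1 h
  refine ⟨s + t * w, ?_⟩
  push_cast
  rw [← hw]
  ring

lemma point_mem_range (hc : c ≠ 0) {x y r : ℚ} (h : y ^ 2 = x ^ 3 + c) (hr : r ≠ 0)
    (hrel : CubeRelated c y 0 (r ^ 3)) : point hc x y h ∈ (threeIsogeny hc).range := by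
  obtain ⟨F, _, _, w, hw⟩ := exists_isQuadraticGenerator c
  obtain ⟨z, hz⟩ := hrel.exists_mul_cube_eq hw.sq_eq
  have hr' : (r : F) ≠ 0 := Rat.cast_ne_zero.2 hr
  rw [Rat.cast_zero, zero_mul, add_zero, Rat.cast_pow] at hz
  have hz0 : z ≠ 0 := by
    rintro rfl
    exact pow_ne_zero 3 hr' (by rw [← hz]; ring)
  refine hw.point_mem_range hc h (div_ne_zero hr' hz0) ?_
  rw [div_pow, ← hz, mul_div_cancel_right₀ _ (pow_ne_zero 3 hz0)]

variable {x₁ x₂ x₃ y₁ y₂ y₃ l m a v : ℚ}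

lemma point_mem_range_of_collinear (hc : c ≠ 0) (h₁ : y₁ ^ 2 = x₁ ^ 3 + c)
    (h₂ : y₂ ^ 2 = x₂ ^ 3 + c) (h₃ : y₃ ^ 2 = x₃ ^ 3 + c) (hl₁ : y₁ = l * x₁ + m)
    (hl₂ : -y₂ = l * x₂ + m) (hl₃ : -y₃ = l * x₃ + m) (hsum : x₁ + x₂ + x₃ = l ^ 2)
    (hpairs : x₁ * x₂ + x₃ * (x₁ + x₂) = -2 * l * m) (hx₁ : x₁ ≠ 0) (hx₂ : x₂ ≠ 0) (ha : a ≠ 0)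
    (hrel₁ : CubeRelated c y₁ a v) (hrel₂ : CubeRelated c y₂ a v) :
    point hc x₃ y₃ h₃ ∈ (threeIsogeny hc).range := by
  have hprod : x₁ * x₂ * x₃ = m ^ 2 - c := by
    rw [hl₁] at h₁
    linear_combination x₁ * hpairs - x₁ ^ 2 * hsum - h₁
  obtain ⟨F, _, _, w, hw, hne⟩ : ∃ (F : Type) (_ : Field F) (_ : CharZero F) (w : F),
      IsQuadraticGenerator c w ∧ (v + a * w : F) ≠ 0 := by
    obtain ⟨F, _, _, w, hw⟩ := exists_isQuadraticGenerator c
    by_cases hzero : (v + a * w : F) = 0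
    · refine ⟨F, _, ‹_›, -w, hw.neg, fun hzero' ↦ ?_⟩
      have haw : 2 * (a * w : F) = 0 := by linear_combination hzero - hzero'
      simp [ha, hw.ne_zero hc] at haw
    · exact ⟨F, _, ‹_›, w, hw, hzero⟩
  obtain ⟨z₁, hz₁⟩ := hrel₁.exists_mul_cube_eq hw.sq_eq
  obtain ⟨z₂, hz₂⟩ := hrel₂.exists_mul_cube_eq hw.sq_eq
  have hz₁0 : z₁ ≠ 0 := by rintro rfl; exact hne (by rw [← hz₁]; ring)
  have hz₂0 : z₂ ≠ 0 := by rintro rfl; exact hne (by rw [← hz₂]; ring)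
  obtain ⟨w', hw', z, hz0, hz⟩ := exists_add_eq_cube_of_collinear (x₁ := (x₁ : F)) (x₂ := x₂)
    (x₃ := x₃) (y₁ := y₁) (y₂ := y₂) (y₃ := y₃) (l := l) (m := m) (hw.ne_zero hc)
    (by rw [hw.sq_eq]; exact_mod_cast h₁) (by rw [hw.sq_eq]; exact_mod_cast h₂)
    (by rw [hw.sq_eq]; exact_mod_cast h₃) (by exact_mod_cast hl₁) (by exact_mod_cast hl₂)
    (by exact_mod_cast hl₃) (by exact_mod_cast hsum) (by exact_mod_cast hpairs)
    (by rw [hw.sq_eq]; exact_mod_cast hprod) (Rat.cast_ne_zero.2 hx₁) (Rat.cast_ne_zero.2 hx₂)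
    hz₁0 hz₂0 (hz₁.trans hz₂.symm)
  obtain rfl | rfl := hw'
  · exact hw.point_mem_range hc h₃ hz0 hz
  · exact hw.neg.point_mem_range hc h₃ hz0 hz

lemma point_sub_point_mem_range (hc : c ≠ 0) (h₁ : y₁ ^ 2 = x₁ ^ 3 + c) (h₂ : y₂ ^ 2 = x₂ ^ 3 + c)
    (hx₁ : x₁ ≠ 0) (hx₂ : x₂ ≠ 0) (ha : a ≠ 0) (hrel₁ : CubeRelated c y₁ a v)
    (hrel₂ : CubeRelated c y₂ a v) :
    point hc x₁ y₁ h₁ - point hc x₂ y₂ h₂ ∈ (threeIsogeny hc).range := by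
  rw [sub_eq_add_neg, neg_point]
  have h₂' : (-y₂) ^ 2 = x₂ ^ 3 + c := by rwa [neg_sq]
  by_cases hx : x₁ = x₂
  · subst hx
    obtain rfl | hy := eq_or_eq_neg_of_X_eq h₁ h₂
    · rw [point_add_point_of_Y_eq_neg hc rfl]
      exact zero_mem _
    by_cases hy₁ : y₁ = 0
    · rw [point_add_point_of_Y_eq_neg hc (by rw [← hy, hy₁, neg_zero])]
      exact zero_mem _
    obtain ⟨l, hl⟩ : ∃ l, l * (2 * y₁) = 3 * x₁ ^ 2 := ⟨_, div_mul_cancel₀ _ (by simpa using hy₁)⟩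
    have h₃ : (-(l * ((l ^ 2 - 2 * x₁) - x₁) + y₁)) ^ 2 = (l ^ 2 - 2 * x₁) ^ 3 + c := by
      linear_combination h₁ + (l ^ 2 - 3 * x₁) * hl
    rw [point_congr hc rfl hy.symm (h' := h₁),
      point_add_self_of_tangent hc hy₁ hl rfl rfl (h₃ := h₃)]
    exact point_mem_range_of_collinear hc h₁ h₂ h₃ (l := l) (m := y₁ - l * x₁) (by ring)
      (by rw [← hy]; ring) (by ring) (by ring) (by linear_combination hl) hx₁ hx₂ ha hrel₁ hrel₂
  · have hsub : x₁ - x₂ ≠ 0 := sub_ne_zero.2 hx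
    obtain ⟨l, hl⟩ : ∃ l, l * (x₁ - x₂) = y₁ - -y₂ := ⟨_, div_mul_cancel₀ _ hsub⟩
    have hpairs : x₁ * x₂ + (l ^ 2 - x₁ - x₂) * (x₁ + x₂) = -2 * l * (y₁ - l * x₁) := by
      apply mul_left_cancel₀ hsub
      linear_combination h₁ - h₂ + (y₁ - y₂ - l * (x₁ - x₂)) * hl
    rw [point_add_point_of_chord hc hx hl rfl rfl (h₃ := chord_third_point h₁ h₂' hx hl)]
    exact point_mem_range_of_collinear hc h₁ h₂ _ (l := l) (m := y₁ - l * x₁) (by ring)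
      (by linear_combination hl) (by ring) (by ring) hpairs hx₁ hx₂ ha hrel₁ hrel₂

end CubeRelated

/-- The binary cubic form `a X³ + 3 b X² Y + 3 c X Y² + d Y³`; the triplication of the middle
coefficients is built in. -/
@[ext]
structure BinaryCubic (R : Type*) where
  /-- The coefficient of `X³`. -/
  a : R
  /-- A third of the coefficient of `X² Y`. -/
  b : R
  /-- A third of the coefficient of `X Y²`. -/
  c : R
  /-- The coefficient of `Y³`. -/
  d : R

namespace BinaryCubic

variable {R S : Type*} [CommRing R] [CommRing S] (Φ Ψ : BinaryCubic R)

/-- The value of a binary cubic form at `(X, Y)`. -/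
def eval (X Y : R) : R :=
  Φ.a * X ^ 3 + 3 * Φ.b * X ^ 2 * Y + 3 * Φ.c * X * Y ^ 2 + Φ.d * Y ^ 3

/-- The Hessian covariant of a binary cubic form, normalised to have integral coefficients in those
of `BinaryCubic`. -/
def hess (X Y : R) : R :=
  (Φ.b ^ 2 - Φ.a * Φ.c) * X ^ 2 + (Φ.b * Φ.c - Φ.a * Φ.d) * X * Y + (Φ.c ^ 2 - Φ.b * Φ.d) * Y ^ 2

/-- The cubic covariant of a binary cubic form: the Jacobian determinant of the form and its
Hessian, up to a constant. -/
def jac (X Y : R) : R :=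
  (Φ.a ^ 2 * Φ.d - 3 * Φ.a * Φ.b * Φ.c + 2 * Φ.b ^ 3) * X ^ 3 +
    3 * (Φ.a * Φ.b * Φ.d - 2 * Φ.a * Φ.c ^ 2 + Φ.b ^ 2 * Φ.c) * X ^ 2 * Y -
    3 * (Φ.a * Φ.c * Φ.d - 2 * Φ.b ^ 2 * Φ.d + Φ.b * Φ.c ^ 2) * X * Y ^ 2 -
    (Φ.a * Φ.d ^ 2 - 3 * Φ.b * Φ.c * Φ.d + 2 * Φ.c ^ 3) * Y ^ 3

/-- The discriminant of the Hessian of a binary cubic form, which is `-1/27` times the discriminant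
of the form itself. -/
def disc : R :=
  Φ.a ^ 2 * Φ.d ^ 2 - 6 * Φ.a * Φ.b * Φ.c * Φ.d + 4 * Φ.a * Φ.c ^ 3 + 4 * Φ.b ^ 3 * Φ.d -
    3 * Φ.b ^ 2 * Φ.c ^ 2

/-- The form `Φ(p X + q Y, r X + s Y)`. -/
def subst (p q r s : R) : BinaryCubic R where
  a := Φ.eval p r
  b := Φ.a * p ^ 2 * q + Φ.b * (p ^ 2 * s + 2 * p * q * r) + Φ.c * (2 * p * r * s + q * r ^ 2) +
    Φ.d * r ^ 2 * s
  c := Φ.a * p * q ^ 2 + Φ.b * (2 * p * q * s + q ^ 2 * r) + Φ.c * (p * s ^ 2 + 2 * q * r * s) +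
    Φ.d * r * s ^ 2
  d := Φ.eval q s

/-- The form obtained by applying a ring homomorphism to the coefficients. -/
@[simps]
def map (f : R →+* S) : BinaryCubic S :=
  ⟨f Φ.a, f Φ.b, f Φ.c, f Φ.d⟩

lemma jac_sq (X Y : R) : Φ.jac X Y ^ 2 = 4 * Φ.hess X Y ^ 3 + Φ.disc * Φ.eval X Y ^ 2 := by
  unfold jac hess disc eval
  ring

lemma eval_one_zero : Φ.eval 1 0 = Φ.a := by
  simp [eval]

lemma hess_one_zero : Φ.hess 1 0 = Φ.b ^ 2 - Φ.a * Φ.c := by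
  simp [hess]

lemma jac_one_zero : Φ.jac 1 0 = Φ.a ^ 2 * Φ.d - 3 * Φ.a * Φ.b * Φ.c + 2 * Φ.b ^ 3 := by
  simp [jac]

variable (p q r s X Y : R)

lemma subst_a : (Φ.subst p q r s).a = Φ.eval p r :=
  rfl

lemma eval_subst :
    (Φ.subst p q r s).eval X Y = Φ.eval (p * X + q * Y) (r * X + s * Y) := by
  unfold eval subst eval
  ring

lemma hess_subst : (Φ.subst p q r s).hess X Y =
    (p * s - q * r) ^ 2 * Φ.hess (p * X + q * Y) (r * X + s * Y) := by
  unfold hess subst eval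
  ring

lemma jac_subst : (Φ.subst p q r s).jac X Y =
    (p * s - q * r) ^ 3 * Φ.jac (p * X + q * Y) (r * X + s * Y) := by
  unfold jac subst eval
  ring

lemma disc_subst : (Φ.subst p q r s).disc = (p * s - q * r) ^ 6 * Φ.disc := by
  unfold disc subst eval
  ring

lemma subst_subst (p' q' r' s' : R) : (Φ.subst p q r s).subst p' q' r' s' =
    Φ.subst (p * p' + q * r') (p * q' + q * s') (r * p' + s * r') (r * q' + s * s') := by
  ext <;> simp only [subst, eval] <;> ring

lemma map_subst (f : R →+* S) :
    (Φ.subst p q r s).map f = (Φ.map f).subst (f p) (f q) (f r) (f s) := by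
  ext <;> simp [subst, eval, map_ofNat]

lemma map_map {T : Type*} [CommRing T] (f : R →+* S) (g : S →+* T) :
    (Φ.map f).map g = Φ.map (g.comp f) :=
  rfl

lemma eval_map (f : R →+* S) : (Φ.map f).eval (f X) (f Y) = f (Φ.eval X Y) := by
  simp [eval, map_ofNat]

lemma hess_map (f : R →+* S) : (Φ.map f).hess (f X) (f Y) = f (Φ.hess X Y) := by
  simp [hess]

lemma jac_map (f : R →+* S) : (Φ.map f).jac (f X) (f Y) = f (Φ.jac X Y) := by
  simp [jac, map_ofNat]

lemma disc_map (f : R →+* S) : (Φ.map f).disc = f Φ.disc := by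
  simp [disc, map_ofNat]

/-- Proper equivalence of binary cubic forms: they differ by a substitution of determinant one. -/
def ProperEquiv : Prop :=
  ∃ p q r s : R, p * s - q * r = 1 ∧ Ψ = Φ.subst p q r s

namespace ProperEquiv

variable {Φ Ψ}

lemma refl (Φ : BinaryCubic R) : Φ.ProperEquiv Φ :=
  ⟨1, 0, 0, 1, by ring, by ext <;> simp [subst, eval]⟩

lemma trans {Ω : BinaryCubic R} (h₁ : Φ.ProperEquiv Ψ) (h₂ : Ψ.ProperEquiv Ω) :
    Φ.ProperEquiv Ω := by
  obtain ⟨p, q, r, s, hdet, rfl⟩ := h₁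
  obtain ⟨p', q', r', s', hdet', rfl⟩ := h₂
  exact ⟨_, _, _, _, by linear_combination hdet + (p * s - q * r) * hdet', subst_subst ..⟩

lemma map (f : R →+* S) (h : Φ.ProperEquiv Ψ) : (Φ.map f).ProperEquiv (Ψ.map f) := by
  obtain ⟨p, q, r, s, hdet, rfl⟩ := h
  exact ⟨_, _, _, _, by simpa using congrArg f hdet, map_subst ..⟩

lemma disc_eq (h : Φ.ProperEquiv Ψ) : Ψ.disc = Φ.disc := by
  obtain ⟨p, q, r, s, hdet, rfl⟩ := h
  rw [disc_subst, hdet, one_pow, one_mul]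

end ProperEquiv

lemma exists_properEquiv_a_eq_eval {X Y : R} (hXY : IsCoprime X Y) :
    ∃ Ψ, Φ.ProperEquiv Ψ ∧ Ψ.a = Φ.eval X Y ∧ Ψ.hess 1 0 = Φ.hess X Y := by
  obtain ⟨W, Z, hWZ⟩ := hXY
  have hdet : X * W - (-Z) * Y = 1 := by linear_combination hWZ
  refine ⟨Φ.subst X (-Z) Y W, ⟨X, -Z, Y, W, hdet, rfl⟩, rfl, ?_⟩
  rw [hess_subst, hdet]
  simp

lemma exists_properEquiv_b_emod (Φ : BinaryCubic ℤ) :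
    ∃ Ψ, Φ.ProperEquiv Ψ ∧ Ψ.a = Φ.a ∧ Ψ.b = Φ.b % Φ.a ∧ Ψ.hess 1 0 = Φ.hess 1 0 := by
  refine ⟨Φ.subst 1 (-(Φ.b / Φ.a)) 0 1, ⟨_, _, _, _, by ring, rfl⟩, eval_one_zero Φ, ?_, ?_⟩
  · simp only [subst]
    linear_combination -Int.emod_add_mul_ediv Φ.b Φ.a
  · rw [hess_subst]
    simp

lemma exists_properEquiv_a_neg :
    ∃ Ψ, Φ.ProperEquiv Ψ ∧ Ψ.a = -Φ.a ∧ Ψ.hess 1 0 = Φ.hess 1 0 := by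
  refine ⟨Φ.subst (-1) 0 0 (-1), ⟨_, _, _, _, by ring, rfl⟩, ?_, ?_⟩
  · simp only [subst, eval]
    ring
  · rw [hess_subst]
    simp [hess]

lemma exists_properEquiv_a_eq_abs_eval (Φ : BinaryCubic ℤ) {X Y : ℤ} (hXY : IsCoprime X Y) :
    ∃ Ψ, Φ.ProperEquiv Ψ ∧ Ψ.a = |Φ.eval X Y| ∧ Ψ.hess 1 0 = Φ.hess X Y ∧
      (Ψ.a ≠ 0 → 0 ≤ Ψ.b ∧ Ψ.b < Ψ.a) := by
  obtain ⟨Φ₁, he₁, ha₁, hh₁⟩ := Φ.exists_properEquiv_a_eq_eval hXY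
  obtain ⟨Φ₂, he₂, ha₂, hh₂⟩ : ∃ Φ₂, Φ₁.ProperEquiv Φ₂ ∧ Φ₂.a = |Φ₁.a| ∧
      Φ₂.hess 1 0 = Φ₁.hess 1 0 := by
    rcases abs_choice Φ₁.a with h | h <;> rw [h]
    · exact ⟨Φ₁, .refl Φ₁, rfl, rfl⟩
    · exact Φ₁.exists_properEquiv_a_neg
  obtain ⟨Φ₃, he₃, ha₃, hb₃, hh₃⟩ := Φ₂.exists_properEquiv_b_emod
  have ha : Φ₃.a = |Φ.eval X Y| := by rw [ha₃, ha₂, ha₁]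
  refine ⟨Φ₃, (he₁.trans he₂).trans he₃, ha, by rw [hh₃, hh₂, hh₁], fun h0 ↦ ?_⟩
  rw [hb₃, ha₃]
  rw [ha₃] at h0
  exact ⟨Int.emod_nonneg _ h0, Int.emod_lt_of_pos _ (h0.symm.lt_of_le (ha₂ ▸ abs_nonneg _))⟩

end BinaryCubic

/-! ### Small values of binary forms -/

open Real in
lemma exists_rat_mul_sq_add_den_sq_le {a t : ℝ} (ha : 0 < a) (ht : 0 < t) (hat : t ≤ a) (x : ℝ) :
    ∃ q : ℚ, a * ((x - q) * q.den) ^ 2 + t ^ 2 / (4 * a) * q.den ^ 2 ≤ t := by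
  set R := √(2 * a / t)
  have hR_sq : R ^ 2 = 2 * a / t := sq_sqrt (by positivity)
  have hR : 1 ≤ R := by
    rw [one_le_sqrt, le_div_iff₀ ht]
    linarith
  obtain ⟨q, hxq, hq⟩ := exists_rat_abs_sub_le_and_den_le x (Nat.floor_pos.2 hR)
  have hden : (q.den : ℝ) ≤ R := (Nat.cast_le.2 hq).trans (Nat.floor_le (by linarith))
  have hden_pos : (0 : ℝ) < q.den := mod_cast q.den_pos
  have happrox : |(x - q) * q.den| ≤ 1 / R := by
    rw [abs_mul, abs_of_pos hden_pos, ← le_div_iff₀ hden_pos, div_div]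
    refine hxq.trans ?_
    gcongr
    exact (Nat.lt_floor_add_one R).le
  refine ⟨q, ?_⟩
  calc a * ((x - q) * q.den) ^ 2 + t ^ 2 / (4 * a) * q.den ^ 2
      ≤ a * (1 / R) ^ 2 + t ^ 2 / (4 * a) * R ^ 2 := by
        rw [← sq_abs ((x - q) * q.den)]
        gcongr
    _ = t := by
        rw [div_pow, hR_sq]
        field_simp
        ring

lemma exists_isCoprime_quadratic_le_sqrt {a b c : ℝ} (ha : 0 < a) (hD : 0 < 4 * a * c - b ^ 2) :
    ∃ X Y : ℤ, IsCoprime X Y ∧ a * X ^ 2 + b * X * Y + c * Y ^ 2 ≤ √(4 * a * c - b ^ 2) := by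
  set t := √(4 * a * c - b ^ 2)
  have ht : 0 < t := Real.sqrt_pos.2 hD
  have ht_sq : t ^ 2 = 4 * a * c - b ^ 2 := Real.sq_sqrt hD.le
  rcases le_total a t with hat | hat
  · exact ⟨1, 0, isCoprime_one_left, by simpa using hat⟩
  obtain ⟨q, hq⟩ := exists_rat_mul_sq_add_den_sq_le ha ht hat (-b / (2 * a))
  refine ⟨q.num, q.den, Int.isCoprime_iff_gcd_eq_one.2 q.reduced, le_of_eq_of_le ?_ hq⟩
  have hnum : (q.num : ℝ) = q * q.den := mod_cast (Rat.mul_den_eq_num q).symm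
  rw [hnum, ht_sq, Int.cast_natCast]
  field_simp
  ring

lemma exists_isCoprime_sq_add_sq_le {p₁ p₂ q₁ q₂ : ℝ} (h : p₁ * q₂ - p₂ * q₁ ≠ 0) :
    ∃ X Y : ℤ, IsCoprime X Y ∧
      (p₁ * X + p₂ * Y) ^ 2 + (q₁ * X + q₂ * Y) ^ 2 ≤ 2 * |p₁ * q₂ - p₂ * q₁| := by
  have hD : 4 * (p₁ ^ 2 + q₁ ^ 2) * (p₂ ^ 2 + q₂ ^ 2) - (2 * (p₁ * p₂ + q₁ * q₂)) ^ 2 =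
      (2 * (p₁ * q₂ - p₂ * q₁)) ^ 2 := by ring
  have hpos : 0 < p₁ ^ 2 + q₁ ^ 2 := by
    by_contra! hle
    have hp : p₁ = 0 := by nlinarith
    have hq : q₁ = 0 := by nlinarith
    simp [hp, hq] at h
  have hDpos : 0 < 4 * (p₁ ^ 2 + q₁ ^ 2) * (p₂ ^ 2 + q₂ ^ 2) -
      (2 * (p₁ * p₂ + q₁ * q₂)) ^ 2 := by
    rw [hD]
    positivity
  obtain ⟨X, Y, hXY, hle⟩ := exists_isCoprime_quadratic_le_sqrt hpos hDpos
  refine ⟨X, Y, hXY, le_of_eq_of_le (by ring) (hle.trans_eq ?_)⟩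
  rw [hD, Real.sqrt_sq_eq_abs, abs_mul, abs_two]

lemma exists_pow_eq_of_odd {n : ℕ} (hn : Odd n) (x : ℝ) : ∃ y, y ^ n = x := by
  rcases le_total 0 x with hx | hx
  · exact ⟨_, Real.rpow_inv_natCast_pow hx hn.pos.ne'⟩
  · exact ⟨-(-x) ^ (n : ℝ)⁻¹, by
      rw [hn.neg_pow, Real.rpow_inv_natCast_pow (neg_nonneg.2 hx) hn.pos.ne', neg_neg]⟩

namespace BinaryCubic

/-- The form `X³ - 3 x X Y² + 2 y Y³` attached to a point `(x, y)`; its discriminant is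
`4 (y² - x³)`. -/
@[simps]
def ofPoint {R : Type*} [CommRing R] (x y : R) : BinaryCubic R :=
  ⟨1, 0, -x, 2 * y⟩

lemma ofPoint_map {R S : Type*} [CommRing R] [CommRing S] (f : R →+* S) (x y : R) :
    (ofPoint x y).map f = ofPoint (f x) (f y) := by
  ext <;> simp [map_ofNat]

lemma ofPoint_disc {R : Type*} [CommRing R] {x y n : R} (h : y ^ 2 = x ^ 3 + n) :
    (ofPoint x y).disc = 4 * n := by
  simp only [disc, ofPoint]
  linear_combination 4 * h

variable {Φ : BinaryCubic ℝ}

lemma hess_nonneg_of_disc_neg (hD : Φ.disc < 0) (X Y : ℝ) : 0 ≤ Φ.hess X Y := by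
  have hcube : 0 ≤ Φ.hess X Y ^ 3 := by
    nlinarith [Φ.jac_sq X Y, sq_nonneg (Φ.jac X Y), sq_nonneg (Φ.eval X Y)]
  exact (Odd.pow_nonneg_iff (by decide)).1 hcube

lemma eval_pow_four_le_of_disc_neg (hD : Φ.disc < 0) {X Y : ℝ}
    (h : Φ.hess X Y ^ 2 ≤ |Φ.disc|) : Φ.eval X Y ^ 4 ≤ 16 * |Φ.disc| := by
  have hpos : 0 < |Φ.disc| := abs_pos.2 hD.ne
  have hsyz : |Φ.disc| * Φ.eval X Y ^ 2 ≤ 4 * Φ.hess X Y ^ 3 := by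
    rw [abs_of_neg hD]
    linarith [Φ.jac_sq X Y, sq_nonneg (Φ.jac X Y)]
  refine le_of_mul_le_mul_left ?_ (pow_pos hpos 2)
  calc |Φ.disc| ^ 2 * Φ.eval X Y ^ 4
      = (|Φ.disc| * Φ.eval X Y ^ 2) ^ 2 := by ring
    _ ≤ (4 * Φ.hess X Y ^ 3) ^ 2 := by gcongr
    _ = 16 * (Φ.hess X Y ^ 2) ^ 3 := by ring
    _ ≤ 16 * |Φ.disc| ^ 3 := by gcongr
    _ = |Φ.disc| ^ 2 * (16 * |Φ.disc|) := by ring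

lemma exists_isCoprime_small_of_disc_neg (hD : Φ.disc < 0) : ∃ X Y : ℤ, IsCoprime X Y ∧
    Φ.hess X Y ^ 2 ≤ |Φ.disc| ∧ Φ.eval X Y ^ 4 ≤ 64 * |Φ.disc| := by
  have hdisc : 4 * (Φ.b ^ 2 - Φ.a * Φ.c) * (Φ.c ^ 2 - Φ.b * Φ.d) -
      (Φ.b * Φ.c - Φ.a * Φ.d) ^ 2 = |Φ.disc| := by
    rw [abs_of_neg hD, disc]
    ring
  have hnonneg := hess_nonneg_of_disc_neg hD
  have hpos : 0 < Φ.b ^ 2 - Φ.a * Φ.c := by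
    refine (Φ.hess_one_zero ▸ hnonneg 1 0).lt_of_ne' fun h0 ↦ ?_
    rw [h0] at hdisc
    linarith [sq_nonneg (Φ.b * Φ.c - Φ.a * Φ.d), abs_pos.2 hD.ne]
  obtain ⟨X, Y, hXY, hle⟩ :=
    exists_isCoprime_quadratic_le_sqrt hpos (hdisc ▸ abs_pos.2 hD.ne)
  rw [hdisc] at hle
  have hhess : Φ.hess X Y ^ 2 ≤ |Φ.disc| := (Real.le_sqrt (hnonneg X Y) (abs_nonneg _)).1 hle
  exact ⟨X, Y, hXY, hhess, by linarith [eval_pow_four_le_of_disc_neg hD hhess, abs_nonneg Φ.disc]⟩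

lemma sq_mul_le_and_pow_four_le {p q f δ : ℝ} (hδ : δ ≠ 0) (h : p ^ 2 + q ^ 2 ≤ 2 * |δ|)
    (hf : δ * f = q ^ 3 - p ^ 3) : (p * q) ^ 2 ≤ |δ ^ 2| ∧ f ^ 4 ≤ 64 * |δ ^ 2| := by
  have hpos : 0 < |δ| := abs_pos.2 hδ
  have hf_sq : f ^ 2 ≤ 8 * |δ| := by
    refine le_of_mul_le_mul_left ?_ (pow_pos hpos 2)
    calc |δ| ^ 2 * f ^ 2 = (q ^ 3 - p ^ 3) ^ 2 := by rw [sq_abs, ← mul_pow, hf]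
      _ ≤ (p ^ 2 + q ^ 2) ^ 3 := by
        nlinarith [mul_nonneg (sq_nonneg (p * q)) (sq_nonneg (p + q)),
          mul_nonneg (sq_nonneg (p * q)) (sq_nonneg p),
          mul_nonneg (sq_nonneg (p * q)) (sq_nonneg q)]
      _ ≤ (2 * |δ|) ^ 3 := by gcongr
      _ = |δ| ^ 2 * (8 * |δ|) := by ring
  rw [abs_pow]
  constructor
  · have hpq : |p * q| ≤ |δ| := abs_le.2
      ⟨by linarith [sq_nonneg (p + q)], by linarith [sq_nonneg (p - q)]⟩
    rw [← sq_abs (p * q)]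
    gcongr
  · calc f ^ 4 = (f ^ 2) ^ 2 := by ring
      _ ≤ (8 * |δ|) ^ 2 := by gcongr
      _ = 64 * |δ| ^ 2 := by ring

-- A form with real roots of its Hessian is, up to a scalar, a difference of cubes of the two linear
-- factors of the Hessian.
lemma exists_ofPoint_eq_cube_sub_cube {n x y : ℝ} (hn : 0 < n) (h : y ^ 2 = x ^ 3 + n)
    (hx : x ≠ 0) : ∃ p₁ p₂ q₁ q₂ : ℝ, (p₁ * q₂ - p₂ * q₁) ^ 2 = 4 * n ∧ ∀ X Y,
      (ofPoint x y).hess X Y = (p₁ * X + p₂ * Y) * (q₁ * X + q₂ * Y) ∧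
      (p₁ * q₂ - p₂ * q₁) * (ofPoint x y).eval X Y =
        (q₁ * X + q₂ * Y) ^ 3 - (p₁ * X + p₂ * Y) ^ 3 := by
  have hw : √n ^ 2 = n := Real.sq_sqrt hn.le
  obtain ⟨g, hg⟩ := exists_pow_eq_of_odd (n := 3) (by decide) (y + √n)
  have hprod : g ^ 3 * (y - √n) = x ^ 3 := by linear_combination h - hw + (y - √n) * hg
  have hg0 : g ≠ 0 := by
    rintro rfl
    exact hx (by simpa using hprod.symm)
  obtain ⟨k, rfl⟩ : ∃ k, x = g * k := ⟨x / g, by field_simp⟩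
  have hk : k ^ 3 = y - √n :=
    mul_left_cancel₀ (pow_ne_zero 3 hg0) (by linear_combination -hprod)
  have hy : 2 * y = g ^ 3 + k ^ 3 := by linear_combination -hg - hk
  refine ⟨k, -g ^ 2, g, -k ^ 2, ?_, fun X Y ↦ ⟨?_, ?_⟩⟩
  · linear_combination (g ^ 3 - k ^ 3 + 2 * √n) * (hg - hk) + 4 * hw
  · simp only [hess, ofPoint, hy]
    ring
  · simp only [eval, ofPoint, hy]
    ring

lemma exists_isCoprime_small_of_disc_pos {n x y : ℝ} (hn : 0 < n) (h : y ^ 2 = x ^ 3 + n)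
    (hx : x ≠ 0) (hΦ : (ofPoint x y).ProperEquiv Φ) : ∃ X Y : ℤ, IsCoprime X Y ∧
      Φ.hess X Y ^ 2 ≤ |Φ.disc| ∧ Φ.eval X Y ^ 4 ≤ 64 * |Φ.disc| := by
  obtain ⟨p₁, p₂, q₁, q₂, hdet, hforms⟩ := exists_ofPoint_eq_cube_sub_cube hn h hx
  have hdisc : Φ.disc = (p₁ * q₂ - p₂ * q₁) ^ 2 := by rw [hΦ.disc_eq, ofPoint_disc h, hdet]
  have hδ : p₁ * q₂ - p₂ * q₁ ≠ 0 := by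
    rintro h0
    rw [h0] at hdet
    linarith
  obtain ⟨a, b, c, d, hunit, rfl⟩ := hΦ
  have hδ' : (p₁ * a + p₂ * c) * (q₁ * b + q₂ * d) - (p₁ * b + p₂ * d) * (q₁ * a + q₂ * c) =
      p₁ * q₂ - p₂ * q₁ := by linear_combination (p₁ * q₂ - p₂ * q₁) * hunit
  obtain ⟨X, Y, hXY, hle⟩ := exists_isCoprime_sq_add_sq_le (hδ'.symm ▸ hδ)
  obtain ⟨hhess, heval⟩ := hforms (a * X + b * Y) (c * X + d * Y)
  rw [hδ'] at hle
  refine ⟨X, Y, hXY, ?_⟩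
  rw [hdisc, hess_subst, eval_subst, hunit, one_pow, one_mul, hhess]
  refine sq_mul_le_and_pow_four_le hδ (le_of_eq_of_le ?_ hle) heval
  ring

lemma exists_isCoprime_small {n x y : ℝ} (hn : n ≠ 0) (h : y ^ 2 = x ^ 3 + n)
    (hx : x ≠ 0) (hΦ : (ofPoint x y).ProperEquiv Φ) : ∃ X Y : ℤ, IsCoprime X Y ∧
      Φ.hess X Y ^ 2 ≤ 4 * |n| ∧ Φ.eval X Y ^ 4 ≤ 256 * |n| := by
  have hdisc : Φ.disc = 4 * n := by rw [hΦ.disc_eq, ofPoint_disc h]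
  have habs : |Φ.disc| = 4 * |n| := by rw [hdisc, abs_mul, Nat.abs_ofNat]
  rw [← habs, show 256 * |n| = 64 * |Φ.disc| by rw [habs]; ring]
  rcases hn.lt_or_gt with hneg | hpos
  · exact exists_isCoprime_small_of_disc_neg (by linarith)
  · exact exists_isCoprime_small_of_disc_pos hpos h hx hΦ

end BinaryCubic

/-! ### Reduced integral forms attached to points -/

open BinaryCubic

lemma exists_dvd_sq_sub_and_dvd_cubic {u v n m : ℤ} (hcop : IsCoprime u m)
    (h : v ^ 2 = u ^ 3 + n * m) : ∃ b, m ∣ b ^ 2 - u ∧ m ∣ b ^ 3 - 3 * b * u + 2 * v := by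
  obtain ⟨p, q, hpq⟩ := hcop
  have hdvd : m ∣ u * (p * v) - v := ⟨-q * v, by linear_combination v * hpq⟩
  have hdvd_sq : m ∣ (p * v) ^ 2 - u := by
    have hcop_sq : IsCoprime m (u ^ 2) := .pow_right ⟨q, p, by linear_combination hpq⟩
    refine hcop_sq.dvd_of_dvd_mul_left ?_
    have hexp : u ^ 2 * ((p * v) ^ 2 - u) = (u * (p * v) - v) * (u * (p * v) + v) + m * n := by
      linear_combination h
    exact hexp ▸ dvd_add (hdvd.mul_right _) (dvd_mul_right _ _)
  refine ⟨p * v, hdvd_sq, ?_⟩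
  have hexp : (p * v) ^ 3 - 3 * (p * v) * u + 2 * v =
      (p * v) * ((p * v) ^ 2 - u) - 2 * (u * (p * v) - v) := by ring
  exact hexp ▸ dvd_sub (hdvd_sq.mul_left _) (hdvd.mul_left _)

lemma exists_integral_properEquiv_ofPoint {n : ℤ} {x y : ℚ} (h : y ^ 2 = x ^ 3 + n) :
    ∃ Φ : BinaryCubic ℤ, (ofPoint x y).ProperEquiv (Φ.map (Int.castRingHom ℚ)) := by
  obtain ⟨d, hxden, hyden⟩ := exists_den_eq_pow h
  have hd : (d : ℚ) ≠ 0 := by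
    rintro hd
    simp [Nat.cast_eq_zero.1 hd] at hxden
  have hxnum : (x.num : ℚ) = x * d ^ 2 := by
    rw [← Rat.mul_den_eq_num, hxden, Nat.cast_pow]
  have hynum : (y.num : ℚ) = y * d ^ 3 := by
    rw [← Rat.mul_den_eq_num, hyden, Nat.cast_pow]
  have hcop : IsCoprime x.num ((d : ℤ) ^ 6) := by
    have hred : IsCoprime x.num (x.den : ℤ) := Int.isCoprime_iff_gcd_eq_one.2 x.reduced
    rw [hxden, Nat.cast_pow, IsCoprime.pow_right_iff two_pos] at hred
    exact hred.pow_right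
  have hcurve : y.num ^ 2 = x.num ^ 3 + n * (d : ℤ) ^ 6 := by
    have hcast : (y.num : ℚ) ^ 2 = x.num ^ 3 + n * (d : ℚ) ^ 6 := by
      rw [hxnum, hynum]
      linear_combination (d : ℚ) ^ 6 * h
    exact_mod_cast hcast
  obtain ⟨b, ⟨c, hc⟩, ⟨e, he⟩⟩ := exists_dvd_sq_sub_and_dvd_cubic hcop hcurve
  have hc' : (b : ℚ) ^ 2 - x * d ^ 2 = d ^ 6 * c := by rw [← hxnum]; exact_mod_cast hc
  have he' : (b : ℚ) ^ 3 - 3 * b * (x * d ^ 2) + 2 * (y * d ^ 3) = d ^ 6 * e := by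
    rw [← hxnum, ← hynum]
    exact_mod_cast he
  refine ⟨⟨d ^ 3, b, d ^ 3 * c, e⟩, d, b / d ^ 2, 0, 1 / d, by field_simp; ring, ?_⟩
  ext <;> simp only [BinaryCubic.map, subst, eval, ofPoint, eq_intCast] <;> push_cast <;> field_simp
  · ring
  · ring
  · linear_combination -(d : ℚ) * hc'
  · linear_combination -he'

lemma cubeRelated_of_properEquiv_ofPoint {n x y : ℚ} {Φ : BinaryCubic ℚ} (h : y ^ 2 = x ^ 3 + n)
    (hx : x ≠ 0) (hΦ : (ofPoint x y).ProperEquiv Φ) :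
    CubeRelated n y Φ.a (Φ.jac 1 0 / 2) := by
  obtain ⟨p, q, r, s, hdet, rfl⟩ := hΦ
  obtain rfl : n = y ^ 2 - x ^ 3 := by linear_combination -h
  rw [jac_subst, hdet, subst_a, cubeRelated_iff]
  refine ⟨p - y / x * r, r / x, ?_, ?_⟩
  · simp only [jac, ofPoint]
    field_simp
    ring
  · simp only [eval, ofPoint]
    field_simp
    ring

/-- The reduced integral forms of discriminant `4 n`: up to a unimodular substitution, the leading
coefficients of the form and of its Hessian are as small as the geometry of numbers allows. -/
structure IsReduced (n : ℤ) (Φ : BinaryCubic ℤ) : Prop where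
  disc_eq : Φ.disc = 4 * n
  a_pos : 0 < Φ.a
  b_nonneg : 0 ≤ Φ.b
  b_lt_a : Φ.b < Φ.a
  a_pow_le : Φ.a ^ 4 ≤ 256 * |n|
  hess_sq_le : Φ.hess 1 0 ^ 2 ≤ 4 * |n|

lemma exists_small_properEquiv {n : ℤ} (hn : n ≠ 0) {x y : ℚ} (h : y ^ 2 = x ^ 3 + n)
    (hx : x ≠ 0) : ∃ Φ : BinaryCubic ℤ, (ofPoint x y).ProperEquiv (Φ.map (Int.castRingHom ℚ)) ∧
      0 ≤ Φ.a ∧ (Φ.a ≠ 0 → 0 ≤ Φ.b ∧ Φ.b < Φ.a) ∧ Φ.a ^ 4 ≤ 256 * |n| ∧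
        Φ.hess 1 0 ^ 2 ≤ 4 * |n| := by
  obtain ⟨Φ, hΦ⟩ := exists_integral_properEquiv_ofPoint h
  have hΦℝ : (ofPoint (x : ℝ) y).ProperEquiv (Φ.map (Int.castRingHom ℝ)) := by
    simpa only [ofPoint_map, map_map, RingHom.eq_intCast', eq_ratCast] using hΦ.map (Rat.castHom ℝ)
  obtain ⟨X, Y, hXY, hhess, heval⟩ := exists_isCoprime_small (n := n) (mod_cast hn) (mod_cast h)
    (mod_cast hx) hΦℝ
  rw [show (Φ.map (Int.castRingHom ℝ)).hess X Y = (Φ.hess X Y : ℤ) from hess_map ..] at hhess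
  rw [show (Φ.map (Int.castRingHom ℝ)).eval X Y = (Φ.eval X Y : ℤ) from eval_map ..] at heval
  obtain ⟨Ψ, hΦΨ, ha, hh, hb⟩ := Φ.exists_properEquiv_a_eq_abs_eval hXY
  refine ⟨Ψ, hΦ.trans (hΦΨ.map _), ha ▸ abs_nonneg _, hb, ?_, ?_⟩
  · rw [ha, Even.pow_abs (by decide)]
    exact_mod_cast heval
  · rw [hh]
    exact_mod_cast hhess

theorem point_mem_range_or_exists_isReduced {n : ℤ} (hn : (n : ℚ) ≠ 0) {x y : ℚ}
    (h : y ^ 2 = x ^ 3 + n) (hx : x ≠ 0) : point hn x y h ∈ (threeIsogeny hn).range ∨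
      ∃ Φ : BinaryCubic ℤ, IsReduced n Φ ∧ CubeRelated n y Φ.a (Φ.jac 1 0 / 2) := by
  obtain ⟨Φ, hΦ, ha, hb, ha_le, hh_le⟩ := exists_small_properEquiv (mod_cast hn) h hx
  have hrel : CubeRelated n y Φ.a (Φ.jac 1 0 / 2) := by
    have hjac : (Φ.map (Int.castRingHom ℚ)).jac 1 0 = (Φ.jac 1 0 : ℤ) := by
      simpa using Φ.jac_map 1 0 (Int.castRingHom ℚ)
    simpa only [hjac, map_a, eq_intCast] using cubeRelated_of_properEquiv_ofPoint h hx hΦ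
  have hdisc : Φ.disc = 4 * n := by
    have hcast := hΦ.disc_eq
    rw [disc_map, ofPoint_disc h, eq_intCast] at hcast
    exact_mod_cast hcast
  rcases ha.eq_or_lt with ha0 | ha0
  · left
    have hb0 : Φ.b ≠ 0 := by
      rintro hb0
      simp only [disc, ← ha0, hb0] at hdisc
      exact hn (mod_cast by linarith)
    refine CubeRelated.point_mem_range hn h (r := Φ.b) (mod_cast hb0) ?_
    rw [jac_one_zero, ← ha0] at hrel
    convert hrel using 1
    · simp
    · push_cast
      ring
  · exact .inr ⟨Φ, ⟨hdisc, ha0, (hb ha0.ne').1, (hb ha0.ne').2, ha_le, hh_le⟩, hrel⟩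

/-! ### The index of the multiples of three -/

section Labels

variable {G ι : Type*} [AddCommGroup G] [Finite ι] {H : AddSubgroup G} {r : G → ι → Prop}

lemma finiteIndex_and_index_le_card (hex : ∀ P, ∃ i, r P i)
    (hsub : ∀ P Q i, r P i → r Q i → P - Q ∈ H) : H.FiniteIndex ∧ H.index ≤ Nat.card ι := by
  choose f hf using hex
  have hinj : Function.Injective fun q : G ⧸ H ↦ f q.out := by
    intro q q' (hqq' : f q.out = f q'.out)
    have hmem := hsub _ _ _ (hqq' ▸ hf q'.out) (hf q.out)
    rw [← QuotientAddGroup.out_eq' q, ← QuotientAddGroup.out_eq' q', QuotientAddGroup.eq]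
    rwa [neg_add_eq_sub]
  have : Finite (G ⧸ H) := Finite.of_injective _ hinj
  exact ⟨H.finiteIndex_of_finite_quotient, Nat.card_le_card_of_injective _ hinj⟩

end Labels

namespace BinaryCubic

lemma ext_of_hess_of_jac {R : Type*} [CommRing R] [IsDomain R] {Φ Ψ : BinaryCubic R}
    (h0 : Φ.a ≠ 0) (ha : Φ.a = Ψ.a) (hb : Φ.b = Ψ.b) (hhess : Φ.hess 1 0 = Ψ.hess 1 0)
    (hjac : Φ.jac 1 0 = Ψ.jac 1 0) : Φ = Ψ := by
  rw [hess_one_zero, hess_one_zero, ← ha, ← hb] at hhess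
  have hc : Φ.c = Ψ.c := mul_left_cancel₀ h0 (by linear_combination -hhess)
  rw [jac_one_zero, jac_one_zero, ← ha, ← hb, ← hc] at hjac
  exact BinaryCubic.ext ha hb hc (mul_left_cancel₀ (pow_ne_zero 2 h0) (by linear_combination hjac))

end BinaryCubic

namespace IsReduced

variable {n : ℤ} {Φ : BinaryCubic ℤ}

lemma jac_sq_eq (hΦ : IsReduced n Φ) :
    Φ.jac 1 0 ^ 2 = 4 * (Φ.hess 1 0 ^ 3 + n * Φ.a ^ 2) := by
  rw [Φ.jac_sq, Φ.eval_one_zero, hΦ.disc_eq]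
  ring

lemma a_le (hΦ : IsReduced n Φ) : Φ.a ≤ 256 * |n| :=
  (le_self_pow₀ hΦ.a_pos (by decide)).trans hΦ.a_pow_le

lemma abs_hess_le (hΦ : IsReduced n Φ) : |Φ.hess 1 0| ≤ 4 * |n| := by
  have hsq := Int.natAbs_le_self_sq (Φ.hess 1 0)
  rw [Int.natCast_natAbs] at hsq
  exact hsq.trans hΦ.hess_sq_le

lemma abs_jac_le (hΦ : IsReduced n Φ) :
    |Φ.jac 1 0| ≤ 4 * ((4 * |n|) ^ 3 + |n| * (256 * |n|) ^ 2) := by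
  have ha := hΦ.a_pos.le
  calc |Φ.jac 1 0| ≤ Φ.jac 1 0 ^ 2 := by
        simpa only [Int.natCast_natAbs] using Int.natAbs_le_self_sq (Φ.jac 1 0)
    _ = 4 * (Φ.hess 1 0 ^ 3 + n * Φ.a ^ 2) := hΦ.jac_sq_eq
    _ ≤ 4 * (|Φ.hess 1 0| ^ 3 + |n| * Φ.a ^ 2) := by
        rw [← abs_pow]
        gcongr
        exacts [le_abs_self (Φ.hess 1 0 ^ 3), le_abs_self n]
    _ ≤ 4 * ((4 * |n|) ^ 3 + |n| * (256 * |n|) ^ 2) := by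
        gcongr
        exacts [hΦ.abs_hess_le, hΦ.a_le]

end IsReduced

lemma finite_setOf_isReduced (n : ℤ) : {Φ | IsReduced n Φ}.Finite := by
  refine Set.Finite.of_injOn (f := fun Φ ↦ (Φ.a, Φ.b, Φ.hess 1 0, Φ.jac 1 0))
    (t := Set.Icc 0 (256 * |n|) ×ˢ Set.Icc 0 (256 * |n|) ×ˢ {u | |u| ≤ 4 * |n|} ×ˢ
      {g | |g| ≤ 4 * ((4 * |n|) ^ 3 + |n| * (256 * |n|) ^ 2)}) ?_ ?_ ?_
  · exact fun Φ (hΦ : IsReduced n Φ) ↦ ⟨⟨hΦ.a_pos.le, hΦ.a_le⟩,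
      ⟨hΦ.b_nonneg, hΦ.b_lt_a.le.trans hΦ.a_le⟩, hΦ.abs_hess_le, hΦ.abs_jac_le⟩
  · intro Φ (hΦ : IsReduced n Φ) Ψ _ h
    simp only [Prod.mk.injEq] at h
    exact BinaryCubic.ext_of_hess_of_jac hΦ.a_pos.ne' h.1 h.2.1 h.2.2.1 h.2.2.2
  · simp only [abs_le]
    exact (Set.finite_Icc ..).prod <| (Set.finite_Icc ..).prod <|
      (Set.finite_Icc ..).prod (Set.finite_Icc ..)

/-- The finite set of reduced integral forms of discriminant `4 n`. -/
noncomputable def reducedForms (n : ℤ) : Finset (BinaryCubic ℤ) :=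
  (finite_setOf_isReduced n).toFinset

lemma mem_reducedForms {n : ℤ} {Φ : BinaryCubic ℤ} : Φ ∈ reducedForms n ↔ IsReduced n Φ := by
  simp [reducedForms]

/-- The labels distinguishing the cosets of the image of the three-isogeny: a reduced form for a
point with `x ≠ 0`, the sign of `y` for a point with `x = 0`, and the label `0` for the image
itself. -/
def HasLabel {n : ℤ} (hn : (n : ℚ) ≠ 0) (P : (mordell (n : ℚ)).Point) :
    SignType ⊕ reducedForms n → Prop
  | .inl 0 => P ∈ (threeIsogeny hn).range
  | .inl s => ∃ y h, P = point hn 0 y h ∧ SignType.sign y = s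
  | .inr Φ => ∃ x y h, P = point hn x y h ∧ x ≠ 0 ∧
      CubeRelated n y (Φ : BinaryCubic ℤ).a ((Φ : BinaryCubic ℤ).jac 1 0 / 2)

lemma exists_hasLabel {n : ℤ} (hn : (n : ℚ) ≠ 0) (P : (mordell (n : ℚ)).Point) :
    ∃ i, HasLabel hn P i := by
  rcases eq_zero_or_eq_point hn P with rfl | ⟨x, y, h, rfl⟩
  · exact ⟨.inl 0, zero_mem _⟩
  by_cases hx : x = 0
  · subst hx
    rcases lt_trichotomy y 0 with hy | rfl | hy
    · exact ⟨.inl .neg, y, h, rfl, sign_neg hy⟩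
    · exact absurd (by simpa using h.symm) hn
    · exact ⟨.inl .pos, y, h, rfl, sign_pos hy⟩
  · rcases point_mem_range_or_exists_isReduced hn h hx with hmem | ⟨Φ, hΦ, hrel⟩
    · exact ⟨.inl 0, hmem⟩
    · exact ⟨.inr ⟨Φ, mem_reducedForms.2 hΦ⟩, x, y, h, rfl, hx, hrel⟩

lemma eq_of_sq_eq_sq_of_sign_eq {R : Type*} [CommRing R] [LinearOrder R] [IsStrictOrderedRing R]
    {a b : R} (h : a ^ 2 = b ^ 2) (hsign : SignType.sign a = SignType.sign b) : a = b := by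
  rw [← sign_mul_abs a, ← sign_mul_abs b, hsign, sq_eq_sq_iff_abs_eq_abs _ _ |>.1 h]

lemma HasLabel.sub_mem_range {n : ℤ} {hn : (n : ℚ) ≠ 0} {P Q : (mordell (n : ℚ)).Point}
    {i : SignType ⊕ reducedForms n} (hP : HasLabel hn P i) (hQ : HasLabel hn Q i) :
    P - Q ∈ (threeIsogeny hn).range := by
  have hsign {s} (hP : ∃ y h, P = point hn 0 y h ∧ SignType.sign y = s)
      (hQ : ∃ y h, Q = point hn 0 y h ∧ SignType.sign y = s) : P - Q ∈ (threeIsogeny hn).range := by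
    obtain ⟨y, h, rfl, hy⟩ := hP
    obtain ⟨y', h', rfl, hy'⟩ := hQ
    have hyy' := eq_of_sq_eq_sq_of_sign_eq (h.trans h'.symm) (hy.trans hy'.symm)
    rw [point_congr hn (h' := h') rfl hyy', sub_self]
    exact zero_mem _
  match i, hP, hQ with
  | .inl .zero, hP, hQ => exact sub_mem hP hQ
  | .inl .neg, hP, hQ => exact hsign hP hQ
  | .inl .pos, hP, hQ => exact hsign hP hQ
  | .inr Φ, ⟨x, y, h, hPeq, hx, hrel⟩, ⟨x', y', h', hQeq, hx', hrel'⟩ =>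
    rw [hPeq, hQeq]
    have ha := (mem_reducedForms.1 Φ.2).a_pos.ne'
    exact CubeRelated.point_sub_point_mem_range hn h h' hx hx' (mod_cast ha) hrel hrel'

lemma threeIsogeny_range_index_le {n : ℤ} (hn : (n : ℚ) ≠ 0) :
    (threeIsogeny hn).range.FiniteIndex ∧
      (threeIsogeny hn).range.index ≤ 3 + (reducedForms n).card := by
  have hcard : Nat.card (SignType ⊕ reducedForms n) = 3 + (reducedForms n).card := by
    rw [Nat.card_sum, Nat.card_eq_fintype_card, Nat.card_eq_finsetCard]
    rfl
  rw [← hcard]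
  exact finiteIndex_and_index_le_card (exists_hasLabel hn) fun _ _ _ ↦ HasLabel.sub_mem_range

lemma scaleNine_surjective {c : ℚ} (hc : c ≠ 0) : Function.Surjective (scaleNine hc) := by
  intro P
  have hc' := neg_twentySeven_mul_ne_zero (neg_twentySeven_mul_ne_zero hc)
  rcases eq_zero_or_eq_point hc' P with rfl | ⟨x, y, h, rfl⟩
  · exact ⟨0, map_zero _⟩
  · refine ⟨point hc (x / 9) (y / 27) (by linear_combination h / 729), ?_⟩
    apply scaleHom_point <;> rw [RingHom.id_apply] <;> ring

lemma threeMultiples_eq_map {c : ℚ} (hc : c ≠ 0) : threeMultiples (mordell c).Point =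
    (threeIsogeny (neg_twentySeven_mul_ne_zero hc)).range.map (threeIsogeny hc) := by
  ext P
  simp only [AddSubgroup.mem_map, AddMonoidHom.mem_range, exists_exists_eq_and,
    (scaleNine_surjective hc).exists, threeIsogeny_threeIsogeny_scaleNine]
  rfl

theorem threeMultiples_index_le {n : ℤ} (hn : n ≠ 0) :
    (threeMultiples (mordell (n : ℚ)).Point).FiniteIndex ∧
      (threeMultiples (mordell (n : ℚ)).Point).index ≤
        (3 + (reducedForms n).card) * (3 + (reducedForms (-27 * n)).card) := by
  have hc : (n : ℚ) ≠ 0 := mod_cast hn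
  obtain ⟨hfin, hle⟩ := threeIsogeny_range_index_le hc
  have hdual {m : ℤ} {c : ℚ} (hmc : (m : ℚ) = c) (h0 : c ≠ 0) :
      (threeIsogeny h0).range.FiniteIndex ∧
        (threeIsogeny h0).range.index ≤ 3 + (reducedForms m).card := by
    subst hmc
    exact threeIsogeny_range_index_le h0
  obtain ⟨hfin_dual, hle_dual⟩ :=
    hdual (m := -27 * n) (by push_cast; rfl) (neg_twentySeven_mul_ne_zero hc)
  set H := (threeIsogeny (neg_twentySeven_mul_ne_zero hc)).range
  have hindex := H.index_map (threeIsogeny hc)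
  rw [← threeMultiples_eq_map] at hindex
  constructor
  · refine ⟨hindex ▸ mul_ne_zero ?_ hfin.index_ne_zero⟩
    exact (AddSubgroup.finiteIndex_of_le le_sup_left).index_ne_zero
  · rw [hindex, mul_comm]
    gcongr
    exact (AddSubgroup.index_antitone le_sup_left).trans hle_dual

/-! ### Counting reduced forms -/

open Finset Real

lemma card_le_add_one_of_sub_le (S : Finset ℤ) {L : ℝ} (hL : 0 ≤ L)
    (h : ∀ v ∈ S, ∀ w ∈ S, (w - v : ℝ) ≤ L) : (#S : ℝ) ≤ L + 1 := by
  rcases S.eq_empty_or_nonempty with rfl | hS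
  · simpa using by linarith
  have hsub : S ⊆ Icc (S.min' hS) (S.min' hS + ⌊L⌋₊) := by
    intro w hw
    have hfloor : w - S.min' hS ≤ ⌊L⌋₊ := by
      rw [Int.natCast_floor_eq_floor hL]
      exact Int.le_floor.2 (mod_cast h _ (S.min'_mem hS) w hw)
    exact mem_Icc.2 ⟨S.min'_le w hw, by linarith⟩
  have hcard : #S ≤ ⌊L⌋₊ + 1 := by
    refine (card_le_card hsub).trans (le_of_eq ?_)
    rw [Int.card_Icc]
    lia
  calc (#S : ℝ) ≤ ⌊L⌋₊ + 1 := mod_cast hcard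
    _ ≤ L + 1 := by gcongr; exact Nat.floor_le hL

section NearSquares

variable {C E v w : ℝ} (hvw : 0 ≤ v * w) (hv : |v ^ 2 - C| ≤ E) (hw : |w ^ 2 - C| ≤ E)

include hvw hv hw

lemma sq_sub_le_of_abs_sq_sub_le : (w - v) ^ 2 ≤ 2 * E := by
  rw [abs_le] at hv hw
  rcases le_total (v ^ 2) (w ^ 2) with h | h <;> nlinarith [abs_le_of_sq_le_sq' h]

lemma sq_sub_mul_abs_le_of_abs_sq_sub_le : (w - v) ^ 2 * |C| ≤ 4 * E ^ 2 := by
  have hE : 0 ≤ E := (abs_nonneg _).trans hv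
  rcases le_or_gt |C| (2 * E) with h | h
  · calc (w - v) ^ 2 * |C| ≤ (2 * E) * (2 * E) := by
          gcongr
          exact sq_sub_le_of_abs_sq_sub_le hvw hv hw
      _ = 4 * E ^ 2 := by ring
  rw [abs_le] at hv hw
  have hC : 0 ≤ C := by
    by_contra! hC
    rw [abs_of_neg hC] at h
    nlinarith [sq_nonneg v]
  rw [abs_of_nonneg hC] at h ⊢
  calc (w - v) ^ 2 * C ≤ (w - v) ^ 2 * (w + v) ^ 2 := by
        gcongr
        nlinarith
    _ = (w ^ 2 - v ^ 2) ^ 2 := by ring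
    _ ≤ (2 * E) ^ 2 := sq_le_sq' (by linarith) (by linarith)
    _ = 4 * E ^ 2 := by ring

end NearSquares

lemma card_le_of_abs_sq_sub_le (S : Finset ℤ) {m r C E L : ℝ} (hm : 0 < m) (hL : 0 ≤ L)
    (hS : ∀ d ∈ S, |(m * d + r) ^ 2 - C| ≤ E)
    (hgap : ∀ t, 0 ≤ t → t ^ 2 ≤ 2 * E → t ^ 2 * |C| ≤ 4 * E ^ 2 → t ≤ L) :
    (#S : ℝ) ≤ 2 * (L / m + 1) := by
  have hsame (T : Finset ℤ) (hTS : T ⊆ S)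
      (hT : ∀ v ∈ T, ∀ w ∈ T, 0 ≤ (m * v + r) * (m * w + r)) : (#T : ℝ) ≤ L / m + 1 := by
    refine card_le_add_one_of_sub_le T (by positivity) fun v hv w hw ↦ ?_
    have h₁ := sq_sub_le_of_abs_sq_sub_le (hT v hv w hw) (hS v (hTS hv)) (hS w (hTS hw))
    have h₂ := sq_sub_mul_abs_le_of_abs_sq_sub_le (hT v hv w hw) (hS v (hTS hv)) (hS w (hTS hw))
    have hle := hgap _ (abs_nonneg _) (by rwa [sq_abs]) (by rwa [sq_abs])
    rw [le_div_iff₀ hm]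
    linarith [le_abs_self (m * w + r - (m * v + r))]
  have hnonneg := hsame {d ∈ S | 0 ≤ m * (d : ℝ) + r} (filter_subset _ _) fun v hv w hw ↦
    mul_nonneg (mem_filter.1 hv).2 (mem_filter.1 hw).2
  have hneg := hsame {d ∈ S | ¬ 0 ≤ m * (d : ℝ) + r} (filter_subset _ _) fun v hv w hw ↦
    mul_nonneg_of_nonpos_of_nonpos (le_of_not_ge (mem_filter.1 hv).2)
      (le_of_not_ge (mem_filter.1 hw).2)
  rw [← card_filter_add_card_filter_not (s := S) (fun d : ℤ ↦ 0 ≤ m * (d : ℝ) + r)]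
  push_cast
  linarith

lemma sum_inv_sqrt_le (n : ℕ) : ∑ a ∈ Icc 1 n, 1 / √(a : ℝ) ≤ 2 * √(n : ℝ) := by
  induction n with
  | zero => simp
  | succ n ih =>
    rw [sum_Icc_succ_top (by lia)]
    have hpos : 0 < √((n + 1 : ℕ) : ℝ) := sqrt_pos.2 (by positivity)
    have hsq : √((n + 1 : ℕ) : ℝ) ^ 2 = √(n : ℝ) ^ 2 + 1 := by
      rw [sq_sqrt (by positivity), sq_sqrt (by positivity)]
      push_cast
      rfl
    have hterm : 1 / √((n + 1 : ℕ) : ℝ) ≤ 2 * √((n + 1 : ℕ) : ℝ) - 2 * √(n : ℝ) := by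
      rw [div_le_iff₀ hpos]
      nlinarith [sq_nonneg (√((n + 1 : ℕ) : ℝ) - √(n : ℝ))]
    linarith

lemma one_div_cube_le_sub {s t : ℝ} (hs : 0 < s) (ht : 0 < t) (hst : t ^ 2 = s ^ 2 + 1) :
    1 / t ^ 3 ≤ 2 / s - 2 / t := by
  have hst_le : s ≤ t := by nlinarith
  have hle : s * (t + s) ≤ 2 * t ^ 2 := by nlinarith
  calc 1 / t ^ 3 = 2 / (t * (2 * t ^ 2)) := by field_simp
    _ ≤ 2 / (t * (s * (t + s))) :=
        div_le_div_of_nonneg_left zero_le_two (by positivity) (mul_le_mul_of_nonneg_left hle ht.le)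
    _ = 2 / s - 2 / t := by
        rw [div_sub_div _ _ hs.ne' ht.ne', div_eq_div_iff (by positivity) (by positivity)]
        linear_combination -2 * t * s * hst

lemma sum_inv_sqrt_cube_le {Q N : ℕ} (hQ : 0 < Q) (hN : Q ≤ N) :
    ∑ k ∈ Ioc Q N, 1 / √(k : ℝ) ^ 3 ≤ 2 / √(Q : ℝ) - 2 / √(N : ℝ) := by
  induction N, hN using Nat.le_induction with
  | base => simp
  | succ n hn ih =>
    rw [sum_Ioc_succ_top (by lia)]
    have hn0 : 0 < n := by lia
    have hterm := one_div_cube_le_sub (s := √(n : ℝ)) (t := √((n + 1 : ℕ) : ℝ))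
      (sqrt_pos.2 (by positivity)) (sqrt_pos.2 (by positivity)) (by
        rw [sq_sqrt (by positivity), sq_sqrt (by positivity)]
        push_cast
        rfl)
    linarith

lemma abs_ediv_mul_le_two_mul_abs {a u : ℤ} (ha : 0 < a) (h : 2 ≤ |u / a|) :
    |u / a| * a ≤ 2 * |u| := by
  have hdiv := Int.mul_ediv_add_emod u a
  have hmod := Int.emod_nonneg u ha.ne'
  have hmod_lt := Int.emod_lt_of_pos u ha
  generalize u / a = k at *
  rcases le_or_gt 0 k with hk | hk
  · rw [abs_of_nonneg hk]
    nlinarith [le_abs_self u, mul_nonneg hk ha.le]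
  · rw [abs_of_neg hk] at h ⊢
    nlinarith [neg_le_abs u]

/-- A bound for the number of reduced forms of discriminant at most `4 Q ^ 4` in absolute value
with given `a`, `b` and `c`, where `κ` is the integral part of the Hessian at `(1, 0)` divided by
`a`, up to sign. -/
noncomputable def fibreBound (Q a κ : ℕ) : ℝ :=
  if κ ≤ Q then 8 * (Q : ℝ) ^ 2 / a + 2 else 24 * (Q : ℝ) ^ 4 / (√a ^ 3 * √κ ^ 3) + 2

lemma fibreBound_nonneg (Q a κ : ℕ) : 0 ≤ fibreBound Q a κ := by
  unfold fibreBound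
  split_ifs <;> positivity

section Fibre

variable {S : Finset ℤ} {Q a : ℕ} {r : ℝ} {u : ℤ} (ha : 0 < a)
  (hS : ∀ d ∈ S, |((a : ℝ) ^ 2 * d + r) ^ 2 - 4 * (u : ℝ) ^ 3| ≤ 4 * (Q : ℝ) ^ 4 * a ^ 2)

include ha hS

lemma card_le_of_abs_jac_sq_sub_le : (#S : ℝ) ≤ 8 * (Q : ℝ) ^ 2 / a + 2 := by
  have hgap (t : ℝ) (_ : 0 ≤ t) (ht : t ^ 2 ≤ 2 * (4 * (Q : ℝ) ^ 4 * a ^ 2)) :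
      t ≤ 4 * (Q : ℝ) ^ 2 * a := by
    refine le_of_sq_le_sq ?_ (by positivity)
    calc t ^ 2 ≤ 2 * (4 * (Q : ℝ) ^ 4 * a ^ 2) := ht
      _ ≤ 4 * (4 * (Q : ℝ) ^ 4 * a ^ 2) := by gcongr; norm_num
      _ = (4 * (Q : ℝ) ^ 2 * a) ^ 2 := by ring
  refine (card_le_of_abs_sq_sub_le S (by positivity) (by positivity) hS
    fun t ht h _ ↦ hgap t ht h).trans_eq ?_
  field_simp
  ring

lemma card_le_of_abs_jac_sq_sub_le_of_le {κ : ℕ} (hκ : 0 < κ) (hu : (κ : ℝ) * a ≤ 2 * |(u : ℝ)|) :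
    (#S : ℝ) ≤ 24 * (Q : ℝ) ^ 4 / (√a ^ 3 * √κ ^ 3) + 2 := by
  have hsa : √(a : ℝ) ^ 2 = a := sq_sqrt (by positivity)
  have hsκ : √(κ : ℝ) ^ 2 = κ := sq_sqrt (by positivity)
  have hgap (t : ℝ) (_ : 0 ≤ t)
      (ht : t ^ 2 * |4 * (u : ℝ) ^ 3| ≤ 4 * (4 * (Q : ℝ) ^ 4 * a ^ 2) ^ 2) :
      t ≤ 12 * (Q : ℝ) ^ 4 * √a / √κ ^ 3 := by
    have hcube : ((κ : ℝ) * a) ^ 3 ≤ 2 * |4 * (u : ℝ) ^ 3| :=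
      calc ((κ : ℝ) * a) ^ 3 ≤ (2 * |(u : ℝ)|) ^ 3 := by gcongr
        _ = 2 * |4 * (u : ℝ) ^ 3| := by
            rw [abs_mul, abs_pow, abs_of_pos (four_pos (α := ℝ))]
            ring
    refine le_of_sq_le_sq ?_ (by positivity)
    rw [div_pow, le_div_iff₀ (by positivity)]
    refine le_of_mul_le_mul_right ?_ (by positivity : 0 < (a : ℝ) ^ 3)
    calc t ^ 2 * (√κ ^ 3) ^ 2 * (a : ℝ) ^ 3 = t ^ 2 * ((κ : ℝ) * a) ^ 3 := by
          rw [← pow_mul, show 3 * 2 = 2 * 3 from rfl, pow_mul, hsκ]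
          ring
      _ ≤ t ^ 2 * (2 * |4 * (u : ℝ) ^ 3|) := by gcongr
      _ ≤ 2 * (4 * (4 * (Q : ℝ) ^ 4 * a ^ 2) ^ 2) := by linarith
      _ ≤ 144 * (Q : ℝ) ^ 8 * a * a ^ 3 := by
          have hpos : 0 ≤ (Q : ℝ) ^ 8 * a ^ 4 := by positivity
          linarith
      _ = (12 * (Q : ℝ) ^ 4 * √a) ^ 2 * a ^ 3 := by
          rw [mul_pow _ √(a : ℝ), hsa]
          ring
  refine (card_le_of_abs_sq_sub_le S (by positivity) (by positivity) hS
    fun t ht _ h ↦ hgap t ht h).trans_eq ?_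
  nth_rw 2 [← hsa]
  field_simp
  ring

lemma card_le_fibreBound (hQ : 0 < Q) : (#S : ℝ) ≤ fibreBound Q a (u / a).natAbs := by
  unfold fibreBound
  split_ifs with hκ
  · exact card_le_of_abs_jac_sq_sub_le ha hS
  · refine card_le_of_abs_jac_sq_sub_le_of_le ha hS (by lia) ?_
    rw [Nat.cast_natAbs]
    exact_mod_cast abs_ediv_mul_le_two_mul_abs (a := a) (u := u) (by lia)
      (by rw [Int.abs_eq_natAbs]; lia)

end Fibre

lemma pairwiseDisjoint_reducedForms (s : Set ℤ) : s.PairwiseDisjoint reducedForms := by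
  refine fun n _ n' _ hne ↦ disjoint_left.2 fun Φ hΦ hΦ' ↦ hne ?_
  have hdisc := (mem_reducedForms.1 hΦ).disc_eq
  rw [(mem_reducedForms.1 hΦ').disc_eq] at hdisc
  lia

/-- The reduced integral forms of discriminant at most `4 N` in absolute value. -/
noncomputable def reducedFormsUpTo (N : ℕ) : Finset (BinaryCubic ℤ) :=
  (Icc (-N : ℤ) N).disjiUnion reducedForms (pairwiseDisjoint_reducedForms _)

lemma mem_reducedFormsUpTo {N : ℕ} {Φ : BinaryCubic ℤ} :
    Φ ∈ reducedFormsUpTo N ↔ ∃ n : ℤ, |n| ≤ N ∧ IsReduced n Φ := by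
  simp only [reducedFormsUpTo, mem_disjiUnion, mem_Icc, ← abs_le, mem_reducedForms]

lemma card_reducedFormsUpTo (N : ℕ) :
    #(reducedFormsUpTo N) = ∑ n ∈ Icc (-N : ℤ) N, #(reducedForms n) :=
  card_disjiUnion ..

section Box

variable {Q : ℕ} {Φ : BinaryCubic ℤ} (hΦ : Φ ∈ reducedFormsUpTo (Q ^ 4))

include hΦ

lemma a_le_of_mem_reducedFormsUpTo : Φ.a ≤ 4 * Q := by
  obtain ⟨n, hn, hΦ⟩ := mem_reducedFormsUpTo.1 hΦ
  push_cast at hn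
  refine le_of_pow_le_pow_left₀ four_ne_zero (by positivity) ?_
  linarith [hΦ.a_pow_le]

lemma natAbs_hess_le_of_mem_reducedFormsUpTo : (Φ.hess 1 0).natAbs ≤ 2 * Q ^ 2 := by
  obtain ⟨n, hn, hΦ⟩ := mem_reducedFormsUpTo.1 hΦ
  push_cast at hn
  zify
  refine abs_le_of_sq_le_sq ?_ (by positivity)
  linarith [hΦ.hess_sq_le]

lemma abs_jac_sq_sub_le_of_mem_reducedFormsUpTo :
    |Φ.jac 1 0 ^ 2 - 4 * Φ.hess 1 0 ^ 3| ≤ 4 * (Q : ℤ) ^ 4 * Φ.a ^ 2 := by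
  obtain ⟨n, hn, hΦ⟩ := mem_reducedFormsUpTo.1 hΦ
  push_cast at hn
  rw [hΦ.jac_sq_eq, mul_add, add_sub_cancel_left, ← mul_assoc, abs_mul, abs_mul,
    abs_of_nonneg (sq_nonneg Φ.a), abs_of_pos four_pos]
  gcongr

end Box

lemma card_filter_coeff_le {Q a : ℕ} (hQ : 0 < Q) (ha : 0 < a) (b c : ℤ) :
    (#{Φ ∈ reducedFormsUpTo (Q ^ 4) | Φ.a = (a : ℤ) ∧ Φ.b = b ∧ Φ.c = c} : ℝ) ≤
      fibreBound Q a ((b ^ 2 - a * c) / a).natAbs := by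
  classical
  rw [← card_image_of_injOn (f := BinaryCubic.d)]
  swap
  · intro Φ hΦ Ψ hΨ hd
    obtain ⟨-, hΦa, hΦb, hΦc⟩ := mem_filter.1 hΦ
    obtain ⟨-, hΨa, hΨb, hΨc⟩ := mem_filter.1 hΨ
    exact BinaryCubic.ext (hΦa.trans hΨa.symm) (hΦb.trans hΨb.symm) (hΦc.trans hΨc.symm) hd
  refine card_le_fibreBound (r := -3 * a * b * c + 2 * b ^ 3) ha ?_ hQ
  intro d hd
  obtain ⟨Φ, hΦ, rfl⟩ := mem_image.1 hd
  obtain ⟨hmem, hΦa, rfl, rfl⟩ := mem_filter.1 hΦ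
  have hle := abs_jac_sq_sub_le_of_mem_reducedFormsUpTo hmem
  rw [Φ.jac_one_zero, Φ.hess_one_zero, hΦa] at hle
  have hcast : (a : ℝ) ^ 2 * Φ.d + (-3 * a * Φ.b * Φ.c + 2 * Φ.b ^ 3) =
      (a : ℝ) ^ 2 * Φ.d - 3 * a * Φ.b * Φ.c + 2 * Φ.b ^ 3 := by ring
  rw [hcast]
  exact_mod_cast (Int.cast_le (R := ℝ)).2 hle

lemma card_filter_b_hess_ediv_le {Q a : ℕ} (hQ : 0 < Q) (ha : 0 < a) (b k : ℤ) :
    (#{Φ ∈ reducedFormsUpTo (Q ^ 4) | Φ.a = (a : ℤ) ∧ Φ.b = b ∧ Φ.hess 1 0 / Φ.a = k} : ℝ) ≤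
      fibreBound Q a k.natAbs := by
  have hediv (b c : ℤ) : (b ^ 2 - a * c) / a = b ^ 2 / a - c :=
    Int.sub_mul_ediv_left _ _ (by lia)
  have hk : (b ^ 2 - a * (b ^ 2 / a - k)) / a = k := by rw [hediv]; ring
  have hle := card_filter_coeff_le hQ ha b (b ^ 2 / a - k)
  rw [hk] at hle
  refine le_trans (mod_cast card_le_card fun Φ hΦ ↦ ?_) hle
  simp only [mem_filter, Φ.hess_one_zero] at hΦ ⊢
  obtain ⟨hmem, hΦa, rfl, rfl⟩ := hΦ
  exact ⟨hmem, hΦa, rfl, by rw [hΦa, hediv]; ring⟩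

lemma card_filter_hess_ediv_le {Q a : ℕ} (hQ : 0 < Q) (ha : 0 < a) (κ : ℕ) :
    (#{Φ ∈ reducedFormsUpTo (Q ^ 4) | Φ.a = (a : ℤ) ∧ (Φ.hess 1 0 / Φ.a).natAbs = κ} : ℝ) ≤
      2 * a * fibreBound Q a κ := by
  have hmaps : Set.MapsTo (fun Φ : BinaryCubic ℤ ↦ (Φ.b, Φ.hess 1 0 / Φ.a))
      ({Φ ∈ reducedFormsUpTo (Q ^ 4) | Φ.a = (a : ℤ) ∧ (Φ.hess 1 0 / Φ.a).natAbs = κ} : Finset _)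
      ↑(Ico (0 : ℤ) a ×ˢ ({(κ : ℤ), -(κ : ℤ)} : Finset ℤ)) := by
    intro Φ hΦ
    obtain ⟨hmem, ha, hκ⟩ := mem_filter.1 hΦ
    obtain ⟨n, -, hred⟩ := mem_reducedFormsUpTo.1 hmem
    simp only [coe_product, Set.mem_prod, coe_Ico, Set.mem_Ico, mem_coe, mem_insert, mem_singleton]
    exact ⟨⟨hred.b_nonneg, ha ▸ hred.b_lt_a⟩, by lia⟩
  have hfibre : ∀ q ∈ Ico (0 : ℤ) a ×ˢ ({(κ : ℤ), -(κ : ℤ)} : Finset ℤ),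
      (#{Φ ∈ {Φ ∈ reducedFormsUpTo (Q ^ 4) | Φ.a = (a : ℤ) ∧ (Φ.hess 1 0 / Φ.a).natAbs = κ} |
        (Φ.b, Φ.hess 1 0 / Φ.a) = q} : ℝ) ≤ fibreBound Q a κ := by
    rintro ⟨b, k⟩ hbk
    have hkκ : k.natAbs = κ := by
      simp only [mem_product, mem_insert, mem_singleton] at hbk
      lia
    refine le_trans (mod_cast card_le_card ?_) (hkκ ▸ card_filter_b_hess_ediv_le hQ ha b k)
    intro Φ hΦ
    simp only [mem_filter, Prod.mk.injEq] at hΦ ⊢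
    exact ⟨hΦ.1.1, hΦ.1.2.1, hΦ.2⟩
  have hcard : #(Ico (0 : ℤ) a ×ˢ ({(κ : ℤ), -(κ : ℤ)} : Finset ℤ)) ≤ 2 * a := by
    rw [card_product, Int.card_Ico, sub_zero, Int.toNat_natCast, mul_comm]
    gcongr
    exact card_le_two
  rw [card_eq_sum_card_fiberwise hmaps]
  push_cast
  refine (sum_le_card_nsmul _ _ _ hfibre).trans ?_
  rw [nsmul_eq_mul]
  exact mul_le_mul_of_nonneg_right (mod_cast hcard) (fibreBound_nonneg ..)

lemma two_mul_fibreBound_of_le {Q a κ : ℕ} (ha : 0 < a) (hκ : κ ≤ Q) :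
    2 * a * fibreBound Q a κ = 16 * (Q : ℝ) ^ 2 + 4 * a := by
  rw [fibreBound, if_pos hκ]
  field_simp
  ring

lemma two_mul_fibreBound_of_lt {Q a κ : ℕ} (ha : 0 < a) (hκ : Q < κ) :
    2 * a * fibreBound Q a κ =
      48 * (Q : ℝ) ^ 4 * (1 / √a) * (1 / √(κ : ℝ) ^ 3) + 4 * a := by
  have hsa : √(a : ℝ) ^ 2 = a := sq_sqrt (by positivity)
  have hκ0 : 0 < κ := by lia
  rw [fibreBound, if_neg (by lia)]
  nth_rw 1 [← hsa]
  field_simp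
  rw [pow_succ' √(a : ℝ), hsa]
  ring

lemma sum_Ioc_two_mul_fibreBound_le {Q a N : ℕ} (hQ : 0 < Q) (ha : 0 < a) (hN : Q ≤ N) :
    ∑ κ ∈ Ioc Q N, 2 * a * fibreBound Q a κ ≤
      96 * (Q : ℝ) ^ 4 / √Q * (1 / √a) + 4 * a * (N - Q) := by
  rw [sum_congr rfl fun κ hκ ↦ two_mul_fibreBound_of_lt ha (mem_Ioc.1 hκ).1, sum_add_distrib,
    ← mul_sum, sum_const, Nat.card_Ioc, nsmul_eq_mul, Nat.cast_sub hN]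
  calc _ ≤ 48 * (Q : ℝ) ^ 4 * (1 / √a) * (2 / √Q) + (N - Q) * (4 * a) := by
        gcongr
        exact (sum_inv_sqrt_cube_le hQ hN).trans (sub_le_self _ (by positivity))
    _ = _ := by ring

lemma sum_two_mul_fibreBound_le {Q a : ℕ} (hQ : 0 < Q) (ha : 0 < a) (haQ : a ≤ 4 * Q) :
    ∑ κ ∈ range (2 * Q ^ 2 + 1), 2 * a * fibreBound Q a κ ≤
      96 * (Q : ℝ) ^ 3 + 96 * (Q : ℝ) ^ 4 / √Q * (1 / √a) := by
  have hQ1 : (1 : ℝ) ≤ Q := mod_cast hQ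
  have haQ : (a : ℝ) ≤ 4 * Q := mod_cast haQ
  have hQQ : Q ≤ 2 * Q ^ 2 := by nlinarith
  have hsplit : range (2 * Q ^ 2 + 1) = range (Q + 1) ∪ Ioc Q (2 * Q ^ 2) := by
    ext κ
    simp only [mem_union, mem_range, mem_Ioc]
    lia
  have hdisj : Disjoint (range (Q + 1)) (Ioc Q (2 * Q ^ 2)) :=
    disjoint_left.2 fun κ hκ hκ' ↦ by simp only [mem_range, mem_Ioc] at hκ hκ'; lia
  have hhead : ∑ κ ∈ range (Q + 1), 2 * a * fibreBound Q a κ =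
      (Q + 1) * (16 * (Q : ℝ) ^ 2 + 4 * a) := by
    rw [sum_congr rfl fun κ hκ ↦ two_mul_fibreBound_of_le ha (mem_range_succ_iff.1 hκ), sum_const,
      card_range, nsmul_eq_mul, Nat.cast_add_one]
  have htail := sum_Ioc_two_mul_fibreBound_le hQ ha hQQ
  have hpoly : (Q + 1) * (16 * (Q : ℝ) ^ 2 + 4 * a) + 4 * a * ((2 * Q ^ 2 : ℕ) - Q) ≤
      96 * (Q : ℝ) ^ 3 :=
    calc _ = 16 * (Q : ℝ) ^ 2 * (Q + 1) + 4 * a * (2 * Q ^ 2 + 1) := by push_cast; ring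
      _ ≤ 16 * (Q : ℝ) ^ 2 * (Q + Q) + 4 * (4 * Q) * (2 * Q ^ 2 + Q ^ 2) := by
          gcongr
          exact one_le_pow₀ hQ1
      _ ≤ 96 * (Q : ℝ) ^ 3 := by
          have hpos : 0 ≤ (Q : ℝ) ^ 3 := by positivity
          linarith
  rw [hsplit, sum_union hdisj, hhead]
  linarith

lemma sum_sum_two_mul_fibreBound_le {Q : ℕ} (hQ : 0 < Q) :
    ∑ a ∈ Icc 1 (4 * Q), ∑ κ ∈ range (2 * Q ^ 2 + 1), 2 * a * fibreBound Q a κ ≤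
      768 * (Q : ℝ) ^ 4 :=
  calc _ ≤ ∑ a ∈ Icc 1 (4 * Q), (96 * (Q : ℝ) ^ 3 + 96 * (Q : ℝ) ^ 4 / √Q * (1 / √a)) :=
        sum_le_sum fun a ha ↦ sum_two_mul_fibreBound_le hQ (mem_Icc.1 ha).1 (mem_Icc.1 ha).2
    _ = 384 * (Q : ℝ) ^ 4 + 96 * (Q : ℝ) ^ 4 / √Q * ∑ a ∈ Icc 1 (4 * Q), 1 / √(a : ℝ) := by
        rw [sum_add_distrib, sum_const, Nat.card_Icc, ← mul_sum, nsmul_eq_mul]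
        push_cast
        ring
    _ ≤ 384 * (Q : ℝ) ^ 4 + 96 * (Q : ℝ) ^ 4 / √Q * (2 * √((4 * Q : ℕ) : ℝ)) := by
        gcongr
        exact sum_inv_sqrt_le _
    _ = 768 * (Q : ℝ) ^ 4 := by
        rw [Nat.cast_mul, sqrt_mul (by positivity), show √((4 : ℕ) : ℝ) = 2 by norm_num]
        field_simp
        ring

lemma card_reducedFormsUpTo_pow_le {Q : ℕ} (hQ : 0 < Q) :
    #(reducedFormsUpTo (Q ^ 4)) ≤ 768 * Q ^ 4 := by
  have hmaps : Set.MapsTo (fun Φ : BinaryCubic ℤ ↦ (Φ.a.toNat, (Φ.hess 1 0 / Φ.a).natAbs))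
      (reducedFormsUpTo (Q ^ 4)) ↑(Icc 1 (4 * Q) ×ˢ range (2 * Q ^ 2 + 1)) := by
    intro Φ hΦ
    obtain ⟨n, -, hred⟩ := mem_reducedFormsUpTo.1 hΦ
    have ha := a_le_of_mem_reducedFormsUpTo hΦ
    have hhess := natAbs_hess_le_of_mem_reducedFormsUpTo hΦ
    have hdiv := Int.natAbs_ediv_le_natAbs (Φ.hess 1 0) Φ.a
    have ha_pos := hred.a_pos
    simp only [coe_product, Set.mem_prod, mem_coe, mem_Icc, mem_range]
    lia
  have hfibre : ∀ q ∈ Icc 1 (4 * Q) ×ˢ range (2 * Q ^ 2 + 1),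
      (#{Φ ∈ reducedFormsUpTo (Q ^ 4) | (Φ.a.toNat, (Φ.hess 1 0 / Φ.a).natAbs) = q} : ℝ) ≤
        2 * q.1 * fibreBound Q q.1 q.2 := by
    rintro ⟨a, κ⟩ hq
    have ha : 0 < a := by simp only [mem_product, mem_Icc] at hq; lia
    refine le_trans (mod_cast card_le_card ?_) (card_filter_hess_ediv_le hQ ha κ)
    refine monotone_filter_right _ fun Φ _ hΦ ↦ ?_
    obtain ⟨rfl, rfl⟩ := Prod.mk.inj hΦ
    exact ⟨by lia, rfl⟩
  have hreal : (#(reducedFormsUpTo (Q ^ 4)) : ℝ) ≤ 768 * (Q : ℝ) ^ 4 := by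
    rw [card_eq_sum_card_fiberwise hmaps, Nat.cast_sum]
    refine (sum_le_sum hfibre).trans ?_
    rw [sum_product]
    exact sum_sum_two_mul_fibreBound_le hQ
  exact_mod_cast hreal

lemma exists_le_pow_four_le {N : ℕ} (hN : 0 < N) : ∃ Q : ℕ, 0 < Q ∧ N ≤ Q ^ 4 ∧ Q ^ 4 ≤ 16 * N := by
  have hex : ∃ Q : ℕ, N ≤ (Q + 1) ^ 4 :=
    ⟨N, N.le_succ.trans (Nat.le_self_pow four_ne_zero _)⟩
  refine ⟨Nat.find hex + 1, by lia, Nat.find_spec hex, ?_⟩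
  rcases Nat.eq_zero_or_pos (Nat.find hex) with h0 | hpos
  · rw [h0]
    lia
  · have hmin := Nat.find_min hex (Nat.sub_one_lt_of_lt hpos)
    rw [Nat.sub_add_cancel hpos, not_le] at hmin
    calc (Nat.find hex + 1) ^ 4 ≤ (2 * Nat.find hex) ^ 4 := by gcongr; lia
      _ = 16 * Nat.find hex ^ 4 := by ring
      _ ≤ 16 * N := by lia

theorem sum_card_reducedForms_le {N : ℕ} (hN : 0 < N) :
    ∑ n ∈ Icc (-N : ℤ) N, #(reducedForms n) ≤ 12288 * N := by
  obtain ⟨Q, hQ, hNQ, hQN⟩ := exists_le_pow_four_le hN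
  calc ∑ n ∈ Icc (-N : ℤ) N, #(reducedForms n)
      ≤ ∑ n ∈ Icc (-(Q ^ 4 : ℕ) : ℤ) (Q ^ 4 : ℕ), #(reducedForms n) :=
        sum_le_sum_of_subset (Icc_subset_Icc (by lia) (by lia))
    _ = #(reducedFormsUpTo (Q ^ 4)) := (card_reducedFormsUpTo _).symm
    _ ≤ 768 * Q ^ 4 := card_reducedFormsUpTo_pow_le hQ
    _ ≤ 12288 * N := by lia

/-! ### Averaging over sixth-power free integers -/

open Classical in
/-- The sixth-power free integers of absolute value at most `N`. -/
noncomputable def sixthPowerFreeUpTo (N : ℕ) : Finset ℤ :=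
  {n ∈ Icc (-N : ℤ) N | SixthPowerFree n}

lemma mem_sixthPowerFreeUpTo {N : ℕ} {n : ℤ} :
    n ∈ sixthPowerFreeUpTo N ↔ SixthPowerFree n ∧ |n| ≤ N := by
  classical
  rw [sixthPowerFreeUpTo, mem_filter, mem_Icc, ← abs_le, and_comm]

lemma coe_sixthPowerFreeUpTo_floor {x : ℝ} (hx : 0 ≤ x) :
    (sixthPowerFreeUpTo ⌊x⌋₊ : Set ℤ) = {n : ℤ | SixthPowerFree n ∧ |(n : ℝ)| ≤ x} := by
  ext n
  rw [mem_coe, mem_sixthPowerFreeUpTo, Set.mem_ofPred_eq, Int.abs_eq_natAbs, Nat.cast_le,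
    Nat.le_floor_iff hx, Nat.cast_natAbs, Int.cast_abs]

lemma tsum_sixthPowerFree_eq_sum {α : Type*} [AddCommMonoid α] [TopologicalSpace α] {x : ℝ}
    (hx : 0 ≤ x) (f : ℤ → α) :
    ∑' n : {n : ℤ // SixthPowerFree n ∧ |(n : ℝ)| ≤ x}, f n =
      ∑ n ∈ sixthPowerFreeUpTo ⌊x⌋₊, f n := by
  rw [← Finset.tsum_subtype', coe_sixthPowerFreeUpTo_floor hx]
  rfl

lemma sum_div_pow_six_le (N : ℕ) : 2 * ∑ d ∈ Ioc 1 N, N / d ^ 6 ≤ N := by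
  rcases Nat.eq_zero_or_pos N with rfl | hN
  · simp
  have hterm : ∀ d ∈ Ioc 1 N, ((N / d ^ 6 : ℕ) : ℝ) ≤ N / 16 * ((d : ℝ) ^ 2)⁻¹ := by
    intro d hd
    have hd2 : (2 : ℝ) ≤ d := mod_cast (mem_Ioc.1 hd).1
    calc ((N / d ^ 6 : ℕ) : ℝ) ≤ N / (d ^ 6 : ℕ) := Nat.cast_div_le
      _ = N / (d : ℝ) ^ 4 * ((d : ℝ) ^ 2)⁻¹ := by push_cast; field_simp
      _ ≤ N / 2 ^ 4 * ((d : ℝ) ^ 2)⁻¹ := by gcongr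
      _ = N / 16 * ((d : ℝ) ^ 2)⁻¹ := by norm_num
  have hsum : ∑ d ∈ Ioc 1 N, ((d : ℝ) ^ 2)⁻¹ ≤ 1 := by
    refine (sum_Ioc_inv_sq_le_sub one_ne_zero hN).trans ?_
    rw [Nat.cast_one, inv_one]
    exact sub_le_self _ (by positivity)
  have hreal : 2 * ∑ d ∈ Ioc 1 N, ((N / d ^ 6 : ℕ) : ℝ) ≤ N :=
    calc _ ≤ 2 * ∑ d ∈ Ioc 1 N, N / 16 * ((d : ℝ) ^ 2)⁻¹ := by gcongr with d hd; exact hterm d hd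
      _ = N / 8 * ∑ d ∈ Ioc 1 N, ((d : ℝ) ^ 2)⁻¹ := by rw [← mul_sum]; ring
      _ ≤ N / 8 * 1 := by gcongr
      _ ≤ N := by linarith [(Nat.cast_nonneg N : (0 : ℝ) ≤ N)]
  exact_mod_cast hreal

open Classical in
lemma card_filter_not_sixthPowerFree_le (N : ℕ) :
    2 * #{n ∈ Ioc 0 N | ¬ SixthPowerFree ((n : ℕ) : ℤ)} ≤ N := by
  have hsub : {n ∈ Ioc 0 N | ¬ SixthPowerFree ((n : ℕ) : ℤ)} ⊆
      (Ioc 1 N).biUnion fun d ↦ {n ∈ Ioc 0 N | d ^ 6 ∣ n} := by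
    intro n hn
    obtain ⟨hnN, hfree⟩ := mem_filter.1 hn
    have hn0 : n ≠ 0 := by grind
    simp only [SixthPowerFree, not_and, not_forall, not_not] at hfree
    obtain ⟨p, hp, hdvd⟩ := hfree (mod_cast hn0)
    have hdvd : p ^ 6 ∣ n := mod_cast hdvd
    have hpN : p ≤ N :=
      (Nat.le_self_pow (by norm_num) p).trans
        ((Nat.le_of_dvd (Nat.pos_of_ne_zero hn0) hdvd).trans (mem_Ioc.1 hnN).2)
    exact mem_biUnion.2 ⟨p, mem_Ioc.2 ⟨hp.one_lt, hpN⟩, mem_filter.2 ⟨hnN, hdvd⟩⟩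
  calc 2 * #{n ∈ Ioc 0 N | ¬ SixthPowerFree ((n : ℕ) : ℤ)}
      ≤ 2 * ∑ d ∈ Ioc 1 N, #{n ∈ Ioc 0 N | d ^ 6 ∣ n} := by
        gcongr
        exact (card_le_card hsub).trans card_biUnion_le
    _ = 2 * ∑ d ∈ Ioc 1 N, N / d ^ 6 := by simp only [Nat.Ioc_filter_dvd_card_eq_div]
    _ ≤ N := sum_div_pow_six_le N

lemma le_two_mul_card_sixthPowerFreeUpTo (N : ℕ) : N ≤ 2 * #(sixthPowerFreeUpTo N) := by
  classical
  have hsplit := card_filter_add_card_filter_not (s := Ioc 0 N) fun n ↦ SixthPowerFree (n : ℤ)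
  have hle : #{n ∈ Ioc 0 N | SixthPowerFree ((n : ℕ) : ℤ)} ≤ #(sixthPowerFreeUpTo N) := by
    refine card_le_card_of_injOn (fun n : ℕ ↦ (n : ℤ)) ?_ Nat.cast_injective.injOn
    intro n hn
    obtain ⟨hnN, hfree⟩ := mem_filter.1 hn
    refine mem_coe.2 (mem_sixthPowerFreeUpTo.2 ⟨hfree, ?_⟩)
    rw [Nat.abs_cast]
    exact mod_cast (mem_Ioc.1 hnN).2
  have hnot := card_filter_not_sixthPowerFree_le N
  rw [Nat.card_Ioc] at hsplit
  lia

lemma sum_card_reducedForms_mul_le {m : ℤ} (hm : m ≠ 0) {N : ℕ} (hN : 0 < N) :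
    ∑ n ∈ sixthPowerFreeUpTo N, #(reducedForms (m * n)) ≤ 12288 * (m.natAbs * N) := by
  rw [← sum_image (g := fun n ↦ m * n) (f := fun n ↦ #(reducedForms n))
    (mul_right_injective₀ hm).injOn]
  refine (sum_le_sum_of_subset fun k hk ↦ ?_).trans
    (sum_card_reducedForms_le (Nat.mul_pos (Int.natAbs_pos.2 hm) hN))
  obtain ⟨n, hn, rfl⟩ := mem_image.1 hk
  rw [mem_Icc, ← abs_le, abs_mul, Nat.cast_mul, Int.natCast_natAbs]
  exact mul_le_mul_of_nonneg_left (mem_sixthPowerFreeUpTo.1 hn).2 (abs_nonneg m)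

lemma sum_card_reducedForms_add_lt {N : ℕ} (hN : 0 < N) :
    ∑ n ∈ sixthPowerFreeUpTo N, (6 + #(reducedForms n) + #(reducedForms (-27 * n))) <
      688135 * #(sixthPowerFreeUpTo N) := by
  have hcard := le_two_mul_card_sixthPowerFreeUpTo N
  have hsum := sum_card_reducedForms_mul_le one_ne_zero hN
  have hsum_dual := sum_card_reducedForms_mul_le (m := -27) (by norm_num) hN
  simp only [one_mul, Int.natAbs_one] at hsum
  rw [sum_add_distrib, sum_add_distrib, sum_const, smul_eq_mul]
  lia

lemma exists_max_beta_rpow_le : ∃ K : ℕ, 0 < K ∧ ∀ n : ℤ, SixthPowerFree n →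
    ENat.toENNReal (max (betaX (MordellCurve n)) (betaY (MordellCurve n))) ^ (26⁻¹ : ℝ) ≤
      (K * (6 + #(reducedForms n) + #(reducedForms (-27 * n))) : ℕ) := by
  obtain ⟨K, hK⟩ := exists_max_betaX_betaY_le
  refine ⟨K + 1, K.succ_pos, fun n hn ↦ ?_⟩
  obtain ⟨hfin, hindex⟩ := threeMultiples_index_le hn.1
  set s := 3 + #(reducedForms n)
  set t := 3 + #(reducedForms (-27 * n))
  rw [show 6 + #(reducedForms n) + #(reducedForms (-27 * n)) = s + t by lia]
  have hpow : K * (threeMultiples (mordell (n : ℚ)).Point).index ^ 13 ≤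
      ((K + 1) * (s + t)) ^ 26 :=
    calc _ ≤ (K + 1) ^ 26 * ((s + t) ^ 2) ^ 13 := by
          gcongr
          · exact K.le_succ.trans (Nat.le_self_pow (by norm_num) _)
          · exact hindex.trans (by nlinarith)
      _ = ((K + 1) * (s + t)) ^ 26 := by rw [mul_pow, ← pow_mul]
  have hbeta : max (betaX (MordellCurve n)) (betaY (MordellCurve n)) ≤
      (((K + 1) * (s + t)) ^ 26 : ℕ) := (hK n hn).trans (mod_cast hpow)
  rw [ENNReal.rpow_inv_le_iff (by norm_num)]
  exact_mod_cast ENat.toENNReal_le.2 hbeta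

end Mohanty

/-- Mohanty's conjecture holds on average: there are `τ, M > 0` such that for all `x > 1`,
the sum over sixth-power free `n` with `|n| ≤ x` of `max{βx(Aₙ), βy(Aₙ)}^τ` is less than
`M` times the number of such `n`. -/
theorem average_mohanty :
    ∃ τ : ℝ, 0 < τ ∧ ∃ M : ℝ, 0 < M ∧
      ∀ x : ℝ, 1 < x →
        ∑' n : {n : ℤ // SixthPowerFree n ∧ |(n : ℝ)| ≤ x},
            (ENat.toENNReal (max (betaX (MordellCurve n)) (betaY (MordellCurve n)))) ^ τ
          < ENNReal.ofReal M *
              ({n : ℤ | SixthPowerFree n ∧ |(n : ℝ)| ≤ x}.ncard : ℝ≥0∞) := by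
  obtain ⟨K, hK, hbeta⟩ := Mohanty.exists_max_beta_rpow_le
  refine ⟨26⁻¹, by norm_num, (K * 688135 : ℕ), by positivity, fun x hx ↦ ?_⟩
  have hx0 : 0 ≤ x := zero_le_one.trans hx.le
  rw [Mohanty.tsum_sixthPowerFree_eq_sum hx0 fun n ↦
      ENat.toENNReal (max (betaX (MordellCurve n)) (betaY (MordellCurve n))) ^ (26⁻¹ : ℝ),
    ← Mohanty.coe_sixthPowerFreeUpTo_floor hx0, Set.ncard_coe_finset, ENNReal.ofReal_natCast]
  calc _ ≤ ∑ n ∈ Mohanty.sixthPowerFreeUpTo ⌊x⌋₊, ((K * (6 + (Mohanty.reducedForms n).card +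
          (Mohanty.reducedForms (-27 * n)).card) : ℕ) : ℝ≥0∞) :=
        Finset.sum_le_sum fun n hn ↦ hbeta n (Mohanty.mem_sixthPowerFreeUpTo.1 hn).1
    _ < (K * 688135 : ℕ) * ((Mohanty.sixthPowerFreeUpTo ⌊x⌋₊).card : ℝ≥0∞) := by
        rw [← Nat.cast_sum, ← Finset.mul_sum]
        exact_mod_cast mul_assoc K .. ▸ Nat.mul_lt_mul_of_pos_left
          (Mohanty.sum_card_reducedForms_add_lt (Nat.floor_pos.2 hx.le)) hK
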